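/- arXiv:2209.11443 — 3 statements merged into one kernel-verified Lean document; each statement's English description precedes it below -/
import Mathlib

section
/- Let n ≥ 1 be an integer and N = p₁^{k₁}···p_r^{k_r} with distinct primes pᵢ and kᵢ ≥ 1, r ≥ 2. For any function f : (ℤ/Nℤ)ⁿ → ℕ that is not identically zero one has ∑_{x ∈ (ℤ/Nℤ)ⁿ} f(x)ⁿ ≥ C_{N,n} · |ℙ(ℤ/Nℤ)^{n-1}|^{-1} · ∑_{u ∈ ℙ(ℤ/Nℤ)^{n-1}} f*(u)ⁿ, where C_{N,n} = ( 1/( 2(log(mweight(f,p₁)) + 1)·⌈log_{p₁}(mweight(f,p₁)) + log_{p₁}(n)⌉ ) )ⁿ · ( 1/( 2(k_r + ⌈log_{p_r}(n)⌉) ) · ∏_{i=2}^{r-1} 1/( 2(k_i·log(p_i) + 1)(k_i + ⌈log_{p_i}(n)⌉) ) )ⁿ, log denoting the natural logarithm. -/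
/-- A vector in `(ℤ/Nℤ)ⁿ` is primitive (i.e. belongs to a class in `ℙ(ℤ/Nℤ)^{n-1}`). -/
def IsPrimitiveVec {N n : ℕ} (u : Fin n → ZMod N) : Prop :=
  ∃ v : Fin n → ZMod N, ∑ i, v i * u i = 1

/-- `P` is a fixed set of representatives for the projective space `ℙ(ℤ/Nℤ)^{n-1}`. -/
def IsProjRepSet (N n : ℕ) [NeZero N] (P : Finset (Fin n → ZMod N)) : Prop :=
  (∀ u ∈ P, IsPrimitiveVec u) ∧
  ∀ u : Fin n → ZMod N, IsPrimitiveVec u →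
    ∃! w, w ∈ P ∧ ∃ c : (ZMod N)ˣ, u = (c : ZMod N) • w

/-- The maximal function of `f : (ℤ/Nℤ)ⁿ → ℕ` in direction `u`. -/
def fstar {N n : ℕ} [NeZero N] (f : (Fin n → ZMod N) → ℕ) (u : Fin n → ZMod N) : ℕ :=
  Finset.univ.sup fun a : Fin n → ZMod N => ∑ t : ZMod N, f (a + t • u)

/-
Modulo a prime power, the polynomial method applies. Given weights `g` on `(ℤ/p^kℤ)ⁿ`, the
functions `v ↦ (⟨u, v⟩ choose i) mod p` with `i` below the sum of `g` along a line of direction `u`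
are coefficients of remainders of the exponentials `(1 + X) ^ ⟨u, v⟩`. Lifting these to
characteristic zero by roots of unity of order `p ^ k`, where a line turns into the roots `ψ t - 1`
counted with multiplicity `g`, shows that they span at most as many dimensions as there are
vanishing conditions of order `g x` at the points `x`, which is about `∑ g x ^ n`. Conversely, the
functions with `i < D`, for all directions, span at least about `D ^ n` dimensions: a polynomial of
small degree does not vanish to high order at all points `((1 + X) ^ U₁, …, (1 + X) ^ Uₙ)`.
Averaging a basis adapted to the filtration by `i` over the action of `GLₙ`, which is transitive on
directions, compares the two bounds and gives the maximal inequality for the prime power.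

The inequality for a product of coprime moduli follows from those for the factors. By pigeonholing,
at the cost of a factor `log M + 1`, the sum along a line is concentrated on slices of comparable
weight, so that the inequality for sets in one factor and the inequality for functions in the other
one can be combined.
-/

open Finset Polynomial
open scoped BigOperators

namespace KakeyaZMod

section LatticeSimplex

open scoped Nat

variable (ι : Type*) [Fintype ι] [DecidableEq ι]

/-- The lattice points of the dilated simplex: the exponent vectors `v : ι →₀ ℕ` of degree less
than `e`. The inequality is strict so that `e = 0` gives the empty set. -/
def latticeSimplex (e : ℕ) : Finset (ι →₀ ℕ) :=
  (range e).biUnion (finsuppAntidiag univ)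

variable {ι}

lemma mem_latticeSimplex {e : ℕ} {v : ι →₀ ℕ} : v ∈ latticeSimplex ι e ↔ ∑ i, v i < e := by
  simp [latticeSimplex]

variable (ι) [Nonempty ι]

lemma factorial_mul_card_latticeSimplex (e : ℕ) :
    (Fintype.card ι)! * #(latticeSimplex ι e) = e.ascFactorial (Fintype.card ι) := by
  have card_eq : #(latticeSimplex ι e) = ∑ d ∈ range e, (Fintype.card ι).multichoose d := by
    rw [latticeSimplex, card_biUnion]
    · simp only [card_finsuppAntidiag_nat_eq_multichoose, card_univ]
    · intro d _ d' _ hne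
      rw [Function.onFun, disjoint_left]
      simp only [mem_finsuppAntidiag]
      exact fun v hv hv' => hne (hv.1.symm.trans hv'.1)
  obtain ⟨n, hn⟩ := Nat.exists_eq_succ_of_ne_zero (Fintype.card_ne_zero (α := ι))
  rw [card_eq, hn]
  cases e with
  | zero => simp [Nat.zero_ascFactorial]
  | succ e => rw [Nat.sum_range_multichoose, Nat.ascFactorial_eq_factorial_mul_choose]

lemma pow_le_factorial_mul_card_latticeSimplex (e : ℕ) :
    e ^ Fintype.card ι ≤ (Fintype.card ι)! * #(latticeSimplex ι e) := by
  rw [factorial_mul_card_latticeSimplex]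
  exact e.pow_succ_le_ascFactorial _

lemma factorial_mul_card_latticeSimplex_mul_le (g : ℕ) :
    (Fintype.card ι)! * #(latticeSimplex ι (Fintype.card ι * g)) ≤
      (2 * Fintype.card ι * g) ^ Fintype.card ι := by
  obtain rfl | hg := g.eq_zero_or_pos
  · simp [latticeSimplex]
  have hpos : 0 < Fintype.card ι * g := Nat.mul_pos Fintype.card_pos hg
  calc (Fintype.card ι)! * #(latticeSimplex ι (Fintype.card ι * g))
      = (Fintype.card ι * g - 1 + 1).ascFactorial (Fintype.card ι) := by
        rw [factorial_mul_card_latticeSimplex, Nat.sub_add_cancel hpos]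
    _ ≤ (Fintype.card ι * g - 1 + Fintype.card ι) ^ Fintype.card ι :=
        Nat.ascFactorial_le_pow_add _ _
    _ ≤ (2 * Fintype.card ι * g) ^ Fintype.card ι := by
        have := Nat.le_mul_of_pos_right (Fintype.card ι) hg
        gcongr
        lia

lemma pow_le_mul_factorial_mul_card_latticeSimplex {c : ℕ} (hc : 1 ≤ c) (D : ℕ) :
    D ^ Fintype.card ι ≤
      c ^ Fintype.card ι * ((Fintype.card ι)! * #(latticeSimplex ι ((D - 1) / c + 1))) := by
  have hD : D ≤ c * ((D - 1) / c + 1) := by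
    have := Nat.lt_mul_div_succ (D - 1) hc
    lia
  calc D ^ Fintype.card ι ≤ (c * ((D - 1) / c + 1)) ^ Fintype.card ι := by gcongr
    _ = c ^ Fintype.card ι * ((D - 1) / c + 1) ^ Fintype.card ι := mul_pow _ _ _
    _ ≤ _ := by
      gcongr
      exact pow_le_factorial_mul_card_latticeSimplex ι _

end LatticeSimplex

section PadicSums

variable {p c : ℕ}

lemma sum_Icc_pow_padicValNat_le (hp : p.Prime) {i : ℕ} (hi : i < p ^ c) :
    ∑ t ∈ Icc 1 i, p ^ padicValNat p t ≤ c * i := by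
  have := Fact.mk hp
  have pow_le : ∀ t ∈ Icc 1 i,
      p ^ padicValNat p t ≤ ∑ s ∈ range c, if p ^ s ∣ t then p ^ s else 0 := by
    intro t ht
    rw [mem_Icc] at ht
    have val_lt : padicValNat p t < c := by
      by_contra! hc
      have := Nat.le_of_dvd ht.1 ((pow_dvd_pow p hc).trans pow_padicValNat_dvd)
      lia
    simpa [pow_padicValNat_dvd] using single_le_sum
      (f := fun s => if p ^ s ∣ t then p ^ s else 0) (fun _ _ => Nat.zero_le _)
      (mem_range.2 val_lt)
  have multiples_le (s : ℕ) : (∑ t ∈ Icc 1 i, if p ^ s ∣ t then p ^ s else 0) ≤ i := by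
    rw [← sum_filter, sum_const, smul_eq_mul, ← zero_add 1, Icc_add_one_left_eq_Ioc,
      Nat.Ioc_filter_dvd_card_eq_div]
    exact Nat.div_mul_le_self i (p ^ s)
  calc ∑ t ∈ Icc 1 i, p ^ padicValNat p t
      ≤ ∑ t ∈ Icc 1 i, ∑ s ∈ range c, (if p ^ s ∣ t then p ^ s else 0) := sum_le_sum pow_le
    _ = ∑ s ∈ range c, ∑ t ∈ Icc 1 i, (if p ^ s ∣ t then p ^ s else 0) := sum_comm
    _ ≤ ∑ _s ∈ range c, i := sum_le_sum fun s _ => multiples_le s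
    _ = c * i := by rw [sum_const, card_range, smul_eq_mul]

lemma sum_erase_dist {M : Type*} [AddCommMonoid M] (g : ℕ → M) {e i : ℕ} (hi : i ≤ e) :
    ∑ j ∈ (range (e + 1)).erase i, g (Nat.dist i j) =
      ∑ t ∈ Icc 1 i, g t + ∑ t ∈ Icc 1 (e - i), g t := by
  have split : (range (e + 1)).erase i = range i ∪ Ioc i e := by
    ext j
    simp only [mem_erase, mem_range, mem_union, mem_Ioc]
    lia
  have disjoint : Disjoint (range i) (Ioc i e) := by
    rw [disjoint_left]
    intro j
    simp only [mem_range, mem_Ioc]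
    lia
  rw [split, sum_union disjoint]
  congr 1
  · refine sum_bij' (fun j _ => i - j) (fun t _ => i - t) ?_ ?_ ?_ ?_ ?_ <;>
      simp only [mem_range, mem_Icc] <;> intro j hj <;> try lia
    rw [Nat.dist_eq_sub_of_le_right hj.le]
  · refine sum_bij' (fun j _ => j - i) (fun t _ => i + t) ?_ ?_ ?_ ?_ ?_ <;>
      simp only [mem_Ioc, mem_Icc] <;> intro j hj <;> try lia
    rw [Nat.dist_eq_sub_of_le hj.1.le]

lemma sum_erase_pow_padicValNat_dist_le (hp : p.Prime) {e i : ℕ} (he : e < p ^ c) (hi : i ≤ e) :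
    ∑ j ∈ (range (e + 1)).erase i, p ^ padicValNat p (Nat.dist i j) ≤ c * e := by
  rw [sum_erase_dist (fun t => p ^ padicValNat p t) hi]
  have left_le := sum_Icc_pow_padicValNat_le hp (hi.trans_lt he)
  have right_le := sum_Icc_pow_padicValNat_le hp ((e.sub_le i).trans_lt he)
  calc _ ≤ c * i + c * (e - i) := add_le_add left_le right_le
    _ = c * e := by rw [← mul_add, Nat.add_sub_of_le hi]

end PadicSums

section OneAddXPow

variable {p : ℕ} [Fact p.Prime]

lemma exists_one_add_X_pow_sub_one_eq {m : ℕ} (hm : m ≠ 0) :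
    ∃ r : (ZMod p)[X], ¬ X ∣ r ∧ (1 + X) ^ m - 1 = X ^ p ^ padicValNat p m * r := by
  obtain ⟨m', hm'⟩ : p ^ padicValNat p m ∣ m := pow_padicValNat_dvd
  have hpm' : ¬ p ∣ m' := fun h => pow_succ_padicValNat_not_dvd hm <| by
    rw [pow_succ]
    exact (mul_dvd_mul_left _ h).trans hm'.symm.dvd
  obtain ⟨s, hs⟩ : (X : (ZMod p)[X]) ∣ (1 + X) ^ m' - 1 := by
    simp [X_dvd_iff, coeff_one_add_X_pow]
  have hXs : ¬ X ∣ s := by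
    have coeff_one_eq := congrArg (coeff · 1) hs
    simp only [coeff_sub, coeff_one_add_X_pow, coeff_X_mul, coeff_one, one_ne_zero, if_false,
      Nat.choose_one_right, sub_zero] at coeff_one_eq
    rwa [X_dvd_iff, ← coeff_one_eq, ZMod.natCast_eq_zero_iff]
  refine ⟨s ^ p ^ padicValNat p m, fun h => hXs (prime_X.dvd_of_dvd_pow h), ?_⟩
  nth_rw 1 [hm']
  rw [mul_comm, pow_mul, ← mul_pow, ← hs, sub_pow_char_pow, one_pow]

lemma exists_one_add_X_pow_sub_pow_eq {a b : ℕ} (hab : a ≠ b) :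
    ∃ r : (ZMod p)[X], ¬ X ∣ r ∧
      (1 + X) ^ a - (1 + X) ^ b = X ^ p ^ padicValNat p (Nat.dist a b) * r := by
  wlog hba : b < a generalizing a b
  · obtain ⟨r, hr, h⟩ := this hab.symm (by lia)
    exact ⟨-r, by rwa [dvd_neg], by rw [Nat.dist_comm, mul_neg, ← h, neg_sub]⟩
  obtain ⟨r, hr, h⟩ := exists_one_add_X_pow_sub_one_eq (p := p) (Nat.sub_ne_zero_of_lt hba)
  refine ⟨(1 + X) ^ b * r, ?_, ?_⟩
  · rw [prime_X.dvd_mul, not_or]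
    exact ⟨by simp [X_dvd_iff, coeff_one_add_X_pow], hr⟩
  · rw [Nat.dist_eq_sub_of_le_right hba.le, mul_left_comm, ← h, mul_sub, ← pow_add, mul_one,
      Nat.add_sub_of_le hba.le]

lemma one_add_X_pow_injective : Function.Injective ((1 + X : (ZMod p)[X]) ^ ·) := by
  intro a b hab
  by_contra hne
  obtain ⟨r, hr, h⟩ := exists_one_add_X_pow_sub_pow_eq (p := p) hne
  rw [sub_eq_zero.2 hab, zero_eq_mul] at h
  exact hr (h.resolve_left (pow_ne_zero _ X_ne_zero) ▸ dvd_zero X)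

end OneAddXPow

section Lagrange

variable {R : Type*} [CommRing R] [IsDomain R] {s : Finset ℕ} {y : ℕ → R} {h : R[X]}

lemma mul_leadingCoeff_eq_sum (hy : Set.InjOn y s) (hs : #s = h.natDegree + 1) (h0 : h ≠ 0)
    {D : R} {q : ℕ → R} (hq : ∀ i ∈ s, (∏ j ∈ s.erase i, (y i - y j)) * q i = D) :
    D * h.leadingCoeff = ∑ i ∈ s, h.eval (y i) * q i := by
  let φ := algebraMap R (FractionRing R)
  have φ_inj : Function.Injective φ := IsFractionRing.injective R _
  have lagrange := Lagrange.leadingCoeff_eq_sum (s := s) (v := φ ∘ y) (P := h.map φ)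
    (φ_inj.comp_injOn hy) (by
      rw [degree_map_eq_of_injective φ_inj, degree_eq_natDegree h0, hs]
      rfl)
  apply φ_inj
  rw [map_mul, map_sum, ← leadingCoeff_map_of_injective φ_inj, lagrange, mul_sum]
  refine sum_congr rfl fun i hi => ?_
  have denom_eq : ∏ j ∈ s.erase i, (φ (y i) - φ (y j)) = φ (∏ j ∈ s.erase i, (y i - y j)) := by
    simp only [map_prod, map_sub]
  have denom_ne : φ (∏ j ∈ s.erase i, (y i - y j)) ≠ 0 := by
    rw [map_ne_zero_iff φ φ_inj, prod_ne_zero_iff]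
    intro j hj
    rw [mem_erase] at hj
    exact sub_ne_zero.2 fun hij => hj.1 (hy hj.2 hi hij.symm)
  simp only [Function.comp_apply]
  rw [denom_eq, ← hq i hi, eval_map_apply, map_mul, map_mul]
  field_simp

lemma pow_dvd_leadingCoeff_of_forall_pow_dvd_eval {π : R} (hπ : Prime π) (hy : Set.InjOn y s)
    (hs : #s = h.natDegree + 1) (h0 : h ≠ 0) {τ : ℕ → ℕ} {r : ℕ → R} {m T : ℕ}
    (hr : ∀ i ∈ s, ¬ π ∣ r i) (hprod : ∀ i ∈ s, ∏ j ∈ s.erase i, (y i - y j) = π ^ τ i * r i)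
    (hτ : ∀ i ∈ s, τ i ≤ T) (hdvd : ∀ i ∈ s, π ^ (m + T) ∣ h.eval (y i)) :
    π ^ m ∣ h.leadingCoeff := by
  have clear_denom : (π ^ T * ∏ i ∈ s, r i) * h.leadingCoeff =
      ∑ i ∈ s, h.eval (y i) * (π ^ (T - τ i) * ∏ j ∈ s.erase i, r j) := by
    refine mul_leadingCoeff_eq_sum hy hs h0 fun i hi => ?_
    rw [hprod i hi, mul_mul_mul_comm, ← pow_add, Nat.add_sub_of_le (hτ i hi), mul_prod_erase s r hi]
  have dvd_mul : π ^ (m + T) ∣ π ^ T * ((∏ i ∈ s, r i) * h.leadingCoeff) := by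
    rw [← mul_assoc, clear_denom]
    exact dvd_sum fun i hi => (hdvd i hi).mul_right _
  rw [add_comm, pow_add, mul_dvd_mul_iff_left (pow_ne_zero _ hπ.ne_zero)] at dvd_mul
  refine hπ.pow_dvd_of_dvd_mul_left m (fun hdvd_prod => ?_) dvd_mul
  obtain ⟨i, hi, hdvd_r⟩ := (hπ.dvd_finsetProd_iff _).1 hdvd_prod
  exact hr i hi hdvd_r

end Lagrange

section EvaluationAtPowers

variable {p c : ℕ} [Fact p.Prime]

lemma exists_not_X_pow_dvd_eval_one_add_X_pow {h : (ZMod p)[X][X]} (hdeg : h.natDegree < p ^ c)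
    {m : ℕ} (hm : ¬ X ^ m ∣ h.leadingCoeff) :
    ∃ u : ℕ, ¬ X ^ (m + c * h.natDegree) ∣ h.eval ((1 + X) ^ u) := by
  by_contra! hdvd
  have diff_eq (i j : ℕ) : ∃ r : (ZMod p)[X], ¬ X ∣ r ∧
      (i ≠ j → (1 + X) ^ i - (1 + X) ^ j = X ^ p ^ padicValNat p (Nat.dist i j) * r) := by
    obtain rfl | hij := eq_or_ne i j
    · exact ⟨1, prime_X.not_dvd_one, fun h => (h rfl).elim⟩
    · obtain ⟨r, hr, h⟩ := exists_one_add_X_pow_sub_pow_eq (p := p) hij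
      exact ⟨r, hr, fun _ => h⟩
  choose r hr diff_eq using diff_eq
  refine hm (pow_dvd_leadingCoeff_of_forall_pow_dvd_eval (s := range (h.natDegree + 1))
    (y := ((1 + X) ^ ·)) (τ := fun i => ∑ j ∈ (range (h.natDegree + 1)).erase i,
      p ^ padicValNat p (Nat.dist i j))
    (r := fun i => ∏ j ∈ (range (h.natDegree + 1)).erase i, r i j)
    prime_X one_add_X_pow_injective.injOn (card_range _) ?_ ?_ ?_ ?_ fun i _ => hdvd i)
  · rintro rfl
    simp at hm
  · intro i _ hX
    obtain ⟨j, _, hj⟩ := (prime_X.dvd_finsetProd_iff _).1 hX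
    exact hr i j hj
  · intro i _
    rw [← prod_pow_eq_pow_sum, ← prod_mul_distrib]
    exact prod_congr rfl fun j hj => diff_eq i j (ne_of_mem_erase hj).symm
  · exact fun i hi => sum_erase_pow_padicValNat_dist_le Fact.out hdeg (by simpa using hi)

lemma aeval_cons_eq_eval_map_finSuccEquiv {R A : Type*} [CommRing R] [CommRing A] [Algebra R A]
    {n : ℕ} (y : A) (x : Fin n → A) (g : MvPolynomial (Fin (n + 1)) R) :
    MvPolynomial.aeval (Fin.cons y x : Fin (n + 1) → A) g =
      ((MvPolynomial.finSuccEquiv R n g).map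
        (MvPolynomial.aeval x : MvPolynomial (Fin n) R →ₐ[R] A).toRingHom).eval y := by
  induction g using MvPolynomial.induction_on with
  | C a => simp [MvPolynomial.finSuccEquiv_apply]
  | add g g' hg hg' => simp only [map_add, Polynomial.map_add, eval_add, hg, hg']
  | mul_X g i hg =>
    simp only [map_mul, Polynomial.map_mul, eval_mul, hg]
    cases i using Fin.cases <;>
      simp [MvPolynomial.finSuccEquiv_X_zero, MvPolynomial.finSuccEquiv_X_succ]

lemma not_X_pow_dvd_aeval_one_add_X {g : MvPolynomial (Fin 1) (ZMod p)} (hg : g ≠ 0) :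
    ¬ X ^ (g.totalDegree + 1) ∣ MvPolynomial.aeval (fun _ => 1 + X : Fin 1 → (ZMod p)[X]) g := by
  have natDegree_eq : (1 + X : (ZMod p)[X]).natDegree = 1 := by
    rw [add_comm, ← C_1, natDegree_X_add_C]
  have algIndep : AlgebraicIndependent (ZMod p) (fun _ => 1 + X : Fin 1 → (ZMod p)[X]) := by
    rw [algebraicIndependent_unique_type_iff]
    have natDegree_ne : (1 + X : (ZMod p)[X]).natDegree ≠ 0 := natDegree_eq ▸ one_ne_zero
    exact Polynomial.transcendental _ natDegree_ne <| mem_nonZeroDivisors_of_ne_zero <|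
      leadingCoeff_ne_zero.2 <| ne_zero_of_natDegree_gt <| Nat.pos_of_ne_zero natDegree_ne
  intro hdvd
  have aeval_ne : MvPolynomial.aeval (fun _ => 1 + X : Fin 1 → (ZMod p)[X]) g ≠ 0 :=
    fun h0 => hg (algIndep.eq_zero_of_aeval_eq_zero g h0)
  have lower := natDegree_le_of_dvd hdvd aeval_ne
  have upper := MvPolynomial.aeval_natDegree_le g le_rfl
    (fun _ => 1 + X : Fin 1 → (ZMod p)[X]) (fun _ => natDegree_eq.le)
  rw [natDegree_X_pow] at lower
  lia

lemma exists_not_X_pow_dvd_aeval_one_add_X_pow (hc : 1 ≤ c) {n : ℕ}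
    {g : MvPolynomial (Fin (n + 1)) (ZMod p)} (hg : g ≠ 0) (hdeg : g.totalDegree < p ^ c) :
    ∃ U : Fin (n + 1) → ℕ, U (Fin.last n) = 1 ∧
      ¬ X ^ (c * g.totalDegree + 1) ∣
        MvPolynomial.aeval (fun i => (1 + X) ^ U i : Fin (n + 1) → (ZMod p)[X]) g := by
  induction n with
  | zero =>
    refine ⟨fun _ => 1, rfl, fun hdvd => not_X_pow_dvd_aeval_one_add_X hg ?_⟩
    simp only [pow_one] at hdvd
    exact (pow_dvd_pow X (by gcongr; exact Nat.le_mul_of_pos_left _ hc)).trans hdvd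
  | succ n ih =>
    set Q := MvPolynomial.finSuccEquiv (ZMod p) (n + 1) g with hQ
    have lc_ne : Q.leadingCoeff ≠ 0 := by simpa [hQ] using hg
    have totalDegree_le : Q.leadingCoeff.totalDegree + Q.natDegree ≤ g.totalDegree :=
      MvPolynomial.totalDegree_coeff_finSuccEquiv_add_le g _ lc_ne
    obtain ⟨U, hU, hdvd⟩ := ih lc_ne (by lia)
    let ev : MvPolynomial (Fin (n + 1)) (ZMod p) →+* (ZMod p)[X] :=
      (MvPolynomial.aeval fun i => (1 + X) ^ U i).toRingHom
    have ev_lc_ne : ev Q.leadingCoeff ≠ 0 := fun h0 => hdvd (h0 ▸ dvd_zero _)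
    have natDegree_eq : (Q.map ev).natDegree = Q.natDegree :=
      natDegree_map_of_leadingCoeff_ne_zero ev ev_lc_ne
    have leadingCoeff_eq : (Q.map ev).leadingCoeff = ev Q.leadingCoeff :=
      leadingCoeff_map_of_leadingCoeff_ne_zero ev ev_lc_ne
    obtain ⟨u, hu⟩ := exists_not_X_pow_dvd_eval_one_add_X_pow (p := p) (c := c) (h := Q.map ev)
      (m := c * Q.leadingCoeff.totalDegree + 1) (by lia) (leadingCoeff_eq ▸ hdvd)
    refine ⟨Fin.cons u U, by rwa [← Fin.succ_last, Fin.cons_succ], fun hdvd => hu ?_⟩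
    have powers_eq : (fun i => (1 + X) ^ (Fin.cons u U : Fin (n + 2) → ℕ) i) =
        (Fin.cons ((1 + X) ^ u) fun i => (1 + X) ^ U i : Fin (n + 2) → (ZMod p)[X]) := by
      ext1 i
      cases i using Fin.cases <;> simp
    rw [powers_eq, aeval_cons_eq_eval_map_finSuccEquiv] at hdvd
    refine (pow_dvd_pow X ?_).trans hdvd
    calc c * Q.leadingCoeff.totalDegree + 1 + c * (Q.map ev).natDegree
        = c * (Q.leadingCoeff.totalDegree + Q.natDegree) + 1 := by rw [natDegree_eq]; ring
      _ ≤ c * g.totalDegree + 1 := by gcongr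

end EvaluationAtPowers

section ChooseDot

variable {p L : ℕ}

lemma natCast_choose_eq_of_modEq (hp : p.Prime) {m m' i : ℕ} (hm : m ≡ m' [MOD p ^ L])
    (hi : i < p ^ L) : (m.choose i : ZMod p) = m'.choose i := by
  have := Fact.mk hp
  have digit_eq (j : ℕ) (hj : j ∈ range L) : m / p ^ j % p = m' / p ^ j % p := by
    rw [← Nat.mod_mul_right_div_self, ← Nat.mod_mul_right_div_self, ← pow_succ,
      hm.of_dvd (pow_dvd_pow p (mem_range.1 hj))]
  have lucas (k : ℕ) : (k.choose i : ZMod p) =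
      ((∏ j ∈ range L, (k / p ^ j % p).choose (i / p ^ j % p) : ℕ) : ZMod p) := by
    simpa [Nat.div_eq_of_lt hi] using (ZMod.intCast_eq_intCast_iff _ _ p).2
      (Choose.choose_modEq_choose_mul_prod_range_choose (n := k) (k := i) (p := p) L)
  rw [lucas, lucas, prod_congr rfl fun j hj => by rw [digit_eq j hj]]

variable {ι : Type*} [Fintype ι]

/-- The function `v ↦ (⟨u, v⟩ choose i) mod p` on `(ℤ/p^Lℤ)^ι`, that is, the coefficient of `X ^ i`
in `(1 + X) ^ ⟨u, v⟩`. For `i < p ^ L` it does not matter which representative of `⟨u, v⟩` is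
taken. -/
def chooseDot (u : ι → ZMod (p ^ L)) (i : ℕ) (v : ι → ZMod (p ^ L)) : ZMod p :=
  (u ⬝ᵥ v).val.choose i

lemma chooseDot_natCast (hp : p.Prime) (U V : ι → ℕ) {i : ℕ} (hi : i < p ^ L) :
    chooseDot (fun j => (U j : ZMod (p ^ L))) i (fun j => (V j : ZMod (p ^ L))) =
      (U ⬝ᵥ V).choose i := by
  refine natCast_choose_eq_of_modEq hp ?_ hi
  have dot_eq : (fun j => (U j : ZMod (p ^ L))) ⬝ᵥ (fun j => (V j : ZMod (p ^ L))) =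
      ((U ⬝ᵥ V : ℕ) : ZMod (p ^ L)) := by
    simp [dotProduct]
  rw [dot_eq, ZMod.val_natCast]
  exact Nat.mod_modEq _ _

lemma coeff_aeval_monomial_one_add_X_pow (hp : p.Prime) (U : ι → ℕ) (v : ι →₀ ℕ) (a : ZMod p)
    {i : ℕ} (hi : i < p ^ L) :
    (MvPolynomial.aeval (fun j => (1 + X) ^ U j : ι → (ZMod p)[X])
      (MvPolynomial.monomial v a)).coeff i =
      a * chooseDot (fun j => (U j : ZMod (p ^ L))) i (fun j => (v j : ZMod (p ^ L))) := by
  rw [MvPolynomial.aeval_monomial, Finsupp.prod_fintype _ _ fun j => pow_zero _,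
    algebraMap_eq, coeff_C_mul, chooseDot_natCast hp U v hi, ← coeff_one_add_X_pow, dotProduct,
    ← prod_pow_eq_pow_sum]
  simp only [pow_mul]

end ChooseDot

/-- A vector is unimodular if its coordinates generate the unit ideal. -/
def IsUnimodular {R ι : Type*} [CommRing R] [Fintype ι] (u : ι → R) : Prop :=
  ∃ v : ι → R, ∑ i, v i * u i = 1

section LowerBound

variable {p L c d D n : ℕ} [Fact p.Prime]

lemma linearIndependent_eval_latticeSimplex (hc : 1 ≤ c) (hd : c * d < D) (hDL : D ≤ p ^ L)
    (hDc : D ≤ p ^ c) {W : Submodule (ZMod p) ((Fin (n + 1) → ZMod (p ^ L)) → ZMod p)}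
    (hW : ∀ u, IsUnimodular u → ∀ i < D, chooseDot u i ∈ W) :
    LinearIndependent (ZMod p) fun v : latticeSimplex (Fin (n + 1)) (d + 1) =>
      (LinearMap.proj fun j => ((v : Fin (n + 1) →₀ ℕ) j : ZMod (p ^ L))).comp W.subtype := by
  rw [Fintype.linearIndependent_iff]
  intro a relation
  let g : MvPolynomial (Fin (n + 1)) (ZMod p) := ∑ v, MvPolynomial.monomial v.1 (a v)
  have coeff_g (v : latticeSimplex (Fin (n + 1)) (d + 1)) : g.coeff v = a v := by
    simp [g, MvPolynomial.coeff_sum, MvPolynomial.coeff_monomial]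
  have totalDegree_g : g.totalDegree ≤ d := by
    refine MvPolynomial.totalDegree_finsetSum_le fun v _ =>
      (MvPolynomial.totalDegree_monomial_le _ _).trans ?_
    rw [Finsupp.sum_fintype _ _ fun _ => rfl]
    exact Nat.lt_succ_iff.1 (mem_latticeSimplex.1 v.2)
  suffices g = 0 from fun v => by rw [← coeff_g, this, MvPolynomial.coeff_zero]
  by_contra hg
  have hd_le : d ≤ c * d := Nat.le_mul_of_pos_left d hc
  obtain ⟨U, hU, hdvd⟩ := exists_not_X_pow_dvd_aeval_one_add_X_pow hc hg (by lia)
  refine hdvd ((pow_dvd_pow X ?_).trans (X_pow_dvd_iff.2 fun i (hi : i < D) => ?_))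
  · calc c * g.totalDegree + 1 ≤ c * d + 1 := by gcongr
      _ ≤ D := hd
  · have hUW : chooseDot (fun j => (U j : ZMod (p ^ L))) i ∈ W :=
      hW _ ⟨Pi.single (Fin.last n) 1, by simp [Pi.single_apply, hU]⟩ i hi
    have := DFunLike.congr_fun relation ⟨_, hUW⟩
    simp only [g, map_sum, finsetSum_coeff]
    simpa [coeff_aeval_monomial_one_add_X_pow Fact.out U _ _ (hi.trans_le hDL),
      LinearMap.sum_apply] using this

lemma card_latticeSimplex_le_finrank (hc : 1 ≤ c) (hd : c * d < D) (hDL : D ≤ p ^ L)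
    (hDc : D ≤ p ^ c) {W : Submodule (ZMod p) ((Fin (n + 1) → ZMod (p ^ L)) → ZMod p)}
    (hW : ∀ u, IsUnimodular u → ∀ i < D, chooseDot u i ∈ W) :
    #(latticeSimplex (Fin (n + 1)) (d + 1)) ≤ Module.finrank (ZMod p) W := by
  have : NeZero (p ^ L) := ⟨pow_ne_zero L (Fact.out : p.Prime).ne_zero⟩
  calc #(latticeSimplex (Fin (n + 1)) (d + 1))
      = Fintype.card (latticeSimplex (Fin (n + 1)) (d + 1)) := (Fintype.card_coe _).symm
    _ ≤ Module.finrank (ZMod p) (Module.Dual (ZMod p) W) :=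
      (linearIndependent_eval_latticeSimplex hc hd hDL hDc hW).fintype_card_le_finrank
    _ = Module.finrank (ZMod p) W := Subspace.dual_finrank_eq

end LowerBound

section LinearIndependence

variable {V B I : Type*}

lemma linearIndependent_row_map_of_map [Finite V] [Finite B] {O K F : Type*}
    [CommRing O] [Field K] [Field F] {π : O →+* K} (hπ : Function.Surjective π) {φ : O →+* F}
    (hφ : Function.Injective φ) {Φ : Matrix B V O} (h : LinearIndependent K (Φ.map π).row) :
    LinearIndependent F (Φ.map φ).row := by
  classical
  cases nonempty_fintype V
  cases nonempty_fintype B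
  have mulVec_surjective : Function.Surjective (Φ.map π).mulVec :=
    LinearMap.range_eq_top.1 <| Submodule.eq_top_of_finrank_eq <|
      h.rank_matrix.trans (Module.finrank_fintype_fun_eq_card K).symm
  obtain ⟨N, hN⟩ := Matrix.mulVec_surjective_iff_exists_right_inverse.1 mulVec_surjective
  obtain ⟨N, rfl⟩ : ∃ N' : Matrix V B O, N'.map π = N :=
    ⟨N.map (Function.surjInv hπ), Matrix.ext fun v b => Function.surjInv_eq hπ (N v b)⟩
  have map_det : π (Φ * N).det = 1 := by
    rw [RingHom.map_det, RingHom.mapMatrix_apply, Matrix.map_mul, hN, Matrix.det_one]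
  have det_ne : (Φ.map φ * N.map φ).det ≠ 0 := by
    rw [← Matrix.map_mul, ← RingHom.mapMatrix_apply, ← RingHom.map_det, map_ne_zero_iff φ hφ]
    intro h0
    rw [h0, map_zero] at map_det
    exact zero_ne_one map_det
  rw [← Matrix.vecMul_injective_iff, ← Matrix.coe_vecMulLinear, injective_iff_map_eq_zero]
  intro x hx
  refine Matrix.eq_zero_of_vecMul_eq_zero det_ne ?_
  rw [Matrix.vecMulLinear_apply] at hx
  rw [← Matrix.vecMul_vecMul, hx, Matrix.zero_vecMul]

lemma card_le_card_of_forall_mulVec_eq_zero [Fintype V] [Fintype B] [Fintype I] {F : Type*}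
    [Field F] {Φ : Matrix B V F}
    (hΦ : LinearIndependent F Φ.row) (Λ : Matrix I V F)
    (hker : ∀ w, Λ.mulVec w = 0 → Φ.mulVec w = 0) : Fintype.card B ≤ Fintype.card I := by
  have ker_le : LinearMap.ker Λ.mulVecLin ≤ LinearMap.ker Φ.mulVecLin := fun w hw => hker w hw
  have nullity_le := Submodule.finrank_mono ker_le
  have rank_nullity_Φ := LinearMap.finrank_range_add_finrank_ker Φ.mulVecLin
  have rank_nullity_Λ := LinearMap.finrank_range_add_finrank_ker Λ.mulVecLin
  calc Fintype.card B = Φ.rank := hΦ.rank_matrix.symm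
    _ ≤ Λ.rank := by unfold Matrix.rank; lia
    _ ≤ Fintype.card I := Λ.rank_le_card_height

end LinearIndependence

section Moments

variable {F V ι : Type*} [Field F] [Fintype V] [Fintype ι] {e : ℕ}

lemma sum_mul_dotProduct_pow_eq_zero {w : V → F} {m : V → ι → ℕ}
    (h : ∀ β : ι →₀ ℕ, ∑ i, β i < e → ∑ v, w v * ∏ i, (m v i : F) ^ β i = 0)
    (U : ι → ℕ) {s : ℕ} (hs : s < e) : ∑ v, w v * ((U ⬝ᵥ m v : ℕ) : F) ^ s = 0 := by
  classical
  have multinomial_expansion (v : V) : w v * ((U ⬝ᵥ m v : ℕ) : F) ^ s =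
      ∑ β ∈ piAntidiag univ s, (Nat.multinomial univ β * ∏ i, (U i : F) ^ β i) *
        (w v * ∏ i, (m v i : F) ^ β i) := by
    simp only [dotProduct, Nat.cast_sum, Nat.cast_mul]
    rw [sum_pow_eq_sum_piAntidiag, mul_sum]
    refine sum_congr rfl fun β _ => ?_
    simp only [mul_pow, prod_mul_distrib]
    ring
  simp only [multinomial_expansion]
  rw [sum_comm]
  refine sum_eq_zero fun β hβ => ?_
  have hβe : ∑ i, β i < e := by rwa [(mem_piAntidiag.1 hβ).1]
  have moment_eq_zero : ∑ v, w v * ∏ i, (m v i : F) ^ β i = 0 :=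
    h (Finsupp.equivFunOnFinite.symm β) hβe
  rw [← mul_sum, moment_eq_zero, mul_zero]

lemma X_sub_C_pow_dvd_sum_one_add_X_pow {w : V → F} {m : V → ℕ} {z : F} (hz : z ≠ 0)
    (h : ∀ j < e, ∑ v, w v * z ^ m v * ((m v).choose j : F) = 0) :
    (X - C (z - 1)) ^ e ∣ ∑ v, C (w v) * (1 + X) ^ m v := by
  rw [X_sub_C_pow_dvd_iff, X_pow_dvd_iff]
  intro j hj
  have comp_eq : (1 + (X + C (z - 1)) : F[X]) = X + C z := by
    rw [C_sub, C_1]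
    ring
  simp only [Polynomial.sum_comp, finsetSum_coeff, mul_comp, C_comp, pow_comp, add_comp, one_comp,
    X_comp, comp_eq, coeff_C_mul, coeff_X_add_C_pow]
  have shift_exponent (l : ℕ) :
      z ^ (l - j) * (l.choose j : F) = (z ^ j)⁻¹ * (z ^ l * (l.choose j : F)) := by
    obtain hl | hl := lt_or_ge l j
    · simp [Nat.choose_eq_zero_of_lt hl]
    · rw [← pow_mul_pow_sub z hl]
      field_simp
  calc ∑ v, w v * (z ^ (m v - j) * ((m v).choose j : F))
      = (z ^ j)⁻¹ * ∑ v, w v * z ^ m v * ((m v).choose j : F) := by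
        rw [mul_sum]
        exact sum_congr rfl fun v _ => by rw [shift_exponent]; ring
    _ = 0 := by rw [h j hj, mul_zero]

lemma sum_mul_choose_eq_zero [CharZero F] {w : V → F} {m : V → ℕ}
    (h : ∀ s < e, ∑ v, w v * (m v : F) ^ s = 0) {j : ℕ} (hj : j < e) :
    ∑ v, w v * ((m v).choose j : F) = 0 := by
  have eval_eq_zero (q : F[X]) (hq : q.natDegree < e) : ∑ v, w v * q.eval (m v : F) = 0 := by
    simp only [eval_eq_sum_range, mul_sum]
    rw [sum_comm]
    refine sum_eq_zero fun s hs => ?_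
    simp only [mul_left_comm (w _)]
    rw [← mul_sum, h s (by rw [mem_range] at hs; lia), mul_zero]
  have descPochhammer_eq := eval_eq_zero (descPochhammer F j) (by rwa [descPochhammer_natDegree])
  simp only [descPochhammer_eval_eq_descFactorial, Nat.descFactorial_eq_factorial_mul_choose,
    Nat.cast_mul, mul_left_comm (w _)] at descPochhammer_eq
  rw [← mul_sum] at descPochhammer_eq
  exact (mul_eq_zero.1 descPochhammer_eq).resolve_left (by exact_mod_cast j.factorial_ne_zero)

end Moments

section LineCoefficient

lemma coeff_modByMonic_X_pow {R : Type*} [CommRing R] (f : R[X]) {D i : ℕ} (hi : i < D) :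
    (f %ₘ X ^ D).coeff i = f.coeff i := by
  conv_rhs => rw [← modByMonic_add_div f (X ^ D : R[X])]
  rw [coeff_add, coeff_X_pow_mul', if_neg hi.not_ge, add_zero]

variable {q : ℕ} [NeZero q] {R S ι : Type*} [CommRing R] [CommRing S] [Fintype ι]

/-- The polynomial `∏ (X - (ψ t - 1)) ^ e (a + t U)` over `t : ZMod q`, in which the weight `e` of
the points of a line is recorded as multiplicities of the roots `ψ t - 1`. -/
noncomputable def lineModulus (ψ : AddChar (ZMod q) R) (e : (ι → ZMod q) → ℕ) (a : ι → ZMod q)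
    (U : ι → ℕ) : R[X] :=
  ∏ t : ZMod q, (X - C (ψ t - 1)) ^ e (a + t • (fun j => (U j : ZMod q)))

/-- The polynomial in `X` obtained from the exponential `z ↦ z ^ v` along a line: `1 + X = ψ t`
corresponds to the point `a + t U`. -/
noncomputable def lineExp (ψ : AddChar (ZMod q) R) (a : ι → ZMod q) (U v : ι → ℕ) : R[X] :=
  C (ψ (a ⬝ᵥ (fun j => (v j : ZMod q)))) * (1 + X) ^ (U ⬝ᵥ v)

/-- The `i`-th coefficient of the remainder of `lineExp` modulo `lineModulus`; as a function of `v`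
it lifts `chooseDot U i` to characteristic zero. -/
noncomputable def lineCoeff (ψ : AddChar (ZMod q) R) (e : (ι → ZMod q) → ℕ) (a : ι → ZMod q)
    (U : ι → ℕ) (i : ℕ) (v : ι → ℕ) : R :=
  (lineExp ψ a U v %ₘ lineModulus ψ e a U).coeff i

variable {ψ : AddChar (ZMod q) R} {e : (ι → ZMod q) → ℕ} {a : ι → ZMod q} {U : ι → ℕ} {i : ℕ}

omit [Fintype ι] in
lemma monic_lineModulus : (lineModulus ψ e a U).Monic :=
  monic_prod_of_monic _ _ fun _ _ => (monic_X_sub_C _).pow _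

lemma map_lineCoeff (φ : R →+* S) (v : ι → ℕ) :
    φ (lineCoeff ψ e a U i v) = lineCoeff (φ.toMonoidHom.compAddChar ψ) e a U i v := by
  rw [lineCoeff, ← coeff_map, map_modByMonic _ monic_lineModulus]
  simp [lineCoeff, lineExp, lineModulus, Polynomial.map_prod]

lemma lineCoeff_one (hi : i < ∑ t : ZMod q, e (a + t • (fun j => (U j : ZMod q)))) (v : ι → ℕ) :
    lineCoeff (1 : AddChar (ZMod q) R) e a U i v = ((U ⬝ᵥ v).choose i : R) := by
  simp [lineCoeff, lineExp, lineModulus, prod_pow_eq_pow_sum, coeff_modByMonic_X_pow _ hi,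
    coeff_one_add_X_pow]

omit [NeZero q] in
lemma apply_add_smul_dotProduct (t : ZMod q) (v : ι → ℕ) :
    ψ ((a + t • (fun j => (U j : ZMod q))) ⬝ᵥ (fun j => (v j : ZMod q))) =
      ψ (a ⬝ᵥ (fun j => (v j : ZMod q))) * ψ t ^ (U ⬝ᵥ v) := by
  have smul_dot : (t • fun j => (U j : ZMod q)) ⬝ᵥ (fun j => (v j : ZMod q)) = (U ⬝ᵥ v) • t := by
    rw [smul_dotProduct, smul_eq_mul, nsmul_eq_mul, mul_comm]
    simp only [dotProduct, Nat.cast_sum, Nat.cast_mul]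
  rw [add_dotProduct, AddChar.map_add_eq_mul, smul_dot, AddChar.map_nsmul_eq_pow]

variable {F V : Type*} [Field F] [CharZero F] [Fintype V] {χ : AddChar (ZMod q) F} {w : V → F}
  {m : V → ι → ℕ}

lemma lineModulus_dvd_sum_lineExp (hχ : Function.Injective χ)
    (h : ∀ x, ∀ β : ι →₀ ℕ, ∑ i, β i < e x →
      ∑ v, w v * χ (x ⬝ᵥ (fun j => (m v j : ZMod q))) * ∏ i, (m v i : F) ^ β i = 0) :
    lineModulus χ e a U ∣ ∑ v, C (w v) * lineExp χ a U (m v) := by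
  refine prod_dvd_of_coprime (fun t _ t' _ htt => ?_) fun t _ => ?_
  · refine (isCoprime_X_sub_C_of_isUnit_sub (isUnit_iff_ne_zero.2 ?_)).pow
    rw [sub_sub_sub_cancel_right]
    exact sub_ne_zero.2 (hχ.ne htt)
  · have choose_sum_eq_zero {j : ℕ} (hj : j < e (a + t • (fun j => (U j : ZMod q)))) :=
      sum_mul_choose_eq_zero (fun s => sum_mul_dotProduct_pow_eq_zero (h _) U) hj
    simp only [apply_add_smul_dotProduct, ← mul_assoc] at choose_sum_eq_zero
    have := X_sub_C_pow_dvd_sum_one_add_X_pow (χ.val_isUnit t).ne_zero @choose_sum_eq_zero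
    simpa only [lineExp, ← mul_assoc, ← C_mul] using this

lemma sum_mul_lineCoeff_eq_zero (hχ : Function.Injective χ)
    (h : ∀ x, ∀ β : ι →₀ ℕ, ∑ i, β i < e x →
      ∑ v, w v * χ (x ⬝ᵥ (fun j => (m v j : ZMod q))) * ∏ i, (m v i : F) ^ β i = 0) :
    ∑ v, w v * lineCoeff χ e a U i (m v) = 0 := by
  have remainder_eq_zero := (modByMonic_eq_zero_iff_dvd monic_lineModulus).2
    (lineModulus_dvd_sum_lineExp (a := a) (U := U) hχ h)
  calc ∑ v, w v * lineCoeff χ e a U i (m v)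
      = ((∑ v, C (w v) * lineExp χ a U (m v)) %ₘ lineModulus χ e a U).coeff i := by
        rw [← modByMonicHom_apply, map_sum, finsetSum_coeff]
        refine sum_congr rfl fun v _ => ?_
        rw [modByMonicHom_apply, ← smul_eq_C_mul, smul_modByMonic, coeff_smul, smul_eq_mul,
          lineCoeff]
    _ = 0 := by rw [remainder_eq_zero, coeff_zero]

omit [Fintype V] in
lemma card_le_of_linearIndependent_lineCoeff [Finite V] [DecidableEq ι] {B : Type*} [Fintype B]
    {a : B → ι → ZMod q} {U : B → ι → ℕ} {i : B → ℕ} (hχ : Function.Injective χ)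
    (hB : LinearIndependent F fun b v => lineCoeff χ e (a b) (U b) (i b) (m v)) :
    Fintype.card B ≤ ∑ x, #(latticeSimplex ι (e x)) := by
  cases nonempty_fintype V
  let Φ : Matrix B V F := Matrix.of fun b v => lineCoeff χ e (a b) (U b) (i b) (m v)
  let Λ : Matrix (Σ x, latticeSimplex ι (e x)) V F := Matrix.of fun y v =>
    χ (y.1 ⬝ᵥ (fun j => (m v j : ZMod q))) * ∏ j, (m v j : F) ^ y.2.1 j
  have ker_le (w : V → F) (hw : Λ.mulVec w = 0) : Φ.mulVec w = 0 := by
    funext b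
    have moment_eq_zero (x : ι → ZMod q) (β : ι →₀ ℕ) (hβ : ∑ j, β j < e x) :
        ∑ v, w v * χ (x ⬝ᵥ (fun j => (m v j : ZMod q))) * ∏ j, (m v j : F) ^ β j = 0 := by
      rw [← Pi.zero_apply (M := fun _ => F) (⟨x, β, mem_latticeSimplex.2 hβ⟩ :
        Σ x, latticeSimplex ι (e x)), ← hw]
      exact sum_congr rfl fun v _ => by rw [mul_assoc, mul_comm]; rfl
    rw [Pi.zero_apply, ← sum_mul_lineCoeff_eq_zero (a := a b) (U := U b) (i := i b) hχ
      moment_eq_zero]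
    exact sum_congr rfl fun v _ => mul_comm _ _
  calc Fintype.card B ≤ Fintype.card (Σ x, latticeSimplex ι (e x)) :=
        card_le_card_of_forall_mulVec_eq_zero hB Λ ker_le
    _ = ∑ x, #(latticeSimplex ι (e x)) := by simp [Fintype.card_sigma]

end LineCoefficient

section RankBound

variable {p k L : ℕ} [Fact p.Prime] {ι : Type*} [Fintype ι]

lemma exists_addChar_injective_ringHom (hk : 1 ≤ k) :
    ∃ (O : Type) (_ : CommRing O) (_ : IsDomain O) (_ : CharZero O) (ψ : AddChar (ZMod (p ^ k)) O)
      (π : O →+* ZMod p), Function.Injective ψ ∧ π.toMonoidHom.compAddChar ψ = 1 := by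
  have hp : p.Prime := Fact.out
  have hpk : 0 < p ^ k := pow_pos hp.pos k
  set Φ := cyclotomic (p ^ k) ℤ
  have isDomain : IsDomain (AdjoinRoot Φ) :=
    AdjoinRoot.isDomain_of_prime (cyclotomic.irreducible hpk).prime
  have charZero : CharZero (AdjoinRoot Φ) := charZero_of_injective_ringHom
    (AdjoinRoot.of.injective_of_degree_ne_zero (degree_cyclotomic_pos _ ℤ hpk).ne')
  have : NeZero ((p ^ k : ℕ) : AdjoinRoot Φ) := ⟨by exact_mod_cast hpk.ne'⟩
  have : NeZero (p ^ k) := ⟨hpk.ne'⟩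
  have isPrimitiveRoot : IsPrimitiveRoot (AdjoinRoot.root Φ) (p ^ k) := by
    rw [← isRoot_cyclotomic_iff, ← map_cyclotomic (p ^ k) (AdjoinRoot.of Φ)]
    exact AdjoinRoot.isRoot_root Φ
  have eval_one : Φ.eval₂ (Int.castRingHom (ZMod p)) 1 = 0 := by
    obtain ⟨k, rfl⟩ := Nat.exists_eq_add_of_le' hk
    simp [Φ, eval₂_eq_eval_map, map_cyclotomic, eval_one_cyclotomic_prime_pow]
  refine ⟨AdjoinRoot Φ, inferInstance, isDomain, charZero,
    AddChar.zmodChar _ isPrimitiveRoot.pow_eq_one, AdjoinRoot.lift _ 1 eval_one,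
    fun s t hst => ?_, ?_⟩
  · simp only [AddChar.zmodChar_apply] at hst
    exact ZMod.val_injective _ (isPrimitiveRoot.pow_inj s.val_lt t.val_lt hst)
  · ext t
    simp [AddChar.zmodChar_apply]

lemma card_le_sum_card_latticeSimplex [DecidableEq ι] (hk : 1 ≤ k) (e : (ι → ZMod (p ^ k)) → ℕ)
    {B : Type*} [Fintype B] {a : B → ι → ZMod (p ^ k)} {U : B → ι → ℕ} {i : B → ℕ}
    (hL : ∀ b, i b < p ^ L)
    (hi : ∀ b, i b < ∑ t : ZMod (p ^ k), e (a b + t • (fun j => (U b j : ZMod (p ^ k)))))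
    (hB : LinearIndependent (ZMod p)
      fun b => chooseDot (fun j => (U b j : ZMod (p ^ L))) (i b)) :
    Fintype.card B ≤ ∑ x, #(latticeSimplex ι (e x)) := by
  have hp : p.Prime := Fact.out
  have : NeZero (p ^ k) := ⟨(pow_pos hp.pos _).ne'⟩
  have : NeZero (p ^ L) := ⟨(pow_pos hp.pos _).ne'⟩
  obtain ⟨O, _, _, _, ψ, π, hψ, hπ⟩ := exists_addChar_injective_ringHom (p := p) hk
  let φ := algebraMap O (FractionRing O)
  have hφ : Function.Injective φ := IsFractionRing.injective O (FractionRing O)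
  have : CharZero (FractionRing O) := charZero_of_injective_ringHom hφ
  let Φ : Matrix B (ι → ZMod (p ^ L)) O :=
    Matrix.of fun b v => lineCoeff ψ e (a b) (U b) (i b) (ZMod.val ∘ v)
  have map_π : (Φ.map π).row = fun b => chooseDot (fun j => (U b j : ZMod (p ^ L))) (i b) := by
    funext b v
    calc π (lineCoeff ψ e (a b) (U b) (i b) (ZMod.val ∘ v))
        = ((U b ⬝ᵥ ZMod.val ∘ v).choose (i b) : ZMod p) := by
          rw [map_lineCoeff, hπ, lineCoeff_one (hi b)]
      _ = chooseDot (fun j => (U b j : ZMod (p ^ L))) (i b) v := by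
          rw [← chooseDot_natCast hp _ _ (hL b)]
          simp
  have lift_independent := linearIndependent_row_map_of_map (ZMod.ringHom_surjective π) hφ
    (map_π ▸ hB : LinearIndependent (ZMod p) (Φ.map π).row)
  refine card_le_of_linearIndependent_lineCoeff (χ := φ.toMonoidHom.compAddChar ψ) (a := a)
    (U := U) (i := i) (m := fun (v : ι → ZMod (p ^ L)) j => (v j).val) (hφ.comp hψ) ?_
  convert lift_independent using 3 with b v
  exact (map_lineCoeff φ _).symm

end RankBound

section Expect

lemma expect_map_smul {G H X M : Type*} [Group G] [Group H] [MulAction G X] [Fintype H]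
    [Fintype X] [AddCommMonoid M] [Module ℚ≥0 M] (ρ : H →* G)
    (hρ : ∀ x y : X, ∃ h, ρ h • x = y) (f : X → M) (x : X) : 𝔼 h, f (ρ h • x) = 𝔼 y, f y := by
  have : Nonempty X := ⟨x⟩
  have orbit_expect_eq (y : X) : 𝔼 h, f (ρ h • y) = 𝔼 h, f (ρ h • x) := by
    obtain ⟨a, rfl⟩ := hρ x y
    exact Fintype.expect_equiv (Equiv.mulRight a) _ _ fun h => by simp [mul_smul]
  calc 𝔼 h, f (ρ h • x) = 𝔼 y, 𝔼 h, f (ρ h • y) := by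
        simp only [orbit_expect_eq, Fintype.expect_const]
    _ = 𝔼 h, 𝔼 y, f (ρ h • y) := expect_comm _ _ _
    _ = 𝔼 _h : H, 𝔼 y, f y :=
      expect_congr rfl fun h _ => Fintype.expect_equiv (MulAction.toPerm (ρ h)) _ _ fun _ => rfl
    _ = 𝔼 y, f y := Fintype.expect_const _

end Expect

section UnimodularVec

open Matrix

variable {ι R S : Type*} [Fintype ι] [CommRing R] [CommRing S]

lemma IsUnimodular.map {u : ι → R} (hu : IsUnimodular u) (ρ : R →+* S) :
    IsUnimodular (ρ ∘ u) := by
  obtain ⟨v, hv⟩ := hu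
  exact ⟨ρ ∘ v, by simp only [Function.comp_apply, ← map_mul, ← map_sum, hv, map_one]⟩

lemma IsUnimodular.mulVec [DecidableEq ι] {u : ι → R} (hu : IsUnimodular u) (A : GL ι R) :
    IsUnimodular (A.val *ᵥ u) := by
  obtain ⟨v, hv⟩ := hu
  refine ⟨v ᵥ* A⁻¹.val, ?_⟩
  change _ ⬝ᵥ _ = 1
  rw [dotProduct_mulVec, vecMul_vecMul, Units.inv_mul, vecMul_one]
  exact hv

lemma IsUnimodular.exists_isUnit [IsLocalRing R] {u : ι → R} (hu : IsUnimodular u) :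
    ∃ i, IsUnit (u i) := by
  obtain ⟨v, hv⟩ := hu
  obtain ⟨i, -, hi⟩ := IsLocalRing.exists_of_isUnit_sum (hv ▸ isUnit_one)
  exact ⟨i, isUnit_of_mul_isUnit_right hi⟩

variable (ι R) in
/-- The type of unimodular vectors, that is, of the directions of lines in `ι → R` before
directions that differ by a unit are identified. -/
abbrev UnimodularVec : Type _ := {u : ι → R // IsUnimodular u}

namespace UnimodularVec

noncomputable instance [Finite R] : Fintype (UnimodularVec ι R) := Fintype.ofFinite _

/-- The reduction of a direction along a ring homomorphism. -/
def map (ρ : R →+* S) (u : UnimodularVec ι R) : UnimodularVec ι S := ⟨ρ ∘ u.1, u.2.map ρ⟩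

variable [DecidableEq ι]

instance : MulAction (GL ι R) (UnimodularVec ι R) where
  smul A u := ⟨A.val *ᵥ u.1, u.2.mulVec A⟩
  one_smul u := Subtype.ext (one_mulVec u.1)
  mul_smul A A' u := Subtype.ext (mulVec_mulVec u.1 A.val A'.val).symm

lemma coe_smul (A : GL ι R) (u : UnimodularVec ι R) : ((A • u).1 : ι → R) = A.val *ᵥ u.1 := rfl

lemma map_smul (ρ : R →+* S) (A : GL ι R) (u : UnimodularVec ι R) :
    map ρ (A • u) = GeneralLinearGroup.map ρ A • map ρ u :=
  Subtype.ext (funext fun i => RingHom.map_mulVec ρ A.val u.1 i)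

lemma exists_map_smul_single_eq [IsLocalRing R] [Nontrivial S] {ρ : R →+* S}
    (hρ : Function.Surjective ρ) (i₀ : ι) (u : UnimodularVec ι S) :
    ∃ A : GL ι R, (GeneralLinearGroup.map ρ A).val *ᵥ Pi.single i₀ 1 = u.1 := by
  have := IsLocalRing.of_surjective' ρ hρ
  have := IsLocalHom.of_surjective ρ hρ
  obtain ⟨i, hi⟩ := u.2.exists_isUnit
  choose w hw using fun j => hρ (u.1 j)
  have isUnit_w : IsUnit (w i) := isUnit_of_map_unit ρ _ (by rwa [hw])
  let A : Matrix ι ι R := ((1 : Matrix ι ι R).updateCol i w).submatrix id (Equiv.swap i₀ i)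
  have isUnit_det : IsUnit A.det := by
    rw [det_permute', ← cramer_apply, cramer_one]
    exact ((Equiv.Perm.sign (Equiv.swap i₀ i)).isUnit.map (Int.castRingHom R)).mul isUnit_w
  refine ⟨GeneralLinearGroup.mk'' A isUnit_det, ?_⟩
  ext j
  rw [mulVec_single_one]
  change ρ (A j i₀) = _
  simp [A, hw]

lemma exists_map_smul_eq [IsLocalRing R] [Nontrivial S] {ρ : R →+* S}
    (hρ : Function.Surjective ρ) (x y : UnimodularVec ι S) :
    ∃ A : GL ι R, GeneralLinearGroup.map ρ A • x = y := by
  have := IsLocalRing.of_surjective' ρ hρ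
  obtain ⟨i, -⟩ := x.2.exists_isUnit
  obtain ⟨A, hA⟩ := exists_map_smul_single_eq hρ i x
  obtain ⟨B, hB⟩ := exists_map_smul_single_eq hρ i y
  have inv_smul_x : (GeneralLinearGroup.map ρ A)⁻¹.val *ᵥ x.1 = Pi.single i 1 := by
    rw [← hA, mulVec_mulVec, Units.inv_mul, one_mulVec]
  exact ⟨B * A⁻¹, Subtype.ext <| by
    rw [map_mul, map_inv, mul_smul, coe_smul, coe_smul, inv_smul_x, hB]⟩

end UnimodularVec

end UnimodularVec
lemma isLocalRing_zmod_prime_pow {p L : ℕ} [Fact p.Prime] (hL : 1 ≤ L) :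
    IsLocalRing (ZMod (p ^ L)) := by
  have : Fact (1 < p ^ L) := ⟨Nat.one_lt_pow (by lia) (Fact.out : p.Prime).one_lt⟩
  exact IsLocalRing.of_surjective' (PadicInt.toZModPow L) (ZMod.ringHom_surjective _)

section GradedBasis

lemma exists_linearIndepOn_of_monotone {K V X : Type*} [Field K] [AddCommGroup V] [Module K V]
    (φ : X → V) {T : ℕ → Set X} (hT : Monotone T) (m : ℕ) :
    ∃ B ⊆ T m, LinearIndepOn K φ B ∧
      ∀ D ≤ m, φ '' T D ⊆ Submodule.span K (φ '' (B ∩ T D)) := by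
  induction m with
  | zero =>
    obtain ⟨B, hB, -, hspan, hind⟩ := exists_linearIndepOn_extension (linearIndepOn_empty K φ)
      (Set.empty_subset (T 0))
    refine ⟨B, hB, hind, fun D hD => ?_⟩
    obtain rfl : D = 0 := by lia
    rwa [Set.inter_eq_left.2 hB]
  | succ m ih =>
    obtain ⟨B, hB, hind, hspan⟩ := ih
    obtain ⟨B', hB', hBB', hspan', hind'⟩ := exists_linearIndepOn_extension hind
      (hB.trans (hT m.le_succ))
    refine ⟨B', hB', hind', fun D hD => ?_⟩
    obtain rfl | hDm := hD.eq_or_lt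
    · rwa [Set.inter_eq_left.2 hB']
    · refine (hspan D (by lia)).trans (Submodule.span_mono (Set.image_mono ?_))
      exact Set.inter_subset_inter_left _ hBB'

variable {p L n : ℕ} [Fact p.Prime]

lemma exists_linearIndepOn_chooseDot [NeZero n] {c m : ℕ} (hc : 1 ≤ c) (hmc : m ≤ p ^ c)
    (hmL : m ≤ p ^ L) :
    ∃ B : Finset (UnimodularVec (Fin n) (ZMod (p ^ L)) × ℕ), (∀ b ∈ B, b.2 < m) ∧
      LinearIndepOn (ZMod p) (fun b => chooseDot b.1.1 b.2) (SetLike.coe B) ∧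
      ∀ d D, c * d < D → D ≤ m → #(latticeSimplex (Fin n) (d + 1)) ≤ #{b ∈ B | b.2 < D} := by
  classical
  have : NeZero (p ^ L) := ⟨(pow_pos (Fact.out : p.Prime).pos _).ne'⟩
  let φ (b : UnimodularVec (Fin n) (ZMod (p ^ L)) × ℕ) := chooseDot b.1.1 b.2
  obtain ⟨B, hB, hind, hspan⟩ := exists_linearIndepOn_of_monotone (K := ZMod p) φ
    (T := fun D => {b | b.2 < D}) (fun D D' hD b hb => hb.trans_le hD) m
  lift B to Finset (UnimodularVec (Fin n) (ZMod (p ^ L)) × ℕ) using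
    ((Set.finite_univ.prod (Set.finite_Iio m)).subset fun b hb => ⟨trivial, hB hb⟩)
  refine ⟨B, fun b hb => hB hb, hind, fun d D hd hD => ?_⟩
  have image_eq : φ '' (B ∩ {b | b.2 < D}) = ({b ∈ B | b.2 < D}.image φ : Finset _) := by
    rw [coe_image, coe_filter]
    rfl
  obtain ⟨n, rfl⟩ := Nat.exists_eq_succ_of_ne_zero (NeZero.ne n)
  calc #(latticeSimplex (Fin (n + 1)) (d + 1))
      ≤ Module.finrank (ZMod p) (Submodule.span (ZMod p) (φ '' (B ∩ {b | b.2 < D}))) :=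
        card_latticeSimplex_le_finrank hc hd (hD.trans hmL) (hD.trans hmc)
          fun u hu i hi => hspan D hD ⟨(⟨u, hu⟩, i), hi, rfl⟩
    _ ≤ #({b ∈ B | b.2 < D}.image φ) := by
        rw [image_eq]
        exact finrank_span_finset_le_card _
    _ ≤ #{b ∈ B | b.2 < D} := card_image_le

end GradedBasis

section MaximalBound

open Matrix

/-- The maximal inequality on `Rⁿ` with constant `K` for the maximal function truncated at `M`: if
`F u ≤ M` is at most the sum of `g` along some line of direction `u`, for each `u`, then the mean of
`Fⁿ` is at most `K * ∑ x, g x ^ n`. -/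
def MaximalBound (n : ℕ) (R : Type*) [CommRing R] [Fintype R] (M : ℕ) (K : ℝ) : Prop :=
  ∀ (g : (Fin n → R) → ℕ) (F : UnimodularVec (Fin n) R → ℕ),
    (∀ u, F u ≤ M ∧ ∃ a, F u ≤ ∑ t : R, g (a + t • u.1)) →
      𝔼 u, (F u : ℝ) ^ n ≤ K * ∑ x, (g x : ℝ) ^ n

variable {p k L n : ℕ}

lemma chooseDot_mulVec {ι : Type*} [Fintype ι] (A : Matrix ι ι (ZMod (p ^ L)))
    (u v : ι → ZMod (p ^ L)) (i : ℕ) : chooseDot (A *ᵥ u) i v = chooseDot u i (Aᵀ *ᵥ v) := by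
  rw [chooseDot, chooseDot, mulVec_transpose, dotProduct_comm, dotProduct_mulVec, dotProduct_comm]

variable [Fact p.Prime]

lemma linearIndependent_chooseDot_mulVec {ι B : Type*} [Fintype ι] [DecidableEq ι]
    (A : GL ι (ZMod (p ^ L))) {u : B → ι → ZMod (p ^ L)} {i : B → ℕ}
    (h : LinearIndependent (ZMod p) fun b => chooseDot (u b) (i b)) :
    LinearIndependent (ZMod p) fun b => chooseDot (A.val *ᵥ u b) (i b) := by
  have surjective_transpose : Function.Surjective (A.valᵀ *ᵥ ·) := fun v =>
    ⟨A⁻¹.valᵀ *ᵥ v, by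
      simp only [mulVec_mulVec, ← transpose_mul, Units.inv_mul, transpose_one, one_mulVec]⟩
  have eq_funLeft : (fun b => chooseDot (A.val *ᵥ u b) (i b)) =
      LinearMap.funLeft (ZMod p) (ZMod p) (A.valᵀ *ᵥ ·) ∘ fun b => chooseDot (u b) (i b) :=
    funext fun b => funext fun v => chooseDot_mulVec A.val (u b) v (i b)
  rw [eq_funLeft]
  exact h.map' _ (LinearMap.ker_eq_bot.2
    (LinearMap.funLeft_injective_of_surjective _ _ _ surjective_transpose))

lemma factorial_mul_card_filter_le (hk : 1 ≤ k) [NeZero n] {g : (Fin n → ZMod (p ^ k)) → ℕ}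
    {F : UnimodularVec (Fin n) (ZMod (p ^ k)) → ℕ} {m : ℕ} (hm : m ≤ p ^ L)
    (hF : ∀ u, ∃ a, F u ≤ ∑ t : ZMod (p ^ k), g (a + t • u.1))
    {B : Finset (UnimodularVec (Fin n) (ZMod (p ^ L)) × ℕ)} (hB : ∀ b ∈ B, b.2 < m)
    (hBi : LinearIndepOn (ZMod p) (fun b => chooseDot b.1.1 b.2) (SetLike.coe B))
    (ρ : ZMod (p ^ L) →+* ZMod (p ^ k)) (A : GL (Fin n) (ZMod (p ^ L))) :
    n.factorial * #{b ∈ B | b.2 < n * F (GeneralLinearGroup.map ρ A • b.1.map ρ)} ≤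
      (2 * n) ^ n * ∑ x, g x ^ n := by
  classical
  have : NeZero (p ^ L) := ⟨(pow_pos (Fact.out : p.Prime).pos _).ne'⟩
  choose a ha using hF
  set B' := {b ∈ B | b.2 < n * F (GeneralLinearGroup.map ρ A • b.1.map ρ)}
  have mem_B' (b : B') := mem_filter.1 b.2
  have map_eq (b : B') : (GeneralLinearGroup.map ρ A • b.1.1.map ρ).1 =
      fun j => (((A • b.1.1).1 j).val : ZMod (p ^ k)) := by
    funext j
    rw [← UnimodularVec.map_smul]
    change ρ _ = _
    rw [← map_natCast ρ, ZMod.natCast_zmod_val]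
  have hB'i : LinearIndependent (ZMod p) fun b : B' => chooseDot b.1.1.1 b.1.2 :=
    hBi.mono (coe_subset.2 (filter_subset _ B))
  have card_le := card_le_sum_card_latticeSimplex (L := L) hk (fun x => n * g x)
    (a := fun b : B' => a (GeneralLinearGroup.map ρ A • b.1.1.map ρ))
    (U := fun b j => ((A • b.1.1).1 j).val) (i := fun b => b.1.2)
    (fun b => (hB _ (mem_B' b).1).trans_le hm)
    (fun b => by
      rw [← map_eq, ← mul_sum]
      exact (mem_B' b).2.trans_le (Nat.mul_le_mul_left _ (ha _)))
    (by
      simp only [ZMod.natCast_zmod_val]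
      exact linearIndependent_chooseDot_mulVec A hB'i)
  calc n.factorial * #B' ≤ n.factorial * ∑ x, #(latticeSimplex (Fin n) (n * g x)) := by
        rw [← Fintype.card_coe]
        gcongr
    _ ≤ ∑ x, (2 * n * g x) ^ n := by
        rw [mul_sum]
        exact sum_le_sum fun x _ => by
          simpa using factorial_mul_card_latticeSimplex_mul_le (Fin n) (g x)
    _ = (2 * n) ^ n * ∑ x, g x ^ n := by simp only [mul_pow, mul_sum]

lemma expect_factorial_mul_card_filter_le (hk : 1 ≤ k) [NeZero n]
    {g : (Fin n → ZMod (p ^ k)) → ℕ} {F : UnimodularVec (Fin n) (ZMod (p ^ k)) → ℕ}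
    [NeZero (p ^ k)] [NeZero (p ^ L)] (hkL : k ≤ L) {m : ℕ} (hm : m ≤ p ^ L)
    (hF : ∀ u, ∃ a, F u ≤ ∑ t : ZMod (p ^ k), g (a + t • u.1))
    {B : Finset (UnimodularVec (Fin n) (ZMod (p ^ L)) × ℕ)} (hB : ∀ b ∈ B, b.2 < m)
    (hBi : LinearIndepOn (ZMod p) (fun b => chooseDot b.1.1 b.2) (SetLike.coe B)) :
    𝔼 u, (n.factorial * #{b ∈ B | b.2 < n * F u} : ℝ) ≤ (2 * n) ^ n * ∑ x, (g x : ℝ) ^ n := by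
  have : Fact (1 < p ^ k) := ⟨Nat.one_lt_pow (by lia) (Fact.out : p.Prime).one_lt⟩
  have := isLocalRing_zmod_prime_pow (p := p) (hk.trans hkL)
  let ρ := ZMod.castHom (pow_dvd_pow p hkL) (ZMod (p ^ k))
  have expect_eq (b : UnimodularVec (Fin n) (ZMod (p ^ L)) × ℕ) := expect_map_smul
    (GeneralLinearGroup.map ρ) (UnimodularVec.exists_map_smul_eq (ZMod.ringHom_surjective ρ))
    (fun u => if b.2 < n * F u then (1 : ℝ) else 0) (b.1.map ρ)
  calc 𝔼 u, (n.factorial * #{b ∈ B | b.2 < n * F u} : ℝ)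
      = 𝔼 A, (n.factorial *
          #{b ∈ B | b.2 < n * F (GeneralLinearGroup.map ρ A • b.1.map ρ)} : ℝ) := by
        simp only [← mul_expect, ← sum_boole, expect_sum_comm, expect_eq]
    _ ≤ (2 * n) ^ n * ∑ x, (g x : ℝ) ^ n :=
        expect_le univ_nonempty fun A _ => mod_cast
          factorial_mul_card_filter_le hk hm hF hB hBi ρ A

theorem maximalBound_zmod_prime_pow (hk : 1 ≤ k) [NeZero n] {c M : ℕ} (hc : 1 ≤ c)
    (hM : n * M ≤ p ^ c) : MaximalBound n (ZMod (p ^ k)) M ((2 * c) ^ n) := by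
  intro g F hF
  obtain ⟨L, hkL, hcL⟩ : ∃ L, k ≤ L ∧ c ≤ L := ⟨max k c, le_max_left _ _, le_max_right _ _⟩
  have hp : p.Prime := Fact.out
  have : NeZero (p ^ k) := ⟨(pow_pos hp.pos _).ne'⟩
  have : NeZero (p ^ L) := ⟨(pow_pos hp.pos _).ne'⟩
  have hnML : n * M ≤ p ^ L := hM.trans (Nat.pow_le_pow_right hp.pos hcL)
  obtain ⟨B, hB, hBi, hBc⟩ := exists_linearIndepOn_chooseDot (n := n) hc hM hnML
  let count (y) := #{b ∈ B | b.2 < n * F y}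
  have pow_le (y) : ((n * F y : ℕ) : ℝ) ^ n ≤ c ^ n * (n.factorial * count y) := by
    obtain h0 | hpos := Nat.eq_zero_or_pos (n * F y)
    · rw [h0, Nat.cast_zero, zero_pow (NeZero.ne n)]
      positivity
    have hd : c * ((n * F y - 1) / c) < n * F y :=
      (Nat.mul_div_le _ _).trans_lt (Nat.sub_lt hpos one_pos)
    have h := pow_le_mul_factorial_mul_card_latticeSimplex (Fin n) hc (n * F y)
    rw [Fintype.card_fin] at h
    exact_mod_cast h.trans (by gcongr; exact hBc _ _ hd (Nat.mul_le_mul_left n (hF y).1))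
  have expect_count_le : 𝔼 y, (n.factorial * count y : ℝ) ≤ (2 * n) ^ n * ∑ x, (g x : ℝ) ^ n :=
    expect_factorial_mul_card_filter_le hk hkL hnML (fun u => (hF u).2) hB hBi
  have hn : (0 : ℝ) < n := by exact_mod_cast NeZero.pos n
  refine le_of_mul_le_mul_left ?_ (pow_pos hn n)
  calc (n : ℝ) ^ n * 𝔼 y, (F y : ℝ) ^ n = 𝔼 y, ((n * F y : ℕ) : ℝ) ^ n := by
        simp only [mul_expect, Nat.cast_mul, mul_pow]
    _ ≤ 𝔼 y, (c ^ n * (n.factorial * count y) : ℝ) := expect_le_expect fun y _ => pow_le y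
    _ = c ^ n * 𝔼 y, (n.factorial * count y : ℝ) := (mul_expect _ _ _).symm
    _ ≤ c ^ n * ((2 * n) ^ n * ∑ x, (g x : ℝ) ^ n) := by gcongr
    _ = n ^ n * ((2 * c) ^ n * ∑ x, (g x : ℝ) ^ n) := by ring

end MaximalBound

section SetMaximalBound

/-- The maximal inequality `MaximalBound` for indicator functions `g`, in which the maximal function
need not be truncated. -/
def SetMaximalBound (n : ℕ) (R : Type*) [CommRing R] [Fintype R] (K : ℝ) : Prop :=
  ∀ (g : (Fin n → R) → ℕ) (F : UnimodularVec (Fin n) R → ℕ),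
    (∀ x, g x ≤ 1) → (∀ u, ∃ a, F u ≤ ∑ t : R, g (a + t • u.1)) →
      𝔼 u, (F u : ℝ) ^ n ≤ K * ∑ x, (g x : ℝ) ^ n

variable {n : ℕ} {A B R : Type*} [CommRing A] [Fintype A] [CommRing B] [Fintype B] [CommRing R]
  [Fintype R] {K K' : ℝ}

lemma MaximalBound.setMaximalBound (h : MaximalBound n R (Fintype.card R) K) :
    SetMaximalBound n R K := fun g F hg hF => h g F fun u => by
  obtain ⟨a, ha⟩ := hF u
  refine ⟨ha.trans ?_, a, ha⟩
  simpa using sum_le_card_nsmul univ (fun t : R => g (a + t • u.1)) 1 fun t _ => hg _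

lemma mul_pow_eq_sum_range [NeZero n] {m M : ℕ} (hm : m ≤ M) (κ : ℕ) : (m * κ : ℝ) ^ n =
    ∑ i ∈ range M,
      (((i + 1 : ℕ) : ℝ) ^ n - (i : ℝ) ^ n) * ((if i < m then κ else 0 : ℕ) : ℝ) ^ n := by
  have filter_eq : {i ∈ range M | i < m} = range m := by
    ext i
    simp only [mem_filter, mem_range]
    lia
  have hn : n ≠ 0 := NeZero.ne n
  simp only [Nat.cast_ite, Nat.cast_zero, ite_pow, zero_pow hn, mul_ite, mul_zero]
  rw [← sum_filter, filter_eq, ← sum_mul, sum_range_sub fun i : ℕ => (i : ℝ) ^ n, Nat.cast_zero,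
    zero_pow hn, sub_zero, mul_pow]

lemma SetMaximalBound.expect_mul_pow_le [NeZero n] (hB : SetMaximalBound n B K)
    {h : (Fin n → B) → ℕ} {l κ : UnimodularVec (Fin n) B → ℕ}
    (hκ : ∀ u, ∃ a, κ u ≤ #{t : B | l u ≤ h (a + t • u.1)}) :
    𝔼 u, (l u * κ u : ℝ) ^ n ≤ K * ∑ z, (h z : ℝ) ^ n := by
  obtain ⟨M, hhM, hlM⟩ : ∃ M, (∀ z, h z ≤ M) ∧ ∀ u, l u ≤ M :=
    ⟨univ.sup h + univ.sup l, fun z => le_add_right (le_sup (mem_univ z)),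
      fun u => le_add_left (le_sup (mem_univ u))⟩
  let c (i : ℕ) : ℝ := ((i + 1 : ℕ) : ℝ) ^ n - (i : ℝ) ^ n
  have c_nonneg (i) : 0 ≤ c i := by
    have : (i : ℝ) ≤ ((i + 1 : ℕ) : ℝ) := by exact_mod_cast i.le_succ
    exact sub_nonneg.2 (by gcongr)
  have level_le (i) : 𝔼 u, ((if i < l u then κ u else 0 : ℕ) : ℝ) ^ n ≤
      K * ∑ z, ((if i < h z then 1 else 0 : ℕ) : ℝ) ^ n := by
    refine hB _ _ (fun z => by split_ifs <;> simp) fun u => ?_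
    obtain ⟨a, ha⟩ := hκ u
    refine ⟨a, ?_⟩
    split_ifs with hi
    · rw [← card_filter]
      exact ha.trans (card_le_card fun t => by simpa using hi.trans_le)
    · exact Nat.zero_le _
  calc 𝔼 u, (l u * κ u : ℝ) ^ n
      = ∑ i ∈ range M, c i * 𝔼 u, ((if i < l u then κ u else 0 : ℕ) : ℝ) ^ n := by
        simp only [mul_expect, ← expect_sum_comm]
        exact expect_congr rfl fun u _ => mul_pow_eq_sum_range (hlM u) (κ u)
    _ ≤ ∑ i ∈ range M, c i * (K * ∑ z, ((if i < h z then 1 else 0 : ℕ) : ℝ) ^ n) :=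
        sum_le_sum fun i _ => mul_le_mul_of_nonneg_left (level_le i) (c_nonneg i)
    _ = K * ∑ z, (h z : ℝ) ^ n := by
        simp only [mul_left_comm _ K, ← mul_sum]
        simp only [mul_sum (univ : Finset (Fin n → B)), sum_comm (s := range M)]
        congr! 2 with z
        rw [← mul_pow_eq_sum_range (hhM z), Nat.cast_one, mul_one]

lemma exists_sum_le_log_mul {ι : Type*} [Fintype ι] {w : ι → ℕ} {M : ℕ} (hw : ∀ t, w t ≤ M) :
    ∃ l ≤ M, ((∑ t, w t : ℕ) : ℝ) ≤ (Real.log M + 1) * (l * #{t | l ≤ w t} : ℝ) := by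
  obtain ⟨l, hl, hmax⟩ := exists_max_image (range (M + 1)) (fun l => l * #{t | l ≤ w t}) (by simp)
  have sum_eq : ∑ t, w t = ∑ i ∈ range M, #{t | i + 1 ≤ w t} := by
    simp only [card_filter, sum_comm (s := range M)]
    refine sum_congr rfl fun t _ => ?_
    have filter_eq : {i ∈ range M | i + 1 ≤ w t} = range (w t) := by
      ext i
      have := hw t
      simp only [mem_filter, mem_range]
      lia
    rw [← card_filter, filter_eq, card_range]
  have card_le (i) (hi : i ∈ range M) : (#{t | i + 1 ≤ w t} : ℝ) ≤
      ((i + 1 : ℕ) : ℝ)⁻¹ * (l * #{t | l ≤ w t} : ℝ) := by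
    rw [← div_eq_inv_mul, le_div_iff₀ (by positivity), mul_comm]
    exact_mod_cast hmax (i + 1) (by simpa using hi)
  refine ⟨l, by simpa [Nat.lt_succ_iff] using hl, ?_⟩
  calc ((∑ t, w t : ℕ) : ℝ) = ∑ i ∈ range M, (#{t | i + 1 ≤ w t} : ℝ) := by
        rw [sum_eq, Nat.cast_sum]
    _ ≤ (harmonic M : ℝ) * (l * #{t | l ≤ w t} : ℝ) := by
        rw [harmonic, Rat.cast_sum, sum_mul]
        exact (sum_le_sum card_le).trans_eq (by simp)
    _ ≤ (Real.log M + 1) * (l * #{t | l ≤ w t} : ℝ) := by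
        gcongr
        exact (harmonic_le_one_add_log M).trans_eq (add_comm _ _)

end SetMaximalBound

section ProductDirections

variable {ι A B R : Type*} [CommRing A] [CommRing B] [CommRing R]

/-- The identification of `ι → R` with `(ι → A) × (ι → B)` when `R` splits as `A × B`. -/
def vecEquivProd (ι : Type*) (e : R ≃+* A × B) : (ι → R) ≃ (ι → A) × (ι → B) :=
  (Equiv.arrowCongr (Equiv.refl ι) e.toEquiv).trans (Equiv.arrowProdEquivProdArrow _ _ _)

lemma vecEquivProd_add_smul (e : R ≃+* A × B) (a u : ι → R) (s : A) (t : B) :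
    vecEquivProd ι e (a + e.symm (s, t) • u) =
      ((vecEquivProd ι e a).1 + s • (vecEquivProd ι e u).1,
        (vecEquivProd ι e a).2 + t • (vecEquivProd ι e u).2) := by
  ext <;> simp [vecEquivProd]

lemma isUnimodular_iff_vecEquivProd [Fintype ι] (e : R ≃+* A × B) (u : ι → R) :
    IsUnimodular u ↔
      IsUnimodular (vecEquivProd ι e u).1 ∧ IsUnimodular (vecEquivProd ι e u).2 := by
  refine ⟨fun hu => ⟨hu.map ((RingHom.fst A B).comp e), hu.map ((RingHom.snd A B).comp e)⟩, ?_⟩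
  rintro ⟨⟨v, hv⟩, ⟨v', hv'⟩⟩
  refine ⟨(vecEquivProd ι e).symm (v, v'), e.injective ?_⟩
  rw [map_sum, map_one]
  refine Prod.ext ?_ ?_
  · simpa [vecEquivProd, Prod.fst_sum] using hv
  · simpa [vecEquivProd, Prod.snd_sum] using hv'

/-- The directions in `Rⁿ` as pairs of directions in `Aⁿ` and `Bⁿ` when `R` splits as `A × B`. -/
def unimodularVecEquivProd (ι : Type*) [Fintype ι] (e : R ≃+* A × B) :
    UnimodularVec ι R ≃ UnimodularVec ι A × UnimodularVec ι B :=
  ((vecEquivProd ι e).subtypeEquiv (isUnimodular_iff_vecEquivProd e)).trans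
    Equiv.subtypeProdEquivProd

end ProductDirections

section Product

variable {n M : ℕ} {A B R : Type*} [CommRing A] [Fintype A] [CommRing B] [Fintype B] [CommRing R]
  [Fintype R] {K K' : ℝ}

/- By the pigeonhole principle, the sum over the line of direction `(u, u')` is concentrated on the
slices over `κ` points of the line of direction `u'` whose sums are at least some `l`. Let `h u z`
be the truncated maximal function of `f · z`. Then `{z | l ≤ h u z}` contains these `κ` points,
which calls for the maximal inequality in `B` with `u` fixed; the one in `A` with `z` fixed bounds
`h`. -/
lemma expect_expect_sum_pow_le [NeZero n] (hA : MaximalBound n A M K)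
    (hB : SetMaximalBound n B K') (hK' : 0 ≤ K') (f : (Fin n → A) → (Fin n → B) → ℕ)
    {α : UnimodularVec (Fin n) A → UnimodularVec (Fin n) B → Fin n → A}
    {β : UnimodularVec (Fin n) A → UnimodularVec (Fin n) B → Fin n → B}
    (hM : ∀ u u' (t : B), ∑ s : A, f (α u u' + s • u.1) (β u u' + t • u'.1) ≤ M) :
    𝔼 u, 𝔼 u', ((∑ t : B, ∑ s : A, f (α u u' + s • u.1) (β u u' + t • u'.1) : ℕ) : ℝ) ^ n ≤
      (Real.log M + 1) ^ n * K * K' * ∑ x, ∑ z, (f x z : ℝ) ^ n := by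
  classical
  let w u u' (t : B) := ∑ s : A, f (α u u' + s • u.1) (β u u' + t • u'.1)
  choose l hlM hl using fun u u' => exists_sum_le_log_mul (hM u u')
  let κ u u' := #{t | l u u' ≤ w u u' t}
  let h (u : UnimodularVec (Fin n) A) z := min M (univ.sup fun a => ∑ s : A, f (a + s • u.1) z)
  have h_le (u z) : h u z ≤ M ∧ ∃ a, h u z ≤ ∑ s : A, f (a + s • u.1) z := by
    obtain ⟨a, -, ha⟩ := exists_mem_eq_sup univ univ_nonempty fun a => ∑ s : A, f (a + s • u.1) z
    exact ⟨min_le_left _ _, a, (min_le_right _ _).trans_eq ha⟩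
  have le_h (u u' t) (ht : l u u' ≤ w u u' t) : l u u' ≤ h u (β u u' + t • u'.1) :=
    le_min (hlM u u') (le_sup_of_le (mem_univ (α u u')) ht)
  have _log_nonneg : 0 ≤ Real.log M + 1 := by positivity
  calc 𝔼 u, 𝔼 u', ((∑ t, w u u' t : ℕ) : ℝ) ^ n
      ≤ 𝔼 u, 𝔼 u', ((Real.log M + 1) * (l u u' * κ u u')) ^ n :=
        expect_le_expect fun u _ => expect_le_expect fun u' _ =>
          pow_le_pow_left₀ (Nat.cast_nonneg _) (hl u u') n
    _ = (Real.log M + 1) ^ n * 𝔼 u, 𝔼 u', (l u u' * κ u u' : ℝ) ^ n := by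
        simp only [mul_pow _ (_ * _), mul_expect]
    _ ≤ (Real.log M + 1) ^ n * 𝔼 u, K' * ∑ z, (h u z : ℝ) ^ n := by
        gcongr with u
        exact hB.expect_mul_pow_le fun u' =>
          ⟨β u u', card_le_card fun t => by simpa using le_h u u' t⟩
    _ = (Real.log M + 1) ^ n * K' * ∑ z, 𝔼 u, (h u z : ℝ) ^ n := by
        rw [← mul_expect, expect_sum_comm, mul_assoc]
    _ ≤ (Real.log M + 1) ^ n * K' * ∑ z, K * ∑ x, (f x z : ℝ) ^ n := by
        gcongr with z
        exact hA (f · z) (h · z) (h_le · z)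
    _ = (Real.log M + 1) ^ n * K * K' * ∑ x, ∑ z, (f x z : ℝ) ^ n := by
        rw [← mul_sum, sum_comm]
        ring

theorem expect_sum_pow_le [NeZero n] (e : R ≃+* A × B) (hA : MaximalBound n A M K)
    (hB : SetMaximalBound n B K') (hK' : 0 ≤ K') (f : (Fin n → R) → ℕ)
    {a : UnimodularVec (Fin n) R → Fin n → R}
    (hM : ∀ u t, ∑ s : A, f (a u + e.symm (s, t) • u.1) ≤ M) :
    𝔼 u, ((∑ s : R, f (a u + s • u.1) : ℕ) : ℝ) ^ n ≤
      (Real.log M + 1) ^ n * K * K' * ∑ x, (f x : ℝ) ^ n := by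
  let E := vecEquivProd (Fin n) e
  let U := unimodularVecEquivProd (Fin n) e
  let a' u u' := a (U.symm (u, u'))
  have symm_add_smul (u u' s t) : E.symm ((E (a' u u')).1 + s • u.1, (E (a' u u')).2 + t • u'.1) =
      a' u u' + e.symm (s, t) • (U.symm (u, u')).1 := by
    have E_symm : E (U.symm (u, u')).1 = (u.1, u'.1) :=
      congrArg (Prod.map Subtype.val Subtype.val) (U.apply_symm_apply (u, u'))
    rw [Equiv.symm_apply_eq, vecEquivProd_add_smul, E_symm]
  have key := expect_expect_sum_pow_le hA hB hK' (fun x z => f (E.symm (x, z)))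
    (α := fun u u' => (E (a' u u')).1) (β := fun u u' => (E (a' u u')).2) fun u u' t => by
      simp only [symm_add_smul]
      exact hM _ t
  simp only [symm_add_smul] at key
  have sum_eq (φ : R → ℕ) : ∑ s, φ s = ∑ t : B, ∑ s : A, φ (e.symm (s, t)) := by
    rw [← Fintype.sum_prod_type_right']
    exact (e.symm.toEquiv.sum_comp φ).symm
  calc 𝔼 u, ((∑ s : R, f (a u + s • u.1) : ℕ) : ℝ) ^ n
      = 𝔼 v : _ × _, ((∑ s : R, f (a (U.symm v) + s • (U.symm v).1) : ℕ) : ℝ) ^ n :=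
        Fintype.expect_equiv U _ _ fun u => by rw [U.symm_apply_apply]
    _ = 𝔼 u, 𝔼 u', ((∑ t : B, ∑ s : A,
          f (a' u u' + e.symm (s, t) • (U.symm (u, u')).1) : ℕ) : ℝ) ^ n := by
        rw [← univ_product_univ, expect_product]
        simp only [sum_eq, a']
    _ ≤ (Real.log M + 1) ^ n * K * K' * ∑ x, ∑ z, (f (E.symm (x, z)) : ℝ) ^ n := key
    _ = (Real.log M + 1) ^ n * K * K' * ∑ x, (f x : ℝ) ^ n := by
        rw [← Fintype.sum_prod_type' fun x z => (f (E.symm (x, z)) : ℝ) ^ n]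
        congr 1
        exact E.symm.sum_comp fun x => (f x : ℝ) ^ n

theorem SetMaximalBound.prod [NeZero n] (e : R ≃+* A × B)
    (hA : MaximalBound n A (Fintype.card A) K) (hB : SetMaximalBound n B K') (hK' : 0 ≤ K') :
    SetMaximalBound n R ((Real.log (Fintype.card A) + 1) ^ n * K * K') := by
  intro g F hg hF
  choose a ha using hF
  refine le_trans ?_ (expect_sum_pow_le e hA hB hK' g (a := a) fun u t => ?_)
  · gcongr with u
    exact ha u
  · simpa using
      sum_le_card_nsmul univ (fun s : A => g (a u + e.symm (s, t) • u.1)) 1 fun s _ => hg _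

end Product

section PrimePowers

variable {n : ℕ} [NeZero n]

lemma mul_le_pow_natCeil_log_div {p : ℕ} (hp : 1 < p) (n m : ℕ) :
    n * m ≤ p ^ ⌈(Real.log m + Real.log n) / Real.log p⌉₊ := by
  obtain rfl | hm := eq_or_ne m 0
  · simp
  obtain rfl | hn := eq_or_ne n 0
  · simp
  rw [← Real.log_mul (by exact_mod_cast hm) (by exact_mod_cast hn), Real.log_div_log,
    ← Nat.cast_mul, Real.natCeil_logb_natCast, mul_comm]
  exact Nat.le_pow_clog hp _

lemma maximalBound_zmod_prime_pow_card {p k : ℕ} (hp : p.Prime) (hk : 1 ≤ k) [NeZero (p ^ k)] :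
    MaximalBound n (ZMod (p ^ k)) (Fintype.card (ZMod (p ^ k)))
      ((2 * (k + Nat.clog p n)) ^ n) := by
  have : Fact p.Prime := ⟨hp⟩
  have h := maximalBound_zmod_prime_pow (n := n) (p := p) hk (c := k + Nat.clog p n) (M := p ^ k)
    (hk.trans (Nat.le_add_right _ _)) (by
      rw [pow_add, mul_comm]
      exact Nat.mul_le_mul_left _ (Nat.le_pow_clog hp.one_lt n))
  rw [ZMod.card]
  exact_mod_cast h

lemma coprime_pow_prod_pow {ι : Type*} {p : ι → ℕ} (k : ι → ℕ) (hp : ∀ i, (p i).Prime)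
    (hpd : Function.Injective p) {l : ι} {s : Finset ι} (hl : l ∉ s) :
    Nat.Coprime (p l ^ k l) (∏ j ∈ s, p j ^ k j) :=
  Nat.Coprime.prod_right fun j hj => Nat.Coprime.pow _ _ <|
    (Nat.coprime_primes (hp l) (hp j)).2 fun h => hl (hpd h ▸ hj)

theorem setMaximalBound_zmod_mul_prod {ι : Type*} {p k : ι → ℕ} (hp : ∀ i, (p i).Prime)
    (hpd : Function.Injective p) (hk : ∀ i, 1 ≤ k i) {l : ι} {s : Finset ι} (hl : l ∉ s) {N : ℕ}
    [NeZero N] (hN : N = p l ^ k l * ∏ j ∈ s, p j ^ k j) :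
    SetMaximalBound n (ZMod N) ((2 * (k l + Nat.clog (p l) n) *
      ∏ j ∈ s, (2 * (k j * Real.log (p j) + 1) * (k j + Nat.clog (p j) n))) ^ n) := by
  classical
  have pow_neZero (j) : NeZero (p j ^ k j) := ⟨(pow_pos (hp j).pos _).ne'⟩
  induction s using Finset.induction_on generalizing N with
  | empty =>
    obtain rfl : N = p l ^ k l := by simpa using hN
    simpa using (maximalBound_zmod_prime_pow_card (n := n) (hp l) (hk l)).setMaximalBound
  | insert i s hi ih =>
    obtain ⟨hli, hls⟩ : l ≠ i ∧ l ∉ s := by simpa using hl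
    let N' := p l ^ k l * ∏ j ∈ s, p j ^ k j
    have : NeZero N' := ⟨(mul_pos (pow_pos (hp l).pos _)
      (prod_pos fun j _ => pow_pos (hp j).pos _)).ne'⟩
    have hN' : N = p i ^ k i * N' := by rw [hN, prod_insert hi, mul_left_comm]
    have coprime : Nat.Coprime (p i ^ k i) N' := by
      unfold N'
      rw [← prod_insert (f := fun j => p j ^ k j) hls]
      exact coprime_pow_prod_pow k hp hpd (by simp [hi, hli.symm])
    let e := (ZMod.ringEquivCongr hN').trans (ZMod.chineseRemainder coprime)
    have h := SetMaximalBound.prod e (maximalBound_zmod_prime_pow_card (n := n) (hp i) (hk i))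
      (ih hls rfl) (by positivity)
    convert h using 1
    rw [prod_insert hi, ZMod.card, Nat.cast_pow, Real.log_pow, ← mul_pow, ← mul_pow]
    ring

end PrimePowers

section ProjRepSet

variable {N n : ℕ} [NeZero N] {P : Finset (Fin n → ZMod N)}

lemma expect_eq_expect_of_isProjRepSet {G : (Fin n → ZMod N) → ℝ} (hP : IsProjRepSet N n P)
    (hG : ∀ (c : (ZMod N)ˣ) v, G ((c : ZMod N) • v) = G v) :
    𝔼 u : UnimodularVec (Fin n) (ZMod N), G u.1 = 𝔼 v ∈ P, G v := by
  have isUnimodular_smul (v : P) (c : (ZMod N)ˣ) : IsUnimodular ((c : ZMod N) • v.1) := by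
    obtain ⟨y, hy⟩ := hP.1 v v.2
    refine ⟨(c⁻¹ : (ZMod N)ˣ).val • y, ?_⟩
    simpa [mul_mul_mul_comm, ← mul_sum] using hy
  let φ (x : P × (ZMod N)ˣ) : UnimodularVec (Fin n) (ZMod N) := ⟨_, isUnimodular_smul x.1 x.2⟩
  have bijective : Function.Bijective φ := by
    refine ⟨fun ⟨v, c⟩ ⟨v', c'⟩ h => ?_, fun ⟨u, hu⟩ => ?_⟩
    · have h : (c : ZMod N) • v.1 = (c' : ZMod N) • v'.1 := congrArg Subtype.val h
      obtain ⟨w, -, hw⟩ := hP.2 _ (isUnimodular_smul v c)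
      obtain rfl : v = v' :=
        Subtype.ext ((hw _ ⟨v.2, c, rfl⟩).trans (hw _ ⟨v'.2, c', h⟩).symm)
      obtain ⟨y, hy⟩ := hP.1 v v.2
      have hc : (c : ZMod N) = c' := by
        have := congrArg (fun x : Fin n → ZMod N => ∑ i, y i * x i) h
        simpa [mul_left_comm, ← mul_sum, hy] using this
      rw [Units.ext hc]
    · obtain ⟨w, ⟨hw, c, rfl⟩, -⟩ := hP.2 u hu
      exact ⟨(⟨w, hw⟩, c), rfl⟩
  calc 𝔼 u : UnimodularVec (Fin n) (ZMod N), G u.1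
      = 𝔼 x : P × (ZMod N)ˣ, G (φ x).1 :=
        (Fintype.expect_bijective φ bijective _ _ fun _ => rfl).symm
    _ = 𝔼 v : P, G v := by
        simp only [φ, hG]
        rw [← univ_product_univ, expect_product]
        simp only [Fintype.expect_const]
    _ = 𝔼 v ∈ P, G v := by rw [univ_eq_attach, expect, sum_attach P G, card_attach, expect]

lemma fstar_smul (f : (Fin n → ZMod N) → ℕ) (c : (ZMod N)ˣ) (u : Fin n → ZMod N) :
    fstar f ((c : ZMod N) • u) = fstar f u := by
  refine sup_congr rfl fun a _ => ?_
  simp only [smul_smul]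
  exact Equiv.sum_comp (Units.mulRight c) fun t => f (a + t • u)

theorem expect_fstar_pow_le [NeZero n] {A B : Type*} [CommRing A] [Fintype A] [CommRing B]
    [Fintype B] (e : ZMod N ≃+* A × B) {M : ℕ} {K K' : ℝ} (hA : MaximalBound n A M K)
    (hB : SetMaximalBound n B K') (hK' : 0 ≤ K') (hP : IsProjRepSet N n P)
    {f : (Fin n → ZMod N) → ℕ} {a : (Fin n → ZMod N) → Fin n → ZMod N}
    (ha : ∀ u ∈ P, ∑ t : ZMod N, f (a u + t • u) = fstar f u)
    (hM : ∀ u ∈ P, ∀ t, ∑ s : A, f (a u + e.symm (s, t) • u) ≤ M) :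
    𝔼 u ∈ P, (fstar f u : ℝ) ^ n ≤ (Real.log M + 1) ^ n * K * K' * ∑ x, (f x : ℝ) ^ n := by
  choose w hw c hc using fun u : UnimodularVec (Fin n) (ZMod N) => (hP.2 u.1 u.2).exists
  have sum_eq (u) : ∑ t : ZMod N, f (a (w u) + t • u.1) = fstar f u.1 := by
    rw [hc u, fstar_smul, ← ha _ (hw u)]
    simp only [smul_smul]
    exact Equiv.sum_comp (Units.mulRight (c u)) fun t => f (a (w u) + t • w u)
  have slice_le (u t) : ∑ s : A, f (a (w u) + e.symm (s, t) • u.1) ≤ M := by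
    let d := Units.map (e : ZMod N →* A × B) (c u)
    have symm_smul (s) : e.symm (s, t) • u.1 = e.symm (s * d.1.1, t * d.1.2) • w u := by
      have : e.symm (s, t) * c u = e.symm (s * d.1.1, t * d.1.2) := by
        rw [RingEquiv.eq_symm_apply, map_mul, RingEquiv.apply_symm_apply]
        rfl
      rw [← this, ← smul_smul, ← hc u]
    simp only [symm_smul]
    have := Equiv.sum_comp (Units.mulRight (Units.map (MonoidHom.fst A B) d)) fun s =>
      f (a (w u) + e.symm (s, t * d.1.2) • w u)
    exact this.trans_le (hM _ (hw u) _)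
  rw [← expect_eq_expect_of_isProjRepSet hP fun c v => by rw [fstar_smul]]
  simp only [← sum_eq]
  exact expect_sum_pow_le e hA hB hK' f slice_le

end ProjRepSet

section Slices

lemma exists_eq_mul_of_ringHom_eq_zero {N N' : ℕ} [NeZero N] (e : ZMod N →+* ZMod N') {x : ZMod N}
    (hx : e x = 0) : ∃ c : ZMod N, x = c * N' := by
  rw [← ZMod.natCast_zmod_val x, map_natCast, ZMod.natCast_eq_zero_iff] at hx
  obtain ⟨q, hq⟩ := hx
  exact ⟨q, by rw [← ZMod.natCast_zmod_val x, hq, Nat.cast_mul, mul_comm]⟩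

lemma sum_symm_le_sum_filter {A : Type*} [CommRing A] [Fintype A] {N N' : ℕ} [NeZero N]
    (e : ZMod N ≃+* A × ZMod N') (φ : ZMod N → ℕ) (t : ZMod N')
    [DecidablePred fun x : ZMod N => ∃ c : ZMod N, x - e.symm (0, t) = c * N'] :
    ∑ s : A, φ (e.symm (s, t)) ≤ ∑ x with ∃ c : ZMod N, x - e.symm (0, t) = c * N', φ x := by
  classical
  have injective : Function.Injective fun s => e.symm (s, t) := fun s s' h =>
    (Prod.ext_iff.1 (e.symm.injective h)).1
  rw [← sum_image (g := fun s => e.symm (s, t)) injective.injOn]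
  refine sum_le_sum_of_subset fun x hx => ?_
  obtain ⟨s, -, rfl⟩ := mem_image.1 hx
  rw [mem_filter_univ]
  exact exists_eq_mul_of_ringHom_eq_zero ((RingHom.snd A (ZMod N')).comp e) (by simp)

end Slices

section Main

lemma intCast_ceil_log_div (p n : ℕ) :
    ((⌈Real.log n / Real.log p⌉ : ℤ) : ℝ) = Nat.clog p n := by
  rw [← natCast_ceil_eq_intCast_ceil (by positivity), Real.log_div_log, Real.natCeil_logb_natCast]

lemma filter_ne_zero_eq_insert_last {r : ℕ} (hr : 2 ≤ r) :
    ({j | j ≠ ⟨0, by lia⟩} : Finset (Fin r)) =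
      insert ⟨r - 1, by lia⟩ ({j | 0 < (j : ℕ) ∧ (j : ℕ) < r - 1} : Finset (Fin r)) := by
  ext j
  simp only [mem_filter_univ, mem_insert, Fin.ext_iff, ne_eq]
  lia

theorem inv_mul_expect_fstar_pow_le {N n p k N' M : ℕ} [NeZero N] [NeZero n] [NeZero N']
    (hp : p.Prime) (hk : 1 ≤ k) (hN : N = p ^ k * N') (coprime : Nat.Coprime (p ^ k) N') {K : ℝ}
    (hB : SetMaximalBound n (ZMod N') K) (hK : 0 ≤ K) {P : Finset (Fin n → ZMod N)}
    (hP : IsProjRepSet N n P) {f : (Fin n → ZMod N) → ℕ} {a : (Fin n → ZMod N) → Fin n → ZMod N}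
    (ha : ∀ u ∈ P, ∑ t : ZMod N, f (a u + t • u) = fstar f u)
    (hM : ∀ u ∈ P, ∀ s : ZMod N,
      ∑ t with ∃ c : ZMod N, t - s = c * (N' : ZMod N), f (a u + t • u) ≤ M) :
    ((2 * (Real.log M + 1) * ⌈(Real.log M + Real.log n) / Real.log p⌉₊) ^ n * K)⁻¹ *
      𝔼 u ∈ P, (fstar f u : ℝ) ^ n ≤ ∑ x, (f x : ℝ) ^ n := by
  have : Fact p.Prime := ⟨hp⟩
  have : NeZero (p ^ k) := ⟨(pow_pos hp.pos k).ne'⟩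
  obtain hc | hc := Nat.eq_zero_or_pos ⌈(Real.log M + Real.log n) / Real.log p⌉₊
  · rw [hc, Nat.cast_zero, mul_zero, zero_pow (NeZero.ne n), zero_mul, inv_zero, zero_mul]
    positivity
  have hA : MaximalBound n (ZMod (p ^ k)) M _ :=
    maximalBound_zmod_prime_pow hk hc (mul_le_pow_natCeil_log_div hp.one_lt n M)
  let e := (ZMod.ringEquivCongr hN).trans (ZMod.chineseRemainder coprime)
  refine inv_mul_le_of_le_mul₀ (by positivity) (by positivity) ?_
  refine (expect_fstar_pow_le e hA hB hK hP ha fun u hu t => ?_).trans_eq ?_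
  · exact (sum_symm_le_sum_filter e (fun t => f (a u + t • u)) t).trans (hM u hu _)
  · rw [mul_right_comm 2, mul_comm (2 * _) (_ + _), mul_pow (_ + 1)]

end Main

end KakeyaZMod

open KakeyaZMod

/- In the theorem below, `a u` is the base point of a chosen line `L(u) = {a u + t•u}`
attaining `f*(u)` (hypothesis `ha`).  `N' = N / p₁^{k₁}`, and `mw` is the `p₁`-maximal
weight `mweight(f, p₁)`: for each direction `u` and each point `z = a u + s•u` of `L(u)`,
the piece `L_{p₁}(u) × {z}` of `L(u)` consists of the points `a u + t•u` with
`t ≡ s (mod N')`, and `mw` is the largest value of `∑_{x ∈ L_{p₁}(u) × {z}} f(x)`. -/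
theorem stmt4 (n r : ℕ) (hn : 1 ≤ n) (hr : 2 ≤ r)
    (p k : Fin r → ℕ) (hp : ∀ i, (p i).Prime) (hpd : Function.Injective p)
    (hk : ∀ i, 1 ≤ k i) (N : ℕ) [NeZero N] (hN : N = ∏ i, p i ^ k i)
    (P : Finset (Fin n → ZMod N)) (hP : IsProjRepSet N n P)
    (f : (Fin n → ZMod N) → ℕ) (hf : ∃ x, f x ≠ 0)
    (a : (Fin n → ZMod N) → (Fin n → ZMod N))
    (ha : ∀ u ∈ P, ∑ t : ZMod N, f (a u + t • u) = fstar f u)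
    (N' : ℕ)
    (hN' : N' = ∏ j ∈ Finset.univ.filter (fun j : Fin r => j ≠ ⟨0, by omega⟩), p j ^ k j)
    (mw : ℕ)
    (hmw : mw = P.sup fun u => Finset.univ.sup fun s : ZMod N =>
      ∑ t ∈ Finset.univ.filter (fun t : ZMod N => ∃ c : ZMod N, t - s = c * (N' : ZMod N)),
        f (a u + t • u)) :
    (∑ x : Fin n → ZMod N, (f x : ℝ) ^ n) ≥
      ((1 / (2 * (Real.log mw + 1) *
          ((⌈(Real.log mw + Real.log n) / Real.log (p ⟨0, by omega⟩)⌉ : ℤ) : ℝ))) ^ n) *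
      ((1 / (2 * ((k ⟨r - 1, by omega⟩ : ℝ) +
            ((⌈Real.log n / Real.log (p ⟨r - 1, by omega⟩)⌉ : ℤ) : ℝ))) *
        ∏ j ∈ Finset.univ.filter (fun j : Fin r => 0 < (j : ℕ) ∧ (j : ℕ) < r - 1),
          1 / (2 * ((k j : ℝ) * Real.log (p j) + 1) *
            ((k j : ℝ) + ((⌈Real.log n / Real.log (p j)⌉ : ℤ) : ℝ)))) ^ n) *
      (P.card : ℝ)⁻¹ * ∑ u ∈ P, (fstar f u : ℝ) ^ n := by
  have : NeZero n := ⟨by omega⟩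
  have hN'_eq : N' = p ⟨r - 1, by omega⟩ ^ k ⟨r - 1, by omega⟩ *
      ∏ j with 0 < (j : Fin r).val ∧ j.val < r - 1, p j ^ k j := by
    rw [hN', filter_ne_zero_eq_insert_last hr, prod_insert (by simp)]
  have hN_eq : N = p ⟨0, by omega⟩ ^ k ⟨0, by omega⟩ * N' := by
    rw [hN', filter_ne', mul_prod_erase univ (fun j => p j ^ k j) (mem_univ _), ← hN]
  have : NeZero N' := ⟨right_ne_zero_of_mul (hN_eq ▸ NeZero.ne N)⟩
  have coprime : Nat.Coprime (p ⟨0, by omega⟩ ^ k ⟨0, by omega⟩) N' :=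
    hN' ▸ coprime_pow_prod_pow k hp hpd (by simp)
  have slice_le (u) (hu : u ∈ P) (s : ZMod N) :
      ∑ t with ∃ c : ZMod N, t - s = c * (N' : ZMod N), f (a u + t • u) ≤ mw :=
    hmw ▸ le_sup_of_le hu (le_sup (f := fun s : ZMod N =>
      ∑ t with ∃ c : ZMod N, t - s = c * (N' : ZMod N), f (a u + t • u)) (mem_univ s))
  have key := inv_mul_expect_fstar_pow_le (hp _) (hk _) hN_eq coprime
    (setMaximalBound_zmod_mul_prod hp hpd hk (by simp) hN'_eq) (by positivity) hP ha slice_le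
  refine ge_iff_le.2 (le_of_eq_of_le ?_ key)
  simp only [intCast_ceil_log_div, one_div, prod_inv_distrib, ← mul_inv, inv_pow,
    expect_eq_sum_div_card]
  rw [← natCast_ceil_eq_intCast_ceil (by positivity)]
  ring
end

section
/- For every ε > 0 and every integer n ≥ 1 there exists a constant C_{n,ε} such that for every N ≥ 1 and every choice of a line L(u) ⊆ (ℤ/Nℤ)ⁿ in direction u for each direction u ∈ ℙ(ℤ/Nℤ)^{n-1}, the function h = ∑_{u ∈ ℙ(ℤ/Nℤ)^{n-1}} 1_{L(u)} on (ℤ/Nℤ)ⁿ satisfies ( ∑_{x ∈ (ℤ/Nℤ)ⁿ} h(x)^{n/(n-1)} )^{(n-1)/n} ≤ C_{n,ε} · N^{ε} · ( ∑_{u ∈ ℙ(ℤ/Nℤ)^{n-1}} |L(u)| )^{(n-1)/n}. -/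
/-- The line `{a + t·u : t ∈ ℤ/Nℤ}` in `(ℤ/Nℤ)ⁿ`, as a finite set. -/
def lineF {N n : ℕ} [NeZero N] (a u : Fin n → ZMod N) : Finset (Fin n → ZMod N) :=
  Finset.image (fun t : ZMod N => a + t • u) Finset.univ

/-!
By duality the inequality is the `ℓⁿ` bound, with constant `C * N ^ (n - 1 + n * ε)`, for the Kakeya
maximal function over `ℤ/Nℤ`.

Modulo a prime power `q = p ^ k` this is proved with polynomials evaluated at `q`-th roots of unity
`e x` in a valuation ring `V` of residue characteristic `p`. If many lines, in directions `v` with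
`v i₀ = 1`, met a small set `E` in at least `m` points each, linear algebra would give a nontrivial
combination, with coefficients in `V`, of suitable functions of `e ∘ x` that vanishes on `E`.
Dividing by the coefficient of least valuation, it stays nontrivial over the residue field. On a
line it becomes a one-variable polynomial with `m` distinct roots of unity among its roots, and all
of these reduce to `1`, so its reduction is divisible by `(X - 1) ^ m`; the functions are chosen so
that these divisibilities for all directions contradict each other. Decomposing functions
dyadically turns this count into the maximal bound with a loss polynomial in `log q`.

Summed over all unimodular vectors instead of projective directions, the maximal bound is
multiplicative over products of rings, so the Chinese remainder theorem multiplies the prime-power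
constants. These exceed `q ^ (n - 1 + n * ε)` for only finitely many prime powers `q`.
-/

section Polynomial

open Finset Polynomial

section ValuationRing

variable {O : Type*} [CommRing O] [IsDomain O] [ValuationRing O]

lemma exists_forall_dvd {ι : Type*} [Finite ι] [Nonempty ι] (c : ι → O) :
    ∃ i, ∀ j, c i ∣ c j := by
  have hdir : Directed (fun x y => y ∣ x) c := fun i j =>
    (ValuationRing.dvd_total (c i) (c j)).elim (fun h => ⟨i, dvd_rfl, h⟩) fun h => ⟨j, h, dvd_rfl⟩
  exact hdir.finite_le id

lemma exists_sum_mul_eq_zero_of_card_lt {α β : Type*} [Fintype α] {E : Finset β}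
    (hE : #E < Fintype.card α) (B : α → β → O) :
    ∃ c : α → O, (∃ i, c i = 1) ∧ ∀ x ∈ E, ∑ i, c i * B i x = 0 := by
  let L : (α → O) →ₗ[O] (E → O) := Fintype.linearCombination O fun i (x : E) => B i x
  have hL : ¬ Function.Injective L := fun h => by
    have := card_le_of_injective O L h
    rw [Fintype.card_coe] at this
    exact hE.not_ge this
  obtain ⟨c, hc, hc0⟩ : ∃ c, L c = 0 ∧ c ≠ 0 := by
    simpa [← LinearMap.ker_eq_bot, Submodule.eq_bot_iff] using hL
  obtain ⟨l, hl⟩ := Function.ne_iff.1 hc0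
  have : Nonempty α := ⟨l⟩
  obtain ⟨i, hi⟩ := exists_forall_dvd c
  choose b hb using hi
  have hci : c i ≠ 0 := fun h => hl <| by rw [hb l, h, zero_mul, Pi.zero_apply]
  refine ⟨b, ⟨i, mul_left_cancel₀ hci <| by rw [← hb, mul_one]⟩, fun x hx => ?_⟩
  have hx : ∑ j, c j * B j x = 0 := by
    simpa [L, Fintype.linearCombination_apply] using congrFun hc ⟨x, hx⟩
  refine (mul_eq_zero_iff_left hci).1 ?_
  rw [← hx, mul_sum]
  exact sum_congr rfl fun j _ => by rw [hb j, mul_assoc]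

end ValuationRing

lemma X_sub_C_pow_card_dvd_map {O κ : Type*} [CommRing O] [IsDomain O] [CommRing κ] (φ : O →+* κ)
    {G : O[X]} {T : Finset O} {b : κ} (hroot : ∀ τ ∈ T, G.IsRoot τ) (hφ : ∀ τ ∈ T, φ τ = b) :
    (X - C b) ^ #T ∣ G.map φ := by
  have hdvd : ∏ τ ∈ T, (X - C τ) ∣ G := by
    rcases eq_or_ne G 0 with rfl | hG
    · exact dvd_zero _
    · refine (Multiset.prod_X_sub_C_dvd_iff_le_roots hG T.val).2 <|
        (Multiset.le_iff_subset T.nodup).2 fun τ hτ => (mem_roots hG).2 (hroot τ hτ)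
  have hprod : (∏ τ ∈ T, (X - C τ)).map φ = (X - C b) ^ #T := by
    rw [Polynomial.map_prod]
    exact prod_eq_pow_card fun τ hτ => by simp [hφ τ hτ]
  exact hprod ▸ Polynomial.map_dvd φ hdvd

lemma exists_valuationSubring_isPrimitiveRoot (p : ℕ) [Fact p.Prime] (k : ℕ) :
    ∃ (V : ValuationSubring (PadicAlgCl p)) (ζ : V),
      CharP (IsLocalRing.ResidueField V) p ∧ IsPrimitiveRoot ζ (p ^ k) := by
  have hp : p.Prime := Fact.out
  let V : ValuationSubring (PadicAlgCl p) := (PadicAlgCl.valued p).v.valuationSubring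
  have : NeZero (p ^ k) := ⟨pow_ne_zero _ hp.ne_zero⟩
  obtain ⟨ζ, hζ⟩ := HasEnoughRootsOfUnity.exists_primitiveRoot (PadicAlgCl p) (p ^ k)
  have hζV : ζ ∈ V := by
    refine (Valuation.mem_valuationSubring_iff _ _).2 <|
      (pow_le_one_iff_of_nonneg zero_le (NeZero.ne (p ^ k))).1 ?_
    rw [← map_pow, hζ.pow_eq_one, map_one]
  have hpV : (p : V) ∈ IsLocalRing.maximalIdeal V := by
    refine (Valuation.mem_maximalIdeal_iff (PadicAlgCl p) _).2 ?_
    have : (1 : NNReal) < p := mod_cast hp.one_lt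
    calc (PadicAlgCl.valued p).v (p : PadicAlgCl p) = 1 / p := PadicAlgCl.valuation_p p
      _ < 1 := (div_lt_one₀ (zero_lt_one.trans this)).2 this
  refine ⟨V, ⟨ζ, hζV⟩, ringChar.eq_iff.1 (CharP.ringChar_of_prime_eq_zero hp ?_),
    hζ.of_map_of_injective (f := V.subtype) Subtype.val_injective⟩
  rw [← map_natCast (IsLocalRing.residue V), IsLocalRing.residue_eq_zero_iff]
  exact hpV

lemma rootMultiplicity_prod {ι R : Type*} [CommRing R] [IsDomain R] {s : Finset ι} {f : ι → R[X]}
    (hf : ∀ i ∈ s, f i ≠ 0) (a : R) :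
    rootMultiplicity a (∏ i ∈ s, f i) = ∑ i ∈ s, rootMultiplicity a (f i) := by
  classical
  simp_rw [← count_roots, roots_prod f s (prod_ne_zero_iff.2 hf), Multiset.count_bind]
  rfl

lemma X_pow_sub_X_pow_ne_zero {R : Type*} [Ring R] [Nontrivial R] {i u : ℕ} (h : i < u) :
    (X ^ u - X ^ i : R[X]) ≠ 0 :=
  sub_ne_zero.2 fun he => h.ne' <| by simpa using congrArg natDegree he

section CharP

variable {κ : Type*} [Field κ] {p : ℕ} [Fact p.Prime] [CharP κ p]

lemma rootMultiplicity_one_X_pow_sub_one_le {s : ℕ} (hs : s ≠ 0) :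
    rootMultiplicity 1 (X ^ s - 1 : κ[X]) ≤ ordProj[p] s := by
  have hp : p.Prime := Fact.out
  set e := ordProj[p] s
  set m := ordCompl[p] s
  have hpow : (X ^ s - 1 : κ[X]) = (X ^ m - 1) ^ e := by
    rw [sub_pow_char_pow, one_pow, ← pow_mul, mul_comm, Nat.ordProj_mul_ordCompl_eq_self]
  have hsep : (X ^ m - 1 : κ[X]).Separable :=
    X_pow_sub_one_separable_iff.2 <|
      mt (CharP.cast_eq_zero_iff κ p m).1 (Nat.not_dvd_ordCompl hp hs)
  classical
  rw [hpow, ← count_roots, roots_pow, Multiset.count_nsmul, count_roots]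
  exact (Nat.mul_le_mul_left _ (rootMultiplicity_le_one_of_separable hsep 1)).trans_eq (mul_one _)

lemma sum_ordProj_le {d k : ℕ} (hd : d < p ^ k) : ∑ s ∈ Icc 1 d, ordProj[p] s ≤ k * d := by
  have hp : p.Prime := Fact.out
  have hle : ∀ s ∈ Icc 1 d, ordProj[p] s ≤ ∑ i ∈ range k with p ^ i ∣ s, p ^ i := by
    intro s hs
    rw [mem_Icc] at hs
    refine single_le_sum (f := (p ^ ·)) (fun _ _ => Nat.zero_le _) ?_
    refine mem_filter.2 ⟨mem_range.2 ?_, Nat.ordProj_dvd s p⟩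
    exact (Nat.pow_lt_pow_iff_right hp.one_lt).1 <|
      (Nat.ordProj_le p (by lia)).trans_lt (hs.2.trans_lt hd)
  calc ∑ s ∈ Icc 1 d, ordProj[p] s
      ≤ ∑ s ∈ Icc 1 d, ∑ i ∈ range k, if p ^ i ∣ s then p ^ i else 0 := by
        simpa only [sum_filter] using sum_le_sum hle
    _ = ∑ i ∈ range k, d / p ^ i * p ^ i := by
        rw [sum_comm]
        refine sum_congr rfl fun i _ => ?_
        rw [← sum_filter, sum_const, smul_eq_mul, ← Nat.Ioc_filter_dvd_card_eq_div]
        rfl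
    _ ≤ ∑ _i ∈ range k, d := sum_le_sum fun i _ => Nat.div_mul_le_self d _
    _ = k * d := by simp

lemma rootMultiplicity_one_prod_X_pow_sub_X_pow_le {t u k : ℕ} (hu : u < p ^ k) :
    rootMultiplicity 1 (∏ i ∈ Ico t u, (X ^ u - X ^ i : κ[X])) ≤ k * (u - t) := by
  have hne : ∀ i ∈ Ico t u, (X ^ u - X ^ i : κ[X]) ≠ 0 := fun i hi =>
    X_pow_sub_X_pow_ne_zero (mem_Ico.1 hi).2
  calc rootMultiplicity 1 (∏ i ∈ Ico t u, (X ^ u - X ^ i : κ[X]))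
      = ∑ i ∈ Ico t u, rootMultiplicity 1 (X ^ u - X ^ i : κ[X]) := rootMultiplicity_prod hne 1
    _ ≤ ∑ i ∈ Ico t u, ordProj[p] (u - i) := by
        refine sum_le_sum fun i hi => ?_
        have hiu := (mem_Ico.1 hi).2
        have hfac : (X ^ u - X ^ i : κ[X]) = X ^ i * (X ^ (u - i) - 1) := by
          rw [mul_sub, ← pow_add, mul_one, Nat.add_sub_cancel' hiu.le]
        have hX : rootMultiplicity 1 (X ^ i : κ[X]) = 0 := rootMultiplicity_eq_zero (by simp)
        rw [hfac, rootMultiplicity_mul (hfac ▸ hne i hi), hX, zero_add]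
        exact rootMultiplicity_one_X_pow_sub_one_le (Nat.sub_ne_zero_of_lt hiu)
    _ = ∑ s ∈ Icc 1 (u - t), ordProj[p] s := by
        refine sum_bij' (fun i _ => u - i) (fun s _ => u - s) ?_ ?_ ?_ ?_ fun _ _ => rfl <;>
          simp only [mem_Ico, mem_Icc] <;> lia
    _ ≤ k * (u - t) := sum_ordProj_le ((Nat.sub_le u t).trans_lt hu)

end CharP

/-- The product of `y l - z ^ i` over all coordinates `l` and all `i` in the window
`t l ≤ i < w l`. For fixed `t`, at `z = X` and `y l = X ^ u l` with `t ≤ u` it vanishes unless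
`w ≤ u`, so these products form a triangular family in `w`. -/
def windowProd {σ R : Type*} [Fintype σ] [CommRing R] (t w : σ → ℕ) (z : R) (y : σ → R) : R :=
  ∏ l, ∏ i ∈ Ico (t l) (w l), (y l - z ^ i)

section windowProd

variable {σ : Type*} [Fintype σ] {t u w : σ → ℕ}

lemma map_windowProd {R S : Type*} [CommRing R] [CommRing S] (f : R →+* S) (t w : σ → ℕ) (z : R)
    (y : σ → R) : f (windowProd t w z y) = windowProd t w (f z) (f ∘ y) := by
  simp [windowProd, map_prod]

lemma windowProd_pow_eq_zero {R : Type*} [CommRing R] (z : R) (htu : t ≤ u) (hwu : ¬ w ≤ u) :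
    windowProd t w z (fun l => z ^ u l) = 0 := by
  obtain ⟨l, hl⟩ := not_forall.1 hwu
  refine prod_eq_zero (mem_univ l) (prod_eq_zero (mem_Ico.2 ⟨htu l, not_le.1 hl⟩) (sub_self _))

variable {κ : Type*} [Field κ]

lemma windowProd_X_pow_self_ne_zero (t u : σ → ℕ) :
    windowProd t u (X : κ[X]) (fun l => X ^ u l) ≠ 0 :=
  prod_ne_zero_iff.2 fun _ _ => prod_ne_zero_iff.2 fun _ hi =>
    X_pow_sub_X_pow_ne_zero (mem_Ico.1 hi).2

lemma rootMultiplicity_one_windowProd_le {p k d : ℕ} [Fact p.Prime] [CharP κ p]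
    (hud : ∀ l, u l ≤ t l + d) (hu : ∀ l, u l < p ^ k) :
    rootMultiplicity 1 (windowProd t u (X : κ[X]) fun l => X ^ u l) ≤
      Fintype.card σ * (k * d) := by
  rw [windowProd, rootMultiplicity_prod
    (prod_ne_zero_iff.1 (windowProd_X_pow_self_ne_zero t u)), ← smul_eq_mul, ← card_univ]
  refine sum_le_card_nsmul _ _ _ fun l _ => ?_
  refine (rootMultiplicity_one_prod_X_pow_sub_X_pow_le (hu l)).trans (Nat.mul_le_mul_left k ?_)
  exact Nat.sub_le_iff_le_add'.2 (hud l)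

lemma eq_zero_of_forall_X_sub_one_pow_dvd {ι : Type*} [Fintype ι] {p k d m M : ℕ} [Fact p.Prime]
    [CharP κ p] {w : ι → σ → ℕ} (hw : Function.Injective w) (htw : ∀ i, t ≤ w i)
    (hwd : ∀ i l, w i l ≤ t l + d) (hwk : ∀ i l, w i l < p ^ k)
    (hM : M + Fintype.card σ * (k * d) ≤ m) {r : ι → κ[X]} (hr : ∀ i, (r i).degree < M)
    (hdvd : ∀ i, (X - 1) ^ m ∣ ∑ j, r j * windowProd t (w j) X fun l => X ^ w i l) (i : ι) :
    r i = 0 := by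
  by_contra! hi
  obtain ⟨u, hu, hmin⟩ := exists_minimalFor_of_wellFoundedLT (r · ≠ 0) w ⟨i, hi⟩
  have hsum : ∑ j, r j * windowProd t (w j) X (fun l => X ^ w u l) =
      r u * windowProd t (w u) X fun l => X ^ w u l := by
    refine Fintype.sum_eq_single u fun j hju => ?_
    by_cases hj : r j = 0
    · rw [hj, zero_mul]
    · rw [windowProd_pow_eq_zero X (htw u) fun hle => hju (hw (hle.antisymm (hmin hj hle))),
        mul_zero]
  have hne : r u * windowProd t (w u) X (fun l => X ^ w u l) ≠ 0 :=
    mul_ne_zero hu (windowProd_X_pow_self_ne_zero t (w u))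
  have hm : m ≤ rootMultiplicity 1 (r u) + Fintype.card σ * (k * d) := calc
    m ≤ rootMultiplicity 1 (r u * windowProd t (w u) X fun l => X ^ w u l) :=
        (le_rootMultiplicity_iff hne).2 (hsum ▸ hdvd u)
    _ ≤ _ := by
        rw [rootMultiplicity_mul hne]
        exact Nat.add_le_add_left (rootMultiplicity_one_windowProd_le (hwd u) (hwk u)) _
  have hru : rootMultiplicity 1 (r u) < M := by
    classical
    rw [← count_roots]
    exact ((Multiset.count_le_card _ _).trans (card_roots' _)).trans_lt <|
      (natDegree_lt_iff_degree_lt hu).2 (hr u)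
  lia

end windowProd

section CountingLines

lemma windows_mul_le {D m q : ℕ} (hD : 0 < D) (hq : 0 < q) (hm : m ≤ q) :
    ((q - 1) / (m / D + 1) + 1) * m ≤ 2 * D * q := by
  have hdiv : (q - 1) / (m / D + 1) * (m / D + 1) ≤ q - 1 := Nat.div_mul_le_self _ _
  have hmD : m / D ≤ q := (Nat.div_le_self _ _).trans hm
  calc ((q - 1) / (m / D + 1) + 1) * m
      ≤ ((q - 1) / (m / D + 1) + 1) * (D * (m / D + 1)) :=
        Nat.mul_le_mul_left _ (Nat.lt_mul_div_succ m hD).le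
    _ = D * ((q - 1) / (m / D + 1) * (m / D + 1) + (m / D + 1)) := by ring
    _ ≤ D * (2 * q) := Nat.mul_le_mul_left D (by lia)
    _ = 2 * D * q := by ring

variable {p k : ℕ} [Fact p.Prime] {σ : Type*} [Fintype σ]

lemma map_addChar_zmod_eq_one {O κ : Type*} [CommRing O] [Field κ] [CharP κ p] (φ : O →+* κ)
    (e : AddChar (ZMod (p ^ k)) O) (x : ZMod (p ^ k)) : φ (e x) = 1 := by
  have hpow : e x ^ p ^ k = 1 := by
    rw [← e.map_nsmul_eq_pow, nsmul_eq_mul, CharP.cast_eq_zero, zero_mul, e.map_zero_eq_one]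
  have := ExpChar.pow_prime_pow_mul_eq_one_iff p k 1 (φ (e x))
  rwa [mul_one, pow_one, ← map_pow, hpow, map_one, eq_self, true_iff] at this

lemma zmodChar_injective {O : Type*} [CommRing O] {N : ℕ} [NeZero N] {ζ : O}
    (hζ : IsPrimitiveRoot ζ N) : Function.Injective (AddChar.zmodChar N hζ.pow_eq_one) :=
  fun x y hxy => ZMod.val_injective _ (hζ.pow_inj (ZMod.val_lt x) (ZMod.val_lt y) hxy)

lemma X_sub_one_pow_dvd_of_eqOn_line {O κ ι : Type*} [CommRing O] [IsDomain O] [Field κ]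
    [CharP κ p] [Fintype ι] (φ : O →+* κ) {e : AddChar (ZMod (p ^ k)) O}
    (he : Function.Injective e) {E : Finset (σ → ZMod (p ^ k))} {i₀ : σ} {t : σ → ℕ}
    {w : ι → σ → ℕ} {r : ι → O[X]}
    (hvanish : ∀ x ∈ E, ∑ i, (r i).eval (e (x i₀)) * windowProd t (w i) (e (x i₀)) (e ∘ x) = 0)
    {m : ℕ} {a v : σ → ZMod (p ^ k)} (hv : v i₀ = 1)
    (hm : m ≤ #{τ : ZMod (p ^ k) | a + τ • v ∈ E}) :
    (X - 1) ^ m ∣ ∑ i, (r i).map φ * windowProd t (w i) X fun l => X ^ (v l).val := by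
  classical
  let α := e (a i₀)
  let G : O[X] := ∑ i, (r i).comp (C α * X) *
    windowProd t (w i) (C α * X) fun l => C (e (a l)) * X ^ (v l).val
  have heval : ∀ τ, e ∘ (a + τ • v) = fun l => e (a l) * e τ ^ (v l).val := by
    refine fun τ => funext fun l => ?_
    rw [Function.comp_apply, ← e.map_nsmul_eq_pow, ← e.map_add_eq_mul, nsmul_eq_mul,
      ZMod.natCast_zmod_val, Pi.add_apply, Pi.smul_apply, smul_eq_mul, mul_comm]
  have heval₀ : ∀ τ, e ((a + τ • v) i₀) = α * e τ := by
    intro τ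
    rw [Pi.add_apply, Pi.smul_apply, hv, smul_eq_mul, mul_one, e.map_add_eq_mul]
  have hroot : ∀ τ, a + τ • v ∈ E → G.IsRoot (e τ) := by
    intro τ hτ
    rw [IsRoot, ← hvanish _ hτ, eval_finsetSum]
    refine sum_congr rfl fun i _ => ?_
    rw [eval_mul, eval_comp, ← coe_evalRingHom (e τ), map_windowProd, heval₀, heval]
    simp [Function.comp_def]
  have hmap : G.map φ = ∑ i, (r i).map φ * windowProd t (w i) X fun l => X ^ (v l).val := by
    rw [← coe_mapRingHom, map_sum]
    refine sum_congr rfl fun i _ => ?_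
    rw [map_mul, map_windowProd]
    simp [Function.comp_def, map_comp, map_addChar_zmod_eq_one, α]
  have hdvd := X_sub_C_pow_card_dvd_map φ (G := G) (T := image e {τ | a + τ • v ∈ E}) (b := 1)
    (by simpa using hroot) (by simp [map_addChar_zmod_eq_one])
  rw [card_image_of_injective _ he, hmap, C_1] at hdvd
  exact (pow_dvd_pow _ hm).trans hdvd

lemma card_mul_le_card_of_val_mem_window {s E : Finset (σ → ZMod (p ^ k))} {i₀ : σ}
    (hs : ∀ v ∈ s, v i₀ = 1) {t : σ → ℕ} {d : ℕ} (ht : ∀ v ∈ s, ∀ l, t l ≤ (v l).val)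
    (hd : ∀ v ∈ s, ∀ l, (v l).val ≤ t l + d) {m M : ℕ} (hM : M + Fintype.card σ * (k * d) ≤ m)
    (a : (σ → ZMod (p ^ k)) → σ → ZMod (p ^ k))
    (hm : ∀ v ∈ s, m ≤ #{τ : ZMod (p ^ k) | a v + τ • v ∈ E}) : #s * M ≤ #E := by
  by_contra! hE
  obtain ⟨V, ζ, hchar, hζ⟩ := exists_valuationSubring_isPrimitiveRoot p k
  let e := AddChar.zmodChar (p ^ k) hζ.pow_eq_one
  let w : s → σ → ℕ := fun v l => (v.1 l).val
  obtain ⟨c, ⟨⟨v, j⟩, hc⟩, hvanish⟩ := exists_sum_mul_eq_zero_of_card_lt (α := s × Fin M) (E := E)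
    (by simpa using hE)
    fun i x => e (x i₀) ^ (i.2 : ℕ) * windowProd t (w i.1) (e (x i₀)) (e ∘ x)
  let r : s → V[X] := fun u => ∑ j : Fin M, C (c (u, j)) * X ^ (j : ℕ)
  have hrv : (r v).map (IsLocalRing.residue V) = 0 := by
    refine eq_zero_of_forall_X_sub_one_pow_dvd (p := p) (k := k) (w := w) (t := t) (d := d)
      (r := fun u => (r u).map (IsLocalRing.residue V)) ?_
      (fun u => ht u u.2) (fun u => hd u u.2) (fun u l => ZMod.val_lt _) hM
      (fun u => (degree_map_le).trans_lt (degree_sum_fin_lt _)) ?_ v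
    · exact fun u u' huu' => Subtype.ext <| funext fun l => ZMod.val_injective _ (congrFun huu' l)
    · intro u
      refine X_sub_one_pow_dvd_of_eqOn_line _ (zmodChar_injective hζ) (fun x hx => ?_) (hs u u.2)
        (hm u u.2)
      rw [← hvanish x hx, Fintype.sum_prod_type]
      simp [r, eval_finsetSum, sum_mul, mul_assoc, e]
  have : (r v).coeff j = 1 := by
    simp [r, finsetSum_coeff, coeff_X_pow, Fin.val_inj, hc]
  have hone := coeff_map (p := r v) (IsLocalRing.residue V) j
  rw [hrv, this, map_one, coeff_zero] at hone
  exact zero_ne_one hone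

lemma card_mul_le_windows_mul_card {s E : Finset (σ → ZMod (p ^ k))} {i₀ : σ}
    (hs : ∀ v ∈ s, v i₀ = 1) {d m M : ℕ} (hM : M + Fintype.card σ * (k * d) ≤ m)
    (a : (σ → ZMod (p ^ k)) → σ → ZMod (p ^ k))
    (hm : ∀ v ∈ s, m ≤ #{τ : ZMod (p ^ k) | a v + τ • v ∈ E}) :
    #s * M ≤ ((p ^ k - 1) / (d + 1) + 1) ^ (Fintype.card σ - 1) * #E := by
  classical
  let ρ : (σ → ZMod (p ^ k)) → σ → ℕ := fun v l => (v l).val / (d + 1)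
  let W : Finset (σ → ℕ) := Fintype.piFinset fun l =>
    if l = i₀ then {(1 : ZMod (p ^ k)).val / (d + 1)} else range ((p ^ k - 1) / (d + 1) + 1)
  have hW : #W = ((p ^ k - 1) / (d + 1) + 1) ^ (Fintype.card σ - 1) := by
    simp [W, apply_ite card, prod_ite, filter_ne', card_erase_of_mem]
  have hρ : ∀ v ∈ s, ρ v ∈ W := by
    intro v hv
    refine Fintype.mem_piFinset.2 fun l => ?_
    split_ifs with hl
    · rw [hl, ← hs v hv, mem_singleton]
    · exact mem_range_succ_iff.2 (Nat.div_le_div_right (Nat.le_sub_one_of_lt (ZMod.val_lt _)))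
  have hfiber : ∀ b ∈ W, #{v ∈ s | ρ v = b} * M ≤ #E := by
    intro b _
    have hb : ∀ v ∈ s.filter (ρ · = b), ∀ l, (v l).val / (d + 1) = b l := fun v hv l =>
      congrFun (mem_filter.1 hv).2 l
    refine card_mul_le_card_of_val_mem_window (i₀ := i₀) (t := fun l => b l * (d + 1)) (d := d)
      (fun v hv => hs v (mem_filter.1 hv).1) (fun v hv l => ?_) (fun v hv l => ?_) hM a
      fun v hv => hm v (mem_filter.1 hv).1
    · exact hb v hv l ▸ Nat.div_mul_le_self _ _
    · exact Nat.lt_succ_iff.1 (hb v hv l ▸ Nat.lt_div_mul_add d.succ_pos)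
  calc #s * M = ∑ b ∈ W, #{v ∈ s | ρ v = b} * M := by
        rw [card_eq_sum_card_fiberwise hρ, sum_mul]
    _ ≤ #W * #E := by simpa using sum_le_card_nsmul W _ _ hfiber
    _ = _ := by rw [hW]

lemma card_mul_pow_le_of_le_card_line_inter {s E : Finset (σ → ZMod (p ^ k))} {i₀ : σ}
    (hk : k ≠ 0) (hs : ∀ v ∈ s, v i₀ = 1) (a : (σ → ZMod (p ^ k)) → σ → ZMod (p ^ k)) {m : ℕ}
    (hm : ∀ v ∈ s, m ≤ #{τ : ZMod (p ^ k) | a v + τ • v ∈ E}) :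
    #s * m ^ Fintype.card σ ≤
      2 * (4 * Fintype.card σ * k * p ^ k) ^ (Fintype.card σ - 1) * #E := by
  rcases s.eq_empty_or_nonempty with rfl | ⟨v, hv⟩
  · simp
  have hmq : m ≤ p ^ k := (hm v hv).trans ((card_le_univ _).trans_eq (ZMod.card _))
  obtain ⟨n, hn⟩ : ∃ n, Fintype.card σ = n + 1 :=
    Nat.exists_eq_succ_of_ne_zero (Fintype.card_pos_iff.2 ⟨i₀⟩).ne'
  let D := 2 * (n + 1) * k
  let Q := (p ^ k - 1) / (m / D + 1) + 1
  have hM : (m - m / 2) + Fintype.card σ * (k * (m / D)) ≤ m := by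
    have : D * (m / D) = 2 * (Fintype.card σ * (k * (m / D))) := by rw [hn]; ring
    have := Nat.mul_div_le m D
    lia
  have hcount : #s * (m - m / 2) ≤ Q ^ n * #E := by
    simpa [hn] using card_mul_le_windows_mul_card hs hM a hm
  have hQ : Q * m ≤ 2 * D * p ^ k := windows_mul_le (by positivity) (NeZero.pos _) hmq
  rw [hn, Nat.add_sub_cancel]
  calc #s * m ^ (n + 1) ≤ #s * (m ^ n * (2 * (m - m / 2))) := by
        rw [pow_succ]
        gcongr
        lia
    _ = 2 * m ^ n * (#s * (m - m / 2)) := by ring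
    _ ≤ 2 * m ^ n * (Q ^ n * #E) := Nat.mul_le_mul_left _ hcount
    _ = 2 * (Q * m) ^ n * #E := by rw [mul_pow]; ring
    _ ≤ 2 * (2 * D * p ^ k) ^ n * #E := by gcongr
    _ = 2 * (4 * (n + 1) * k * p ^ k) ^ n * #E := by ring

end CountingLines

end Polynomial

section Interpolation

open Finset MeasureTheory

lemma integral_Ioi_indicator_Iic {y : ℝ} (hy : 0 ≤ y) (c : ℝ) :
    ∫ t in Set.Ioi 0, (Set.Iic y).indicator (fun _ => c) t = c * y := by
  rw [integral_indicator_const _ measurableSet_Iic, measureReal_restrict_apply measurableSet_Iic,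
    Set.inter_comm, Set.Ioi_inter_Iic, Real.volume_real_Ioc_of_le hy, sub_zero, smul_eq_mul,
    mul_comm]

lemma integrableOn_Ioi_indicator_Iic (y c : ℝ) :
    IntegrableOn ((Set.Iic y).indicator fun _ => c) (Set.Ioi 0) := by
  refine (integrable_indicator_iff measurableSet_Iic).2 (integrableOn_const ?_)
  rw [Measure.restrict_apply measurableSet_Iic, Set.inter_comm, Set.Ioi_inter_Iic]
  exact measure_Ioc_lt_top.ne

section LayerCake

variable {ι κ : Type*} {s : Finset ι} {E : Finset κ} {a g : ι → ℝ} {b f : κ → ℝ}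

lemma sum_mul_le_sum_mul_of_superlevel_le (hg : ∀ i ∈ s, 0 ≤ g i) (hf : ∀ x ∈ E, 0 ≤ f x)
    (h : ∀ t > 0, ∑ i ∈ s with t ≤ g i, a i ≤ ∑ x ∈ E with t ≤ f x, b x) :
    ∑ i ∈ s, a i * g i ≤ ∑ x ∈ E, b x * f x := by
  calc ∑ i ∈ s, a i * g i
      = ∫ t in Set.Ioi 0, ∑ i ∈ s, (Set.Iic (g i)).indicator (fun _ => a i) t := by
        rw [integral_finsetSum _ fun i _ => integrableOn_Ioi_indicator_Iic (g i) (a i)]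
        exact sum_congr rfl fun i hi => (integral_Ioi_indicator_Iic (hg i hi) _).symm
    _ ≤ ∫ t in Set.Ioi 0, ∑ x ∈ E, (Set.Iic (f x)).indicator (fun _ => b x) t := by
        refine setIntegral_mono_on
          (integrable_finsetSum _ fun i _ => integrableOn_Ioi_indicator_Iic (g i) (a i))
          (integrable_finsetSum _ fun x _ => integrableOn_Ioi_indicator_Iic (f x) (b x))
          measurableSet_Ioi fun t ht => ?_
        simpa only [Set.indicator_apply, Set.mem_Iic, sum_filter] using h t ht
    _ = ∑ x ∈ E, b x * f x := by
        rw [integral_finsetSum _ fun x _ => integrableOn_Ioi_indicator_Iic (f x) (b x)]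
        exact sum_congr rfl fun x hx => integral_Ioi_indicator_Iic (hf x hx) _

lemma sum_mul_pow_le_sum_mul_pow_of_superlevel_le {n : ℕ} (hn : n ≠ 0) (hg : ∀ i ∈ s, 0 ≤ g i)
    (hf : ∀ x ∈ E, 0 ≤ f x)
    (h : ∀ t > 0, ∑ i ∈ s with t ≤ g i, a i ≤ ∑ x ∈ E with t ≤ f x, b x) :
    ∑ i ∈ s, a i * g i ^ n ≤ ∑ x ∈ E, b x * f x ^ n := by
  refine sum_mul_le_sum_mul_of_superlevel_le (fun i hi => pow_nonneg (hg i hi) n)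
    (fun x hx => pow_nonneg (hf x hx) n) fun t ht => ?_
  obtain ⟨r, hr, rfl⟩ : ∃ r > 0, r ^ n = t :=
    ⟨t ^ (n : ℝ)⁻¹, Real.rpow_pos_of_pos ht _, Real.rpow_inv_natCast_pow ht.le hn⟩
  rw [filter_congr fun i hi => pow_le_pow_iff_left₀ hr.le (hg i hi) hn,
    filter_congr fun x hx => pow_le_pow_iff_left₀ hr.le (hf x hx) hn]
  exact h r hr

end LayerCake

section nthLargest

variable {T : Type*} [Fintype T]

/-- The `m`-th largest value of a nonnegative function `g` on a finite type (the decreasing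
rearrangement of `g` at `m`), with value `0` when `m` exceeds the number of arguments. -/
noncomputable def nthLargest (g : T → ℝ) (m : ℕ) : ℝ :=
  ⨆ τ, if m ≤ #{τ' | g τ ≤ g τ'} then g τ else 0

variable {g : T → ℝ} {m : ℕ}

lemma nthLargest_nonneg (hg : ∀ τ, 0 ≤ g τ) (m : ℕ) : 0 ≤ nthLargest g m :=
  Real.iSup_nonneg fun τ => by split_ifs; exacts [hg τ, le_rfl]

lemma le_nthLargest_iff {t : ℝ} (ht : 0 < t) (hm : m ≠ 0) :
    t ≤ nthLargest g m ↔ m ≤ #{τ | t ≤ g τ} := by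
  constructor <;> intro h
  · rcases isEmpty_or_nonempty T with hT | hT
    · rw [nthLargest, Real.iSup_of_isEmpty] at h
      exact absurd h ht.not_ge
    obtain ⟨τ, hτ⟩ := exists_eq_ciSup_of_finite
      (f := fun τ => if m ≤ #{τ' | g τ ≤ g τ'} then g τ else 0)
    rw [nthLargest, ← hτ] at h
    split_ifs at h with hcard
    · exact hcard.trans <| card_le_card <| monotone_filter_right _ fun τ' _ => h.trans
    · exact absurd h ht.not_ge
  · obtain ⟨τ, hτ, hmin⟩ := exists_min_image _ g (card_pos.1 ((Nat.pos_of_ne_zero hm).trans_le h))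
    have hcard : m ≤ #{τ' | g τ ≤ g τ'} :=
      h.trans <| card_le_card fun τ' hτ' => mem_filter.2 ⟨mem_univ _, hmin τ' hτ'⟩
    calc t ≤ g τ := (mem_filter.1 hτ).2
      _ = if m ≤ #{τ' | g τ ≤ g τ'} then g τ else 0 := (if_pos hcard).symm
      _ ≤ nthLargest g m :=
        le_ciSup (f := fun τ => if m ≤ #{τ' | g τ ≤ g τ'} then g τ else 0)
          (Set.finite_range _).bddAbove τ

lemma sum_le_sum_two_pow_mul_nthLargest (hg : ∀ τ, 0 ≤ g τ) :
    ∑ τ, g τ ≤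
      ∑ i ∈ range (Nat.log 2 (Fintype.card T) + 1), (2 : ℝ) ^ i * nthLargest g (2 ^ i) := by
  have key : ∀ t > 0, ∑ τ with t ≤ g τ, (1 : ℝ) ≤
      ∑ i ∈ range (Nat.log 2 (Fintype.card T) + 1) with t ≤ nthLargest g (2 ^ i), (2 : ℝ) ^ i := by
    intro t ht
    set N := #{τ | t ≤ g τ}
    rw [sum_const, nsmul_one, filter_congr fun i _ => le_nthLargest_iff ht (by positivity)]
    rcases eq_or_ne N 0 with hN | hN
    · simp only [N, hN, Nat.cast_zero]
      positivity
    have hsub : range (Nat.log 2 N + 1) ⊆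
        {i ∈ range (Nat.log 2 (Fintype.card T) + 1) | 2 ^ i ≤ N} := by
      intro i hi
      rw [mem_range_succ_iff] at hi
      exact mem_filter.2 ⟨mem_range_succ_iff.2 (hi.trans (Nat.log_mono_right (card_le_univ _))),
        Nat.pow_le_of_le_log hN hi⟩
    have hlt : N ≤ ∑ i ∈ range (Nat.log 2 N + 1), 2 ^ i := by
      rw [Nat.geomSum_eq le_rfl]
      simpa using Nat.le_sub_one_of_lt (Nat.lt_pow_succ_log_self one_lt_two N)
    calc (N : ℝ) ≤ ∑ i ∈ range (Nat.log 2 N + 1), 2 ^ i := mod_cast hlt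
      _ ≤ _ := sum_le_sum_of_subset_of_nonneg hsub fun _ _ _ => by positivity
  simpa using sum_mul_le_sum_mul_of_superlevel_le (fun τ _ => hg τ)
    (fun i _ => nthLargest_nonneg hg (2 ^ i)) key

end nthLargest

lemma sum_pow_sum_comp_le {V X T : Type*} [Fintype X] [DecidableEq X] [Fintype T] {s : Finset V}
    {ℓ : V → T → X} {n : ℕ} (hn : n ≠ 0) {B : ℝ}
    (h : ∀ (E : Finset X) (m : ℕ), (#{v ∈ s | m ≤ #{τ | ℓ v τ ∈ E}} : ℝ) * m ^ n ≤ B * #E)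
    {f : X → ℝ} (hf : ∀ x, 0 ≤ f x) :
    ∑ v ∈ s, (∑ τ, f (ℓ v τ)) ^ n ≤
      ((Nat.log 2 (Fintype.card T) + 1 : ℕ) : ℝ) ^ n * B * ∑ x, f x ^ n := by
  set J := Nat.log 2 (Fintype.card T) + 1
  let ν (v : V) (i : ℕ) : ℝ := nthLargest (fun τ => f (ℓ v τ)) (2 ^ i)
  have hν : ∀ v i, 0 ≤ ν v i := fun v i => nthLargest_nonneg (fun τ => hf _) _
  have hlevel : ∀ i, ∑ v ∈ s, ((2 : ℝ) ^ i) ^ n * ν v i ^ n ≤ B * ∑ x, f x ^ n := by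
    intro i
    rw [mul_sum]
    refine sum_mul_pow_le_sum_mul_pow_of_superlevel_le hn (fun v _ => hν v i) (fun x _ => hf x)
      fun t ht => ?_
    simp only [ν, le_nthLargest_iff ht (pow_ne_zero i two_ne_zero), sum_const, nsmul_eq_mul]
    simpa [mul_comm] using h {x | t ≤ f x} (2 ^ i)
  obtain ⟨n, rfl⟩ := Nat.exists_eq_add_one_of_ne_zero hn
  calc ∑ v ∈ s, (∑ τ, f (ℓ v τ)) ^ (n + 1)
      ≤ ∑ v ∈ s, (∑ i ∈ range J, 2 ^ i * ν v i) ^ (n + 1) := by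
        gcongr with v
        · exact sum_nonneg fun τ _ => hf _
        · exact sum_le_sum_two_pow_mul_nthLargest fun τ => hf _
    _ ≤ ∑ v ∈ s, J ^ n * ∑ i ∈ range J, (2 ^ i * ν v i) ^ (n + 1) := by
        gcongr with v
        simpa using pow_sum_le_card_mul_sum_pow
          (fun i (_ : i ∈ range J) => mul_nonneg (by positivity) (hν v i)) n
    _ = J ^ n * ∑ i ∈ range J, ∑ v ∈ s, (2 ^ i) ^ (n + 1) * ν v i ^ (n + 1) := by
        rw [← mul_sum, sum_comm]
        simp_rw [mul_pow]
    _ ≤ J ^ n * ∑ _i ∈ range J, B * ∑ x, f x ^ (n + 1) := by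
        gcongr with i
        exact hlevel i
    _ = J ^ (n + 1) * B * ∑ x, f x ^ (n + 1) := by
        rw [sum_const, card_range, nsmul_eq_mul]
        ring

end Interpolation

section MaximalFunction

open Finset

/-- A vector whose coordinates generate the unit ideal; over `ZMod N` these are the vectors
satisfying `IsPrimitiveVec`. -/
def IsUnimodular {R σ : Type*} [Fintype σ] [CommSemiring R] (u : σ → R) : Prop :=
  ∃ v : σ → R, ∑ i, v i * u i = 1

namespace IsUnimodular

variable {R S σ : Type*} [Fintype σ] [CommSemiring R] [CommSemiring S] {u : σ → R}

lemma smul (hu : IsUnimodular u) (c : Rˣ) : IsUnimodular (c • u) := by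
  obtain ⟨v, hv⟩ := hu
  exact ⟨c⁻¹ • v, by simpa [Units.smul_def, mul_mul_mul_comm]⟩

lemma smul_left_injective (hu : IsUnimodular u) : Function.Injective fun c : R => c • u := by
  obtain ⟨v, hv⟩ := hu
  have hcoord (c : R) : ∑ i, v i * (c • u) i = c := by
    simp_rw [Pi.smul_apply, smul_eq_mul, mul_left_comm, ← mul_sum, hv, mul_one]
  intro c c' h
  rw [← hcoord c, ← hcoord c']
  exact congrArg (fun w => ∑ i, v i * w i) h

lemma map (hu : IsUnimodular u) (φ : R →+* S) : IsUnimodular (φ ∘ u) := by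
  obtain ⟨v, hv⟩ := hu
  exact ⟨φ ∘ v, by simpa using congrArg φ hv⟩

lemma exists_isUnit {R : Type*} [CommRing R] [IsLocalRing R] {u : σ → R} (hu : IsUnimodular u) :
    ∃ i, IsUnit (u i) := by
  obtain ⟨v, hv⟩ := hu
  obtain ⟨i, -, hi⟩ := IsLocalRing.exists_of_isUnit_sum (hv ▸ isUnit_one)
  exact ⟨i, isUnit_of_mul_isUnit_right hi⟩

end IsUnimodular

/-- The Kakeya maximal function of `f`: the largest sum of `f` over a line in direction `u`, where
the line is parametrised by `R`. -/
noncomputable def lineMax {R σ : Type*} [CommRing R] [Fintype R] (f : (σ → R) → ℝ)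
    (u : σ → R) : ℝ :=
  ⨆ a, ∑ t : R, f (a + t • u)

section lineMax

variable {R σ : Type*} [CommRing R] [Fintype R] [Finite σ] {f : (σ → R) → ℝ}

lemma sum_le_lineMax (f : (σ → R) → ℝ) (a u : σ → R) : ∑ t : R, f (a + t • u) ≤ lineMax f u :=
  le_ciSup (f := fun a => ∑ t : R, f (a + t • u)) (Set.finite_range _).bddAbove a

lemma exists_sum_eq_lineMax (f : (σ → R) → ℝ) (u : σ → R) :
    ∃ a, ∑ t : R, f (a + t • u) = lineMax f u :=
  exists_eq_ciSup_of_finite (f := fun a => ∑ t : R, f (a + t • u))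

omit [Finite σ] in
lemma lineMax_nonneg (hf : ∀ x, 0 ≤ f x) (u : σ → R) : 0 ≤ lineMax f u :=
  Real.iSup_nonneg fun _ => sum_nonneg fun _ _ => hf _

omit [Finite σ] in
lemma lineMax_smul (f : (σ → R) → ℝ) (c : Rˣ) (u : σ → R) : lineMax f (c • u) = lineMax f u := by
  refine iSup_congr fun a => Fintype.sum_equiv c.mulRight _ _ fun t => ?_
  rw [Units.mulRight_apply, mul_smul, Units.smul_def]

omit [Finite σ] in
lemma lineMax_comp_ringEquiv {S : Type*} [CommRing S] [Fintype S] (e : R ≃+* S)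
    (f : (σ → S) → ℝ) (u : σ → R) : lineMax f (e ∘ u) = lineMax (fun x => f (e ∘ x)) u := by
  refine ((Equiv.piCongrRight fun _ => e.toEquiv).surjective.iSup_congr _ fun a => ?_).symm
  refine Fintype.sum_equiv e.toEquiv.symm _ _ fun t => congrArg f (funext fun i => ?_)
  simp

lemma lineMax_prod_le {S : Type*} [CommRing S] [Fintype S] (f : (σ → R × S) → ℝ)
    (u : σ → R) (v : σ → S) :
    lineMax f (fun i => (u i, v i)) ≤
      lineMax (fun y => lineMax (fun z => f fun i => (y i, z i)) v) u := by
  obtain ⟨a, ha⟩ := exists_sum_eq_lineMax f fun i => (u i, v i)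
  rw [← ha, Fintype.sum_prod_type]
  refine (sum_le_sum fun r _ => ?_).trans (sum_le_lineMax _ (Prod.fst ∘ a) u)
  exact sum_le_lineMax (fun z => f fun i => ((Prod.fst ∘ a + r • u) i, z i)) (Prod.snd ∘ a) v

end lineMax

section LocalRing

variable {R σ : Type*} [CommRing R] [Fintype R] [DecidableEq R] [Fintype σ]
  [DecidableEq σ] {g : (σ → R) → ℝ}

lemma sum_isUnit_apply_eq_mul_sum_apply_eq_one [DecidablePred (IsUnit : R → Prop)] (l : σ)
    (hg : ∀ (c : Rˣ) u, g (c • u) = g u) :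
    ∑ u with IsUnit (u l), g u = Nat.card Rˣ * ∑ v with v l = 1, g v := by
  rw [Nat.card_eq_fintype_card, ← nsmul_eq_mul, ← card_univ, ← sum_const, ← sum_product']
  refine (sum_bij (fun cv _ => cv.1 • cv.2) ?_ ?_ ?_ fun cv _ => (hg cv.1 cv.2).symm).symm
  · rintro ⟨c, v⟩ hv
    simp_all [Units.smul_def]
  · rintro ⟨c, v⟩ hv ⟨c', v'⟩ hv' h
    simp only [mem_product, mem_univ, mem_filter, true_and] at hv hv' h
    have hc : c = c' := Units.ext (by simpa [Units.smul_def, hv, hv'] using congrFun h l)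
    subst hc
    rw [smul_left_cancel c h]
  · intro u hu
    obtain ⟨c, hc⟩ := (mem_filter.mp hu).2
    exact ⟨(c, c⁻¹ • u), by simp [Units.smul_def, ← hc], by simp⟩

open Classical in
lemma sum_isUnimodular_le_mul_sum_sum_apply_eq_one [IsLocalRing R] (hg₀ : ∀ u, 0 ≤ g u)
    (hg : ∀ (c : Rˣ) u, g (c • u) = g u) :
    ∑ u with IsUnimodular u, g u ≤ Nat.card Rˣ * ∑ l, ∑ v with v l = 1, g v := by
  simp_rw [mul_sum (univ : Finset σ), ← sum_isUnit_apply_eq_mul_sum_apply_eq_one _ hg, sum_filter]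
  rw [sum_comm]
  refine sum_le_sum fun u _ => ?_
  have hterm (l : σ) : 0 ≤ if IsUnit (u l) then g u else 0 := by
    split_ifs <;> simp [hg₀]
  split_ifs with hu
  · obtain ⟨l, hl⟩ := hu.exists_isUnit
    exact (if_pos hl).ge.trans (single_le_sum (fun l _ => hterm l) (mem_univ l))
  · exact sum_nonneg fun l _ => hterm l

end LocalRing

/-- `KakeyaMaximalBound R n A` says that the Kakeya maximal function on `Rⁿ` maps `ℓⁿ` to `ℓⁿ` with
norm at most `A ^ (1 / n)`. A projective direction has one representative for every unit of `R`, so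
summing over all unimodular vectors, instead of over directions, multiplies the left-hand side by
the number of units. -/
def KakeyaMaximalBound (R : Type*) [CommRing R] [Fintype R] (n : ℕ) (A : ℝ) : Prop :=
  open Classical in
  ∀ f : (Fin n → R) → ℝ, (∀ x, 0 ≤ f x) →
    ∑ u with IsUnimodular u, lineMax f u ^ n ≤ Nat.card Rˣ * (A * ∑ x, f x ^ n)

namespace KakeyaMaximalBound

variable {R S : Type*} [CommRing R] [Fintype R] [CommRing S] [Fintype S] {n : ℕ} {A B : ℝ}

lemma mono (h : KakeyaMaximalBound R n A) (hAB : A ≤ B) : KakeyaMaximalBound R n B := by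
  intro f hf
  refine (h f hf).trans ?_
  gcongr
  exact sum_nonneg fun x _ => pow_nonneg (hf x) n

lemma of_ringEquiv (e : R ≃+* S) (h : KakeyaMaximalBound R n A) : KakeyaMaximalBound S n A := by
  classical
  intro f hf
  let E : (Fin n → R) ≃ (Fin n → S) := Equiv.piCongrRight fun _ => e.toEquiv
  have hunits : Nat.card Rˣ = Nat.card Sˣ := Nat.card_congr (Units.mapEquiv e.toMulEquiv).toEquiv
  have hsum : ∑ x, f (E x) ^ n = ∑ x, f x ^ n := E.sum_comp fun x => f x ^ n
  have huni (u : Fin n → R) : IsUnimodular u ↔ IsUnimodular (E u) :=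
    ⟨fun hu => hu.map e.toRingHom, fun hu => by
      simpa [E, Function.comp_def] using hu.map e.symm.toRingHom⟩
  rw [← hunits, ← hsum, sum_filter, ← E.sum_comp]
  refine le_of_eq_of_le ?_ (h (fun x => f (E x)) fun x => hf _)
  rw [sum_filter]
  exact sum_congr rfl fun u _ => if_congr (huni u).symm
    (congrArg (· ^ n) (lineMax_comp_ringEquiv e f u)) rfl

lemma of_subsingleton [Subsingleton R] : KakeyaMaximalBound R n 1 := by
  classical
  intro f hf
  have hline (u : Fin n → R) : lineMax f u = f 0 := by
    obtain ⟨a, ha⟩ := exists_sum_eq_lineMax f u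
    rw [← ha, Fintype.sum_subsingleton _ 0, Subsingleton.elim (a + _) 0]
  have hunits : Nat.card Rˣ = 1 := Nat.card_unique
  simp_rw [hunits, hline, Nat.cast_one, one_mul]
  refine (sum_le_univ_sum_of_nonneg fun _ => pow_nonneg (hf 0) n).trans_eq ?_
  rw [Fintype.sum_subsingleton _ 0, Fintype.sum_subsingleton _ 0]

lemma prod (hA : 0 ≤ A) (hR : KakeyaMaximalBound R n A) (hS : KakeyaMaximalBound S n B) :
    KakeyaMaximalBound (R × S) n (A * B) := by
  classical
  intro f hf
  let E : ((Fin n → R) × (Fin n → S)) ≃ (Fin n → R × S) :=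
    (Equiv.arrowProdEquivProdArrow (Fin n) (fun _ => R) fun _ => S).symm
  have hunits : Nat.card (R × S)ˣ = Nat.card Rˣ * Nat.card Sˣ := by
    rw [Nat.card_congr MulEquiv.prodUnits.toEquiv, Nat.card_prod]
  have hsum : ∑ x, f x ^ n = ∑ y, ∑ z, f (E (y, z)) ^ n := by
    rw [← E.sum_comp, Fintype.sum_prod_type]
  let F (v : Fin n → S) (y : Fin n → R) : ℝ := lineMax (fun z => f (E (y, z))) v
  have hF (v y) : 0 ≤ F v y := lineMax_nonneg (fun z => hf _) v
  have hline (u v) : lineMax f (E (u, v)) ≤ lineMax (F v) u := lineMax_prod_le f u v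
  calc ∑ w with IsUnimodular w, lineMax f w ^ n
      ≤ ∑ v with IsUnimodular v, ∑ u with IsUnimodular u, lineMax (F v) u ^ n := by
        rw [sum_filter, ← E.sum_comp, Fintype.sum_prod_type_right, sum_filter]
        refine sum_le_sum fun v _ => ?_
        rw [← sum_filter]
        split_ifs with hv
        · refine (sum_le_sum fun u _ => pow_le_pow_left₀ (lineMax_nonneg hf _) (hline u v) n).trans
            (sum_le_sum_of_subset_of_nonneg (monotone_filter_right _ fun u _ hu =>
              hu.map (RingHom.fst R S)) fun u _ _ => pow_nonneg (lineMax_nonneg (hF v) u) n)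
        · exact (sum_eq_zero fun u hu =>
            absurd ((mem_filter.mp hu).2.map (RingHom.snd R S)) hv).le
    _ ≤ ∑ v with IsUnimodular v, Nat.card Rˣ * (A * ∑ y, F v y ^ n) :=
        sum_le_sum fun v _ => hR (F v) (hF v)
    _ = Nat.card Rˣ * (A * ∑ y, ∑ v with IsUnimodular v, F v y ^ n) := by
        rw [← mul_sum, ← mul_sum, sum_comm]
    _ ≤ Nat.card Rˣ * (A * ∑ y, Nat.card Sˣ * (B * ∑ z, f (E (y, z)) ^ n)) := by
        gcongr with y
        exact hS _ fun z => hf _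
    _ = Nat.card (R × S)ˣ * (A * B * ∑ x, f x ^ n) := by
        rw [hunits, hsum, ← mul_sum, ← mul_sum]
        push_cast
        ring

lemma sum_pow_le (h : KakeyaMaximalBound R n A) {P : Finset (Fin n → R)}
    (hP : ∀ u ∈ P, IsUnimodular u)
    (hdistinct : ∀ u ∈ P, ∀ w ∈ P, ∀ c : Rˣ, u = c • w → u = w) {f : (Fin n → R) → ℝ}
    (hf : ∀ x, 0 ≤ f x) : ∑ u ∈ P, lineMax f u ^ n ≤ A * ∑ x, f x ^ n := by
  classical
  let Q : Finset (Rˣ × (Fin n → R)) := univ ×ˢ P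
  have hQ {c : Rˣ} {u : Fin n → R} : (c, u) ∈ Q ↔ u ∈ P := by simp [Q]
  have hinj : Set.InjOn (fun cu : Rˣ × (Fin n → R) => cu.1 • cu.2) Q := by
    rintro ⟨c, u⟩ hu ⟨c', w⟩ hw (hcw : c • u = c' • w)
    obtain rfl := hdistinct u (hQ.mp hu) w (hQ.mp hw) (c⁻¹ * c') (by
      rw [mul_smul, ← hcw, inv_smul_smul])
    rw [Units.ext ((hP u (hQ.mp hu)).smul_left_injective hcw)]
  refine le_of_mul_le_mul_left ?_ (Nat.cast_pos (α := ℝ).mpr (Nat.card_pos (α := Rˣ)))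
  calc Nat.card Rˣ * ∑ u ∈ P, lineMax f u ^ n
      = ∑ cu ∈ Q, lineMax f (cu.1 • cu.2) ^ n := by
        simp_rw [lineMax_smul, Q, sum_product, sum_const, nsmul_eq_mul, Nat.card_eq_fintype_card,
          card_univ]
    _ = ∑ v ∈ Q.image fun cu => cu.1 • cu.2, lineMax f v ^ n := by rw [sum_image hinj]
    _ ≤ ∑ v with IsUnimodular v, lineMax f v ^ n := by
        refine sum_le_sum_of_subset_of_nonneg (fun v hv => ?_) fun v _ _ =>
          pow_nonneg (lineMax_nonneg hf v) n
        obtain ⟨⟨c, u⟩, hu, rfl⟩ := mem_image.mp hv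
        exact mem_filter.mpr ⟨mem_univ _, (hP u (hQ.mp hu)).smul c⟩
    _ ≤ Nat.card Rˣ * (A * ∑ x, f x ^ n) := h f hf

end KakeyaMaximalBound

end MaximalFunction

section PrimePower

open Finset

variable {p k n : ℕ} [Fact p.Prime]

lemma isLocalRing_zmod_prime_pow (hk : k ≠ 0) : IsLocalRing (ZMod (p ^ k)) :=
  have : Fact (1 < p ^ k) := ⟨Nat.one_lt_pow hk (Fact.out : p.Prime).one_lt⟩
  IsLocalRing.of_surjective' (PadicInt.toZModPow k) (ZMod.ringHom_surjective _)

lemma sum_apply_eq_one_lineMax_pow_le (hk : k ≠ 0) (l : Fin n) {f : (Fin n → ZMod (p ^ k)) → ℝ}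
    (hf : ∀ x, 0 ≤ f x) :
    ∑ v with v l = 1, lineMax f v ^ n ≤
      ((Nat.log 2 (p ^ k) + 1 : ℕ) : ℝ) ^ n * (2 * (4 * n * k * p ^ k : ℕ) ^ (n - 1)) *
        ∑ x, f x ^ n := by
  choose a ha using exists_sum_eq_lineMax f
  have hcard (E : Finset (Fin n → ZMod (p ^ k))) (m : ℕ) :
      (#{v ∈ ({v | v l = 1} : Finset (Fin n → ZMod (p ^ k))) |
          m ≤ #{τ : ZMod (p ^ k) | a v + τ • v ∈ E}} : ℝ) * m ^ n ≤
        2 * (4 * n * k * p ^ k : ℕ) ^ (n - 1) * #E := by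
    have h := card_mul_pow_le_of_le_card_line_inter (E := E) (m := m) (i₀ := l) hk
      (s := {v ∈ ({v | v l = 1} : Finset (Fin n → ZMod (p ^ k))) |
          m ≤ #{τ : ZMod (p ^ k) | a v + τ • v ∈ E}}) (by simp +contextual) a (by simp)
    rw [Fintype.card_fin] at h
    exact_mod_cast h
  simpa only [ha, ZMod.card] using
    sum_pow_sum_comp_le (ℓ := fun v τ => a v + τ • v) l.pos.ne' hcard hf

lemma KakeyaMaximalBound.zmod_prime_pow (hk : k ≠ 0) :
    KakeyaMaximalBound (ZMod (p ^ k)) n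
      (2 * n * (4 * n) ^ (n - 1) * (Nat.log 2 (p ^ k) + 1 : ℕ) ^ (2 * n) *
        (p ^ k : ℕ) ^ (n - 1)) := by
  intro f hf
  have := isLocalRing_zmod_prime_pow (p := p) hk
  have hkJ : k ≤ Nat.log 2 (p ^ k) + 1 :=
    (Nat.le_log_of_pow_le one_lt_two
      (Nat.pow_le_pow_left (Fact.out : p.Prime).two_le k)).trans (Nat.le_succ _)
  set J := Nat.log 2 (p ^ k) + 1
  have hS : 0 ≤ ∑ x, f x ^ n := sum_nonneg fun x _ => pow_nonneg (hf x) n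
  refine (sum_isUnimodular_le_mul_sum_sum_apply_eq_one
    (fun u => pow_nonneg (lineMax_nonneg hf u) n)
    fun c u => by rw [lineMax_smul]).trans ?_
  gcongr
  calc ∑ l : Fin n, ∑ v with v l = 1, lineMax f v ^ n
      ≤ ∑ l : Fin n, (J : ℝ) ^ n * (2 * (4 * n * J * p ^ k : ℕ) ^ (n - 1)) * ∑ x, f x ^ n := by
        refine sum_le_sum fun l _ => (sum_apply_eq_one_lineMax_pow_le hk l hf).trans ?_
        gcongr
    _ = 2 * n * (4 * n) ^ (n - 1) * (J : ℝ) ^ (n + (n - 1)) * (p ^ k : ℕ) ^ (n - 1) *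
          ∑ x, f x ^ n := by
        rw [sum_const, card_univ, Fintype.card_fin, nsmul_eq_mul, pow_add]
        push_cast
        ring
    _ ≤ 2 * n * (4 * n) ^ (n - 1) * (J : ℝ) ^ (2 * n) * (p ^ k : ℕ) ^ (n - 1) * ∑ x, f x ^ n := by
        gcongr
        · simp [J]
        · lia

end PrimePower

section AllModuli

open Filter Asymptotics

lemma eventually_mul_natLog_pow_le_rpow (K : ℝ) (m : ℕ) {δ : ℝ} (hδ : 0 < δ) :
    ∀ᶠ q : ℕ in atTop, K * (Nat.log 2 q + 1 : ℕ) ^ m ≤ (q : ℝ) ^ δ := by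
  have hlog : (fun q : ℕ => (Nat.log 2 q : ℝ)) =O[atTop] fun q : ℕ => Real.log q := by
    refine IsBigO.of_bound (Real.log 2)⁻¹ (Eventually.of_forall fun q => ?_)
    rw [Real.norm_natCast, Real.norm_of_nonneg (Real.log_natCast_nonneg q), ← div_eq_inv_mul]
    exact Real.natLog_le_logb q 2
  have hsucc : (fun q : ℕ => ((Nat.log 2 q + 1 : ℕ) : ℝ)) =O[atTop] fun q : ℕ => Real.log q := by
    simp_rw [Nat.cast_succ]
    exact hlog.add (Real.isLittleO_const_log_atTop.natCast_atTop.isBigO)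
  have hpow : (fun q : ℕ => Real.log q ^ m) =o[atTop] fun q : ℕ => (q : ℝ) ^ δ := by
    simpa using (isLittleO_log_rpow_rpow_atTop m hδ).natCast_atTop
  filter_upwards [(((hsucc.pow m).trans_isLittleO hpow).const_mul_left K).bound one_pos] with q hq
  rw [one_mul, Real.norm_of_nonneg (by positivity : (0 : ℝ) ≤ (q : ℝ) ^ δ)] at hq
  exact (le_abs_self _).trans hq

lemma exists_factorization_prod_le_mul_rpow {g : ℕ → ℝ} (hg : ∀ q, 0 ≤ g q) {θ : ℝ}
    (h : ∀ᶠ q : ℕ in atTop, g q ≤ (q : ℝ) ^ θ) :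
    ∃ C : ℝ, 0 ≤ C ∧ ∀ N : ℕ, N ≠ 0 →
      (N.factorization.prod fun p k => g (p ^ k)) ≤ C * (N : ℝ) ^ θ := by
  obtain ⟨q₀, hq₀⟩ := eventually_atTop.mp h
  set B : ℝ := 1 + ∑ q ∈ Finset.range q₀, g q / (q : ℝ) ^ θ
  have hratio (q : ℕ) : 0 ≤ g q / (q : ℝ) ^ θ := div_nonneg (hg q) (by positivity)
  have hB : 1 ≤ B := le_add_of_nonneg_right (Finset.sum_nonneg fun q _ => hratio q)
  have hsmall (p k : ℕ) (hp : p.Prime) (hk : k ≠ 0) :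
      g (p ^ k) ≤ (if p < q₀ then B else 1) * ((p ^ k : ℕ) : ℝ) ^ θ := by
    have hq : 0 < ((p ^ k : ℕ) : ℝ) ^ θ := by
      have := hp.pos
      positivity
    split_ifs with hpq
    · rw [← div_le_iff₀ hq]
      rcases lt_or_ge (p ^ k) q₀ with hlt | hge
      · exact (Finset.single_le_sum (fun q _ => hratio q) (Finset.mem_range.mpr hlt)).trans
          (le_add_of_nonneg_left zero_le_one)
      · exact ((div_le_one hq).mpr (hq₀ _ hge)).trans hB
    · rw [one_mul]
      exact hq₀ _ ((not_lt.mp hpq).trans (Nat.le_self_pow hk p))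
  refine ⟨B ^ q₀, by positivity, fun N hN => ?_⟩
  calc (N.factorization.prod fun p k => g (p ^ k))
      ≤ ∏ p ∈ N.primeFactors,
          (if p < q₀ then B else 1) * ((p ^ N.factorization p : ℕ) : ℝ) ^ θ :=
        Finset.prod_le_prod (fun p _ => hg _) fun p hp =>
          hsmall p _ (Nat.prime_of_mem_primeFactors hp) (Finsupp.mem_support_iff.mp hp)
    _ = B ^ (N.primeFactors.filter (· < q₀)).card * (N : ℝ) ^ θ := by
        rw [Finset.prod_mul_distrib, ← Finset.prod_filter, Finset.prod_const,
          Real.finsetProd_rpow _ _ (fun p _ => by positivity), ← Nat.cast_prod]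
        congr 3
        exact Nat.prod_factorization_pow_eq_self hN
    _ ≤ B ^ q₀ * (N : ℝ) ^ θ := by
        gcongr
        · refine (Finset.card_le_card fun p hp => ?_).trans_eq (Finset.card_range q₀)
          exact Finset.mem_range.mpr (Finset.mem_filter.mp hp).2

namespace KakeyaMaximalBound

variable {n : ℕ}

lemma zmod_mul {M N : ℕ} [NeZero M] [NeZero N] (hMN : M.Coprime N) {A B : ℝ} (hA : 0 ≤ A)
    (hM : KakeyaMaximalBound (ZMod M) n A) (hN : KakeyaMaximalBound (ZMod N) n B) :
    KakeyaMaximalBound (ZMod (M * N)) n (A * B) :=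
  (prod hA hM hN).of_ringEquiv (ZMod.chineseRemainder hMN).symm

lemma zmod_factorization_prod {g : ℕ → ℝ} (hg : ∀ q, 0 ≤ g q)
    (h : ∀ p k : ℕ, ∀ [Fact p.Prime], k ≠ 0 → KakeyaMaximalBound (ZMod (p ^ k)) n (g (p ^ k)))
    (N : ℕ) : ∀ [NeZero N],
      KakeyaMaximalBound (ZMod N) n (N.factorization.prod fun p k => g (p ^ k)) := by
  induction N using Nat.recOnPosPrimePosCoprime with
  | zero => exact fun {h0} => absurd rfl h0.out
  | one => simpa using of_subsingleton
  | prime_pow p k hp hk =>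
    have : Fact p.Prime := ⟨hp⟩
    intro _
    rw [hp.factorization_pow, Finsupp.prod, Finsupp.support_single p hk.ne',
      Finset.prod_singleton, Finsupp.single_eq_same]
    exact h p k hk.ne'
  | coprime M N hM hN hMN ihM ihN =>
    have : NeZero M := ⟨by lia⟩
    have : NeZero N := ⟨by lia⟩
    rw [Nat.factorization_mul_of_coprime hMN,
      Finsupp.prod_add_index_of_disjoint hMN.disjoint_primeFactors]
    exact fun {_} => zmod_mul hMN (Finset.prod_nonneg fun _ _ => hg _) ihM ihN

lemma exists_forall_zmod {η : ℝ} (hη : 0 < η) :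
    ∃ C : ℝ, 0 ≤ C ∧ ∀ (N : ℕ) [NeZero N],
      KakeyaMaximalBound (ZMod N) n (C * (N : ℝ) ^ ((n - 1 : ℕ) + η)) := by
  let K : ℝ := 2 * n * (4 * n) ^ (n - 1)
  let g (q : ℕ) : ℝ := K * (Nat.log 2 q + 1 : ℕ) ^ (2 * n) * (q : ℝ) ^ (n - 1)
  have hg : ∀ q, 0 ≤ g q := fun q => by positivity
  have hgrowth : ∀ᶠ q : ℕ in atTop, g q ≤ (q : ℝ) ^ ((n - 1 : ℕ) + η) := by
    filter_upwards [eventually_mul_natLog_pow_le_rpow K (2 * n) hη, eventually_gt_atTop 0]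
      with q hq hq0
    rw [add_comm, Real.rpow_add (Nat.cast_pos.mpr hq0), Real.rpow_natCast]
    exact mul_le_mul_of_nonneg_right hq (by positivity)
  obtain ⟨C, hC, hN⟩ := exists_factorization_prod_le_mul_rpow hg hgrowth
  refine ⟨C, hC, fun N _ => (zmod_factorization_prod hg (fun p k _ hk => ?_) N).mono
    (hN N (NeZero.ne N))⟩
  exact zmod_prime_pow hk

end KakeyaMaximalBound

end AllModuli

section Duality

open Finset NNReal

lemma sum_card_filter_mem_mul {ι X R : Type*} [Fintype X] [DecidableEq X] [NonAssocSemiring R]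
    (P : Finset ι) (L : ι → Finset X) (f : X → R) :
    ∑ x, (#{i ∈ P | x ∈ L i} : R) * f x = ∑ i ∈ P, ∑ x ∈ L i, f x := by
  simp_rw [← nsmul_eq_mul, ← sum_const, sum_filter]
  rw [sum_comm]
  simp

lemma rpow_sum_card_filter_mem_rpow_le {ι X : Type*} [Fintype X] [DecidableEq X] {p q : ℝ}
    (hpq : p.HolderConjugate q) (P : Finset ι) (L : ι → Finset X) {A : ℝ} (hA : 0 ≤ A)
    (h : ∀ f : X → ℝ, (∀ x, 0 ≤ f x) →
      ∑ i ∈ P, (∑ x ∈ L i, f x) ^ q ≤ A * ∑ x, f x ^ q) :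
    (∑ x, (#{i ∈ P | x ∈ L i} : ℝ) ^ p) ^ (1 / p) ≤ A ^ (1 / q) * (#P : ℝ) ^ (1 / p) := by
  obtain ⟨g, hg, hgsum : ∑ x, (#{i ∈ P | x ∈ L i} : ℝ≥0) * g x = _⟩ :=
    (NNReal.isGreatest_Lp univ (fun x => (#{i ∈ P | x ∈ L i} : ℝ≥0)) hpq).1
  have hgq : ∑ x, (g x : ℝ) ^ q ≤ 1 := by exact_mod_cast hg
  have hdual : (∑ x, (#{i ∈ P | x ∈ L i} : ℝ) ^ p) ^ (1 / p) = ∑ i ∈ P, ∑ x ∈ L i, (g x : ℝ) := by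
    rw [← sum_card_filter_mem_mul]
    simpa using congrArg NNReal.toReal hgsum.symm
  have hsum (i : ι) : 0 ≤ ∑ x ∈ L i, (g x : ℝ) := sum_nonneg fun x _ => (g x).2
  calc (∑ x, (#{i ∈ P | x ∈ L i} : ℝ) ^ p) ^ (1 / p)
      = ∑ i ∈ P, (∑ x ∈ L i, (g x : ℝ)) * 1 := by simp_rw [hdual, mul_one]
    _ ≤ (∑ i ∈ P, (∑ x ∈ L i, (g x : ℝ)) ^ q) ^ (1 / q) * (∑ _i ∈ P, (1 : ℝ) ^ p) ^ (1 / p) :=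
        Real.inner_le_Lp_mul_Lq_of_nonneg P hpq.symm (fun i _ => hsum i) fun _ _ => zero_le_one
    _ ≤ A ^ (1 / q) * (#P : ℝ) ^ (1 / p) := by
        have hq : 0 ≤ 1 / q := one_div_nonneg.mpr hpq.symm.nonneg
        rw [Real.one_rpow, sum_const, nsmul_one]
        gcongr
        exact (h (fun x => g x) fun x => (g x).2).trans (mul_le_of_le_one_right hA hgq)

end Duality

section Lines

variable {N n : ℕ} {u : Fin n → ZMod N}

lemma add_smul_injective (a : Fin n → ZMod N) (hu : IsPrimitiveVec u) :
    Function.Injective fun t : ZMod N => a + t • u :=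
  (add_right_injective a).comp (IsUnimodular.smul_left_injective hu)

variable [NeZero N]

lemma card_lineF (a : Fin n → ZMod N) (hu : IsPrimitiveVec u) : (lineF a u).card = N := by
  rw [lineF, Finset.card_image_of_injective _ (add_smul_injective a hu), Finset.card_univ,
    ZMod.card]

lemma sum_lineF_le_lineMax (a : Fin n → ZMod N) (hu : IsPrimitiveVec u)
    (f : (Fin n → ZMod N) → ℝ) : ∑ x ∈ lineF a u, f x ≤ lineMax f u := by
  rw [lineF, Finset.sum_image (add_smul_injective a hu).injOn]
  exact sum_le_lineMax f a u

lemma KakeyaMaximalBound.rpow_sum_card_lineF_le {A : ℝ} (h : KakeyaMaximalBound (ZMod N) n A)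
    (hA : 0 ≤ A) (hn : 1 < n) {P : Finset (Fin n → ZMod N)} (hP : ∀ u ∈ P, IsPrimitiveVec u)
    (hdistinct : ∀ u ∈ P, ∀ w ∈ P, ∀ c : (ZMod N)ˣ, u = c • w → u = w)
    (a : (Fin n → ZMod N) → (Fin n → ZMod N)) :
    (∑ x, ((P.filter fun u => x ∈ lineF (a u) u).card : ℝ) ^ ((n : ℝ) / ((n : ℝ) - 1)))
        ^ (((n : ℝ) - 1) / (n : ℝ)) ≤
      A ^ (1 / (n : ℝ)) * (P.card : ℝ) ^ (((n : ℝ) - 1) / (n : ℝ)) := by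
  have hconj : ((n : ℝ) / (n - 1)).HolderConjugate n :=
    (Real.HolderConjugate.conjExponent (Nat.one_lt_cast.mpr hn)).symm
  rw [← one_div_div (n : ℝ)]
  refine rpow_sum_card_filter_mem_rpow_le hconj P (fun u => lineF (a u) u) hA fun f hf => ?_
  simp_rw [Real.rpow_natCast]
  refine (Finset.sum_le_sum fun u hu => ?_).trans (h.sum_pow_le hP hdistinct hf)
  exact pow_le_pow_left₀ (Finset.sum_nonneg fun x _ => hf x)
    (sum_lineF_le_lineMax (a u) (hP u hu) f) n

end Lines

lemma IsProjRepSet.eq_of_eq_smul {N n : ℕ} [NeZero N] {P : Finset (Fin n → ZMod N)}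
    (hP : IsProjRepSet N n P) {u w : Fin n → ZMod N} (hu : u ∈ P) (hw : w ∈ P) {c : (ZMod N)ˣ}
    (h : u = (c : ZMod N) • w) : u = w :=
  (hP.2 u (hP.1 u hu)).unique ⟨hu, 1, by simp⟩ ⟨hw, c, h⟩

theorem stmt6_general (ε : ℝ) (hε : 0 < ε) (n : ℕ) (hn : 1 ≤ n) :
    ∃ C : ℝ, ∀ (N : ℕ) [NeZero N] (P : Finset (Fin n → ZMod N)),
      (∀ u ∈ P, IsPrimitiveVec u) →
      (∀ u ∈ P, ∀ w ∈ P, ∀ c : (ZMod N)ˣ, u = (c : ZMod N) • w → u = w) →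
      ∀ a : (Fin n → ZMod N) → (Fin n → ZMod N),
      (∑ x : Fin n → ZMod N,
          ((P.filter fun u => x ∈ lineF (a u) u).card : ℝ) ^ ((n : ℝ) / ((n : ℝ) - 1)))
          ^ (((n : ℝ) - 1) / (n : ℝ)) ≤
        C * (N : ℝ) ^ ε *
          (∑ u ∈ P, ((lineF (a u) u).card : ℝ)) ^ (((n : ℝ) - 1) / (n : ℝ)) := by
  obtain rfl | hn := hn.eq_or_lt
  · exact ⟨1, fun N _ P _ _ a => by
      simpa using Real.one_le_rpow (Nat.one_le_cast.mpr (NeZero.pos N)) hε.le⟩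
  obtain ⟨C, hC, hmax⟩ := KakeyaMaximalBound.exists_forall_zmod (n := n) (η := n * ε)
    (by positivity)
  refine ⟨C ^ (1 / (n : ℝ)), fun N _ P hP hdistinct a => ?_⟩
  have hN : (0 : ℝ) < N := Nat.cast_pos.mpr (NeZero.pos N)
  have hlines : ∑ u ∈ P, ((lineF (a u) u).card : ℝ) = P.card * N := by
    rw [Finset.sum_congr rfl fun u hu => by rw [card_lineF (a u) (hP u hu)], Finset.sum_const,
      nsmul_eq_mul]
  refine ((hmax N).rpow_sum_card_lineF_le (by positivity) hn hP hdistinct a).trans_eq ?_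
  have hexp : ((n - 1 : ℕ) + n * ε) * (1 / (n : ℝ)) = ε + (n - 1) / n := by
    rw [Nat.cast_pred (by lia)]
    field_simp
    ring
  rw [hlines, Real.mul_rpow hC (by positivity), ← Real.rpow_mul hN.le, hexp, Real.rpow_add hN,
    Real.mul_rpow (Nat.cast_nonneg _) hN.le]
  ring

/- The Kakeya maximal conjecture over `ℤ/Nℤ`: the choice of lines is encoded by the
base points `a u` of the lines `L(u) = lineF (a u) u`, and
`h x = #{u ∈ P : x ∈ L(u)}`.  Powers with real exponents are `Real.rpow`. -/
theorem stmt6 (ε : ℝ) (hε : 0 < ε) (n : ℕ) (hn : 1 ≤ n) :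
    ∃ C : ℝ, ∀ (N : ℕ) [NeZero N], 1 ≤ N →
      ∀ P : Finset (Fin n → ZMod N), IsProjRepSet N n P →
      ∀ a : (Fin n → ZMod N) → (Fin n → ZMod N),
      (∑ x : Fin n → ZMod N,
          ((P.filter fun u => x ∈ lineF (a u) u).card : ℝ) ^ ((n : ℝ) / ((n : ℝ) - 1)))
          ^ (((n : ℝ) - 1) / (n : ℝ)) ≤
        C * (N : ℝ) ^ ε *
          (∑ u ∈ P, ((lineF (a u) u).card : ℝ)) ^ (((n : ℝ) - 1) / (n : ℝ)) := by
  obtain ⟨C, hC⟩ := stmt6_general ε hε n hn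
  exact ⟨C, fun N _ _ P hP => hC N P hP.1 fun u hu w hw c => hP.eq_of_eq_smul hu hw⟩
end

section
/- Let q be a prime power, n, r ≥ 1 integers, ε ∈ [0,1], and let B ⊆ ℙF_q^{n-1} satisfy |B| ≥ ε·|ℙF_q^{n-1}|. Then for any integer d with 0 ≤ d < r·q there exists a set P of monomials in F_q[x₁,…,x_n] of degree exactly d with |P| ≥ ε·C(d+n−1, n−1) such that no nonzero F_q-linear combination of the monomials in P vanishes with multiplicity at least r at every point of B. -/
/-- The `j`-th (multivariate) Hasse derivative of `Q`, i.e. the coefficient of `z^j`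
in the expansion `Q(x+z) = ∑_j Q^{(j)}(x)·z^j`. -/
noncomputable def mvHasseDeriv {F : Type*} [CommSemiring F] {n : ℕ} (j : Fin n →₀ ℕ)
    (Q : MvPolynomial (Fin n) F) : MvPolynomial (Fin n) F :=
  ∑ v ∈ Q.support, MvPolynomial.monomial (v - j)
    (Q.coeff v * ((∏ i, (v i).choose (j i) : ℕ) : F))

/-- `Q` vanishes at `a` with multiplicity at least `r`: all Hasse derivatives of weight
less than `r` vanish at `a`. -/
def VanishesWithMult {F : Type*} [CommSemiring F] {n : ℕ}
    (Q : MvPolynomial (Fin n) F) (a : Fin n → F) (r : ℕ) : Prop :=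
  ∀ j : Fin n →₀ ℕ, (j.sum fun _ e => e) < r → MvPolynomial.eval a (mvHasseDeriv j Q) = 0

/-!
Forms of degree `d` vanishing to order at least `r` at a point `x` form a subspace `K x`, and
`⨅ x, K x = ⊥` by the Schwartz–Zippel lemma with multiplicities. A basis of the dual space chosen
from the annihilators of the `K x` therefore distributes the dimension `D` of the space of forms as
a weight on the points such that `K x`, for `x` in a set `T`, meet in codimension at least the
weight of `T`. The special linear group acts transitively on the points and permutes the `K x`, so
averaging over the translates of `B` bounds the codimension of `⨅ x ∈ B, K x` below by
`|B| / |ℙ| * D`. Monomials whose classes form a basis of the quotient by this intersection are the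
required set.
-/

open Module MvPolynomial
open scoped LinearAlgebra.Projectivization

section Averaging

variable {G X : Type*} [Group G] [MulAction G X] [MulAction.IsPretransitive G X]

theorem sum_comp_smul_eq [Fintype G] {M : Type*} [AddCommMonoid M] (w : X → M) (x y : X) :
    ∑ g : G, w (g • x) = ∑ g : G, w (g • y) := by
  obtain ⟨h, rfl⟩ := MulAction.exists_smul_eq G x y
  simp only [smul_smul]
  exact (Fintype.sum_equiv (Equiv.mulRight h) _ _ fun _ ↦ rfl).symm

variable (G) in
theorem exists_card_mul_sum_le_card_mul_sum_smul [Finite G] [Fintype X] (w : X → ℕ)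
    (S : Finset X) :
    ∃ g : G, S.card * ∑ x, w x ≤ Fintype.card X * ∑ x ∈ S, w (g • x) := by
  have := Fintype.ofFinite G
  rcases S.eq_empty_or_nonempty with rfl | ⟨x₀, -⟩
  · exact ⟨1, by simp⟩
  have sum_orbit (T : Finset X) :
      ∑ g : G, ∑ x ∈ T, w (g • x) = T.card * ∑ g : G, w (g • x₀) := by
    rw [Finset.sum_comm, Finset.sum_congr rfl fun x _ ↦ sum_comp_smul_eq w x x₀,
      Finset.sum_const, smul_eq_mul]
  have sum_translate (g : G) : ∑ x, w (g • x) = ∑ x, w x := Equiv.sum_comp (MulAction.toPerm g) w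
  have sum_eq : ∑ _g : G, S.card * ∑ x, w x = ∑ g : G, Fintype.card X * ∑ x ∈ S, w (g • x) :=
    calc ∑ _g : G, S.card * ∑ x, w x = S.card * ∑ g : G, ∑ x, w (g • x) := by
          simp only [sum_translate, Finset.mul_sum]
      _ = ∑ g : G, Fintype.card X * ∑ x ∈ S, w (g • x) := by
          rw [← Finset.mul_sum, sum_orbit, sum_orbit, Finset.card_univ, Nat.mul_left_comm]
  obtain ⟨g, -, hg⟩ := Finset.exists_le_of_sum_le Finset.univ_nonempty sum_eq.le
  exact ⟨g, hg⟩

end Averaging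

section LinearAlgebra

variable {F V : Type*} [Field F] [AddCommGroup V] [Module F V]

theorem exists_finset_card_eq_finrank_quotient [FiniteDimensional F V] {ι : Type*} {v : ι → V}
    (hv : Submodule.span F (Set.range v) = ⊤) (K : Submodule F V) :
    ∃ P : Finset ι, P.card = finrank F (V ⧸ K) ∧
      ∀ c : ι → F, ∑ i ∈ P, c i • v i ∈ K → ∀ i ∈ P, c i = 0 := by
  obtain ⟨κ, a, ha, hspan, hli⟩ := exists_linearIndependent' F (K.mkQ ∘ v)
  have := hli.finite
  have := Fintype.ofFinite κ
  rw [Set.range_comp K.mkQ v, Submodule.span_image, hv, Submodule.map_top, K.range_mkQ] at hspan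
  refine ⟨Finset.univ.map ⟨a, ha⟩, ?_, fun c hc ↦ ?_⟩
  · rw [Finset.card_map, Finset.card_univ, ← finrank_top, ← hspan, finrank_span_eq_card hli]
  · rw [Finset.sum_map, ← K.ker_mkQ, LinearMap.mem_ker, map_sum] at hc
    simp only [map_smul] at hc
    have h0 := Fintype.linearIndependent_iff.mp hli (fun k ↦ c (a k)) hc
    simpa using h0

theorem exists_weight_of_iSup_eq_top [FiniteDimensional F V] {X : Type*} [Fintype X]
    {W : X → Submodule F V} (hW : ⨆ x, W x = ⊤) :
    ∃ w : X → ℕ, ∑ x, w x = finrank F V ∧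
      ∀ T : Finset X, ∑ x ∈ T, w x ≤ finrank F ↥(⨆ x ∈ T, W x) := by
  classical
  obtain ⟨κ, a, -, hspan, hli⟩ := exists_linearIndependent' F
    (fun u : Σ x, W x ↦ (u.2 : V))
  have := hli.finite
  have := Fintype.ofFinite κ
  have range_eq : Set.range (fun u : Σ x, W x ↦ (u.2 : V)) = ⋃ x, (W x : Set V) := by
    ext; simp
  have card_eq : Fintype.card κ = finrank F V := by
    rw [← finrank_span_eq_card hli, hspan, range_eq, ← Submodule.iSup_eq_span, hW, finrank_top]
  refine ⟨fun x ↦ (Finset.univ.filter fun k ↦ (a k).1 = x).card, ?_, fun T ↦ ?_⟩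
  · rw [← card_eq, ← Finset.card_univ]
    exact (Finset.card_eq_sum_card_fiberwise fun _ _ ↦ Finset.mem_univ _).symm
  · have mem (k : {k // (a k).1 ∈ T}) : ((a k).2 : V) ∈ ⨆ x ∈ T, W x :=
      Submodule.mem_iSup_of_mem (a k).1 (Submodule.mem_iSup_of_mem k.2 (a k).2.2)
    have hli' : LinearIndependent F fun k : {k // (a k).1 ∈ T} ↦
        (⟨(a k).2, mem k⟩ : ↥(⨆ x ∈ T, W x)) :=
      .of_comp (Submodule.subtype _) (hli.comp _ Subtype.val_injective)
    calc ∑ x ∈ T, (Finset.univ.filter fun k ↦ (a k).1 = x).card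
        = (Finset.univ.filter fun k ↦ (a k).1 ∈ T).card := by
          rw [← Finset.card_biUnion ?_]
          · congr 1; ext; simp
          · intro x _ y _ hxy
            rw [Function.onFun, Finset.disjoint_filter]
            exact fun k _ hx hy ↦ hxy (hx.symm.trans hy)
      _ ≤ _ := by
        rw [← Fintype.card_subtype]; exact hli'.fintype_card_le_finrank

theorem finrank_dualAnnihilator [FiniteDimensional F V] (K : Submodule F V) :
    finrank F K.dualAnnihilator = finrank F (V ⧸ K) := by
  have := Subspace.finrank_add_finrank_dualAnnihilator_eq K
  have := K.finrank_quotient_add_finrank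
  omega

theorem exists_weight_of_iInf_eq_bot [FiniteDimensional F V] {X : Type*} [Fintype X]
    {K : X → Submodule F V} (hK : ⨅ x, K x = ⊥) :
    ∃ w : X → ℕ, ∑ x, w x = finrank F V ∧
      ∀ T : Finset X, ∑ x ∈ T, w x ≤ finrank F (V ⧸ ⨅ x ∈ T, K x) := by
  have annihilators_span : ⨆ x, (K x).dualAnnihilator = ⊤ := by
    rw [← Subspace.dualAnnihilator_iInf_eq, hK, Submodule.dualAnnihilator_bot]
  obtain ⟨w, hw, hwT⟩ := exists_weight_of_iSup_eq_top annihilators_span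
  refine ⟨w, hw.trans Subspace.dual_finrank_eq, fun T ↦ (hwT T).trans ?_⟩
  rw [← finrank_dualAnnihilator]
  exact Submodule.finrank_mono <| iSup₂_le fun x hx ↦
    Submodule.dualAnnihilator_anti (iInf₂_le x hx)

theorem card_mul_finrank_le_card_mul_finrank_quotient_iInf [FiniteDimensional F V]
    {G X : Type*} [Group G] [Finite G] [MulAction G X]
    [MulAction.IsPretransitive G X] [Finite X] (ρ : Representation F G V)
    {K : X → Submodule F V} (hK : ⨅ x, K x = ⊥) (hρ : ∀ g x, (K x).map (ρ g) ≤ K (g • x))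
    (S : Finset X) :
    S.card * finrank F V ≤ Nat.card X * finrank F (V ⧸ ⨅ x ∈ S, K x) := by
  classical
  have := Fintype.ofFinite X
  rw [Nat.card_eq_fintype_card]
  obtain ⟨w, hw, hwT⟩ := exists_weight_of_iInf_eq_bot hK
  obtain ⟨g, hg⟩ := exists_card_mul_sum_le_card_mul_sum_smul G w S
  have map_le : (⨅ x ∈ S, K x).map (ρ g) ≤ ⨅ y ∈ S.image (g • ·), K y := by
    rw [Finset.iInf_finset_image]
    exact le_iInf₂ fun x hx ↦ (Submodule.map_mono (iInf₂_le x hx)).trans (hρ g x)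
  have codim_le : finrank F (V ⧸ ⨅ y ∈ S.image (g • ·), K y) ≤ finrank F (V ⧸ ⨅ x ∈ S, K x) := by
    have := (LinearEquiv.ofBijective (ρ g) (ρ.apply_bijective g)).finrank_map_eq (⨅ x ∈ S, K x)
    have := (Submodule.finrank_mono map_le).trans' this.ge
    have := Submodule.finrank_quotient_add_finrank (⨅ x ∈ S, K x)
    have := Submodule.finrank_quotient_add_finrank (⨅ y ∈ S.image (g • ·), K y)
    omega
  calc S.card * finrank F V = S.card * ∑ x, w x := by rw [hw]
    _ ≤ Fintype.card X * ∑ x ∈ S, w (g • x) := hg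
    _ = Fintype.card X * ∑ y ∈ S.image (g • ·), w y := by
      rw [Finset.sum_image (MulAction.injective g).injOn]
    _ ≤ Fintype.card X * finrank F (V ⧸ ⨅ x ∈ S, K x) :=
      Nat.mul_le_mul_left _ ((hwT _).trans codim_le)

end LinearAlgebra

section Translation

variable {σ R : Type*} [CommSemiring R]

/-- The substitution `Q(x) ↦ Q(x + a)`; its value at `Q` is the Taylor expansion of `Q`
about `a`. -/
noncomputable def mvTaylor (a : σ → R) : MvPolynomial σ R →ₐ[R] MvPolynomial σ R :=
  aeval fun i ↦ X i + C (a i)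

theorem mvTaylor_zero : mvTaylor (0 : σ → R) = AlgHom.id R _ := by
  ext; simp [mvTaylor]

theorem mvTaylor_comp_mvTaylor (a b : σ → R) :
    (mvTaylor a).comp (mvTaylor b) = mvTaylor (a + b) := by
  ext; simp [mvTaylor, add_assoc]

theorem mvTaylor_neg_mvTaylor {R : Type*} [CommRing R] (a : σ → R) (Q : MvPolynomial σ R) :
    mvTaylor (-a) (mvTaylor a Q) = Q := by
  rw [← AlgHom.comp_apply, mvTaylor_comp_mvTaylor, neg_add_cancel, mvTaylor_zero,
    AlgHom.id_apply]

theorem mvTaylor_injective {R : Type*} [CommRing R] (a : σ → R) : Function.Injective (mvTaylor a) :=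
  Function.LeftInverse.injective (mvTaylor_neg_mvTaylor a)

theorem eval_comp_mvTaylor (a b : σ → R) :
    (eval a).comp (mvTaylor b : MvPolynomial σ R →+* MvPolynomial σ R) = eval (a + b) := by
  ext <;> simp [mvTaylor]

theorem idealOfVars_eq_ker_eval_zero : idealOfVars σ R = RingHom.ker (eval (0 : σ → R)) := by
  ext Q
  rw [← pow_one (idealOfVars σ R), mem_pow_idealOfVars_iff', RingHom.mem_ker, eval_zero,
    constantCoeff_eq]
  simp [Finsupp.degree_eq_zero_iff]

theorem coeff_prod_X_add_C_pow [Fintype σ] (a : σ → R) (v j : σ →₀ ℕ) :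
    coeff j (∏ i, (X i + C (a i)) ^ v i) = ∏ i, a i ^ (v i - j i) * (v i).choose (j i) := by
  classical
  have prod_eq_monomial (p : σ → ℕ) :
      ∏ i, (X i ^ p i * C (a i) ^ (v i - p i) * ((v i).choose (p i) : MvPolynomial σ R)) =
        monomial (Finsupp.equivFunOnFinite.symm p)
          (∏ i, a i ^ (v i - p i) * (v i).choose (p i)) := by
    simp only [mul_assoc, Finset.prod_mul_distrib (f := fun i ↦ X i ^ p i)]
    rw [monomial_eq, Finsupp.prod_fintype _ _ (by simp), map_prod, mul_comm]
    simp
  simp only [add_pow, Finset.prod_univ_sum, prod_eq_monomial, coeff_sum, coeff_monomial,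
    Equiv.symm_apply_eq, Finsupp.equivFunOnFinite]
  simp only [Equiv.coe_fn_mk, Finset.sum_ite_eq', Fintype.mem_piFinset, Finset.mem_range,
    Nat.lt_succ_iff, ite_eq_left_iff, not_forall, not_le]
  rintro ⟨i, hi⟩
  exact (Finset.prod_eq_zero (Finset.mem_univ i) (by simp [Nat.choose_eq_zero_of_lt hi])).symm

theorem coeff_mvTaylor {n : ℕ} (a : Fin n → R) (j : Fin n →₀ ℕ) (Q : MvPolynomial (Fin n) R) :
    coeff j (mvTaylor a Q) = eval a (mvHasseDeriv j Q) := by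
  simp only [mvTaylor, aeval_def, eval₂_eq', algebraMap_eq, mvHasseDeriv, coeff_sum, map_sum,
    coeff_C_mul, coeff_prod_X_add_C_pow, eval_monomial]
  refine Finset.sum_congr rfl fun v _ ↦ ?_
  rw [Finset.prod_mul_distrib, Finsupp.prod_fintype _ _ (by simp), Nat.cast_prod]
  simp only [Finsupp.tsub_apply]
  ring

theorem totalDegree_mvTaylor_le [Finite σ] (a : σ → R) (Q : MvPolynomial σ R) :
    (mvTaylor a Q).totalDegree ≤ Q.totalDegree := by
  have := Fintype.ofFinite σ
  simp only [mvTaylor, aeval_def, eval₂_eq', algebraMap_eq]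
  refine totalDegree_finsetSum_le fun v hv ↦ ?_
  calc (C (Q.coeff v) * ∏ i, (X i + C (a i)) ^ v i).totalDegree
      ≤ ∑ i, v i := by
        refine (totalDegree_mul _ _).trans ?_
        rw [totalDegree_C, zero_add]
        refine (totalDegree_finsetProd _ _).trans (Finset.sum_le_sum fun i _ ↦ ?_)
        refine (totalDegree_pow _ _).trans (mul_le_of_le_one_right bot_le ?_)
        exact (totalDegree_add _ _).trans (by simp [(isHomogeneous_X R i).totalDegree_le])
    _ ≤ Q.totalDegree := by
        simpa [Finsupp.sum_fintype] using le_totalDegree hv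

end Translation

section Multiplicity

variable {R : Type*} [CommRing R] {n r : ℕ} {Q : MvPolynomial (Fin n) R} {a : Fin n → R}

theorem vanishesWithMult_iff_coeff :
    VanishesWithMult Q a r ↔ ∀ j : Fin n →₀ ℕ, j.degree < r → coeff j (mvTaylor a Q) = 0 := by
  simp only [coeff_mvTaylor]
  rfl

theorem vanishesWithMult_iff_mem_ker_eval_pow :
    VanishesWithMult Q a r ↔ Q ∈ RingHom.ker (eval a) ^ r := by
  have mvTaylor_mem (b c : Fin n → R) {T : MvPolynomial (Fin n) R}
      (hT : T ∈ RingHom.ker (eval (b + c)) ^ r) : mvTaylor c T ∈ RingHom.ker (eval b) ^ r := by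
    rw [← eval_comp_mvTaylor, ← RingHom.comap_ker] at hT
    exact Ideal.le_comap_pow _ r hT
  rw [vanishesWithMult_iff_coeff, ← mem_pow_idealOfVars_iff', idealOfVars_eq_ker_eval_zero]
  refine ⟨fun h ↦ ?_, fun h ↦ mvTaylor_mem 0 a (by rwa [zero_add])⟩
  rw [← mvTaylor_neg_mvTaylor a Q]
  exact mvTaylor_mem a (-a) (by rwa [add_neg_cancel])

theorem VanishesWithMult.eq_zero_of_totalDegree_lt (h : VanishesWithMult Q a r)
    (hQ : Q.totalDegree < r) : Q = 0 := by
  refine (map_eq_zero_iff _ (mvTaylor_injective a)).mp (ext _ _ fun j ↦ ?_)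
  rw [coeff_zero]
  rcases lt_or_ge j.degree r with hj | hj
  · exact vanishesWithMult_iff_coeff.mp h j hj
  · exact coeff_eq_zero_of_totalDegree_lt
      (((totalDegree_mvTaylor_le a Q).trans_lt hQ).trans_le hj)

theorem VanishesWithMult.map {m : ℕ} {b : Fin n → R} (h : VanishesWithMult Q b r)
    {φ : MvPolynomial (Fin n) R →+* MvPolynomial (Fin m) R} {a : Fin m → R}
    (hφ : (eval a).comp φ = eval b) : VanishesWithMult (φ Q) a r := by
  rw [vanishesWithMult_iff_mem_ker_eval_pow] at h ⊢
  rw [← hφ, ← RingHom.comap_ker] at h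
  exact Ideal.le_comap_pow φ r h

end Multiplicity

section LinearMap

variable {F A : Type*} [CommSemiring F] [CommSemiring A] [Algebra F A]

/-- The polynomial obtained by applying an `F`-linear functional to every coefficient of a
polynomial over an `F`-algebra. -/
noncomputable def mapCoeff (l : A →ₗ[F] F) : Polynomial A →ₗ[F] Polynomial F :=
  Polynomial.lsum fun k ↦ Polynomial.monomial k ∘ₗ l

theorem mapCoeff_monomial (l : A →ₗ[F] F) (k : ℕ) (c : A) :
    mapCoeff l (Polynomial.monomial k c) = Polynomial.monomial k (l c) := by
  simp [mapCoeff, Polynomial.lsum_apply, Polynomial.sum_monomial_index]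

theorem coeff_mapCoeff (l : A →ₗ[F] F) (p : Polynomial A) (k : ℕ) :
    (mapCoeff l p).coeff k = l (p.coeff k) := by
  induction p using Polynomial.induction_on' with
  | add p q hp hq => simp [hp, hq]
  | monomial i c =>
    rw [mapCoeff_monomial, Polynomial.coeff_monomial, Polynomial.coeff_monomial,
      apply_ite l, map_zero]

theorem natDegree_mapCoeff_le (l : A →ₗ[F] F) (p : Polynomial A) :
    (mapCoeff l p).natDegree ≤ p.natDegree :=
  Polynomial.natDegree_le_iff_coeff_eq_zero.mpr fun k hk ↦ by
    rw [coeff_mapCoeff, Polynomial.coeff_eq_zero_of_natDegree_lt hk, map_zero]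

theorem taylor_mapCoeff (l : A →ₗ[F] F) (b : F) (p : Polynomial A) :
    (mapCoeff l p).taylor b = mapCoeff l (p.taylor (algebraMap F A b)) := by
  induction p using Polynomial.induction_on' with
  | add p q hp hq => simp only [map_add, hp, hq]
  | monomial i c =>
    ext k
    have : c * (algebraMap F A b ^ (i - k) * (i.choose k : A)) =
        (b ^ (i - k) * (i.choose k : F)) • c := by
      rw [Algebra.smul_def, mul_comm, map_mul, map_pow, map_natCast]
    rw [mapCoeff_monomial, coeff_mapCoeff, Polynomial.taylor_monomial, Polynomial.taylor_monomial,
      Polynomial.coeff_C_mul, Polynomial.coeff_C_mul, Polynomial.coeff_X_add_C_pow,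
      Polynomial.coeff_X_add_C_pow, this, map_smul, smul_eq_mul, mul_comm]

end LinearMap

theorem finSuccEquiv_mvTaylor_cons {R : Type*} [CommSemiring R] {m : ℕ} (b : R) (a : Fin m → R)
    (Q : MvPolynomial (Fin (m + 1)) R) :
    finSuccEquiv R m (mvTaylor (Fin.cons b a) Q) =
      ((finSuccEquiv R m Q).map (mvTaylor a : _ →+* _)).taylor (C b) := by
  induction Q using MvPolynomial.induction_on with
  | C c => simp [mvTaylor, finSuccEquiv_apply]
  | add P Q hP hQ => simp only [map_add, hP, hQ, Polynomial.map_add]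
  | mul_X P i hP =>
    have taylor_X : finSuccEquiv R m (mvTaylor (Fin.cons b a) (X i)) =
        ((finSuccEquiv R m (X i)).map (mvTaylor a : _ →+* _)).taylor (C b) := by
      refine Fin.cases ?_ (fun i ↦ ?_) i <;> simp [mvTaylor, finSuccEquiv_apply]
    rw [map_mul, map_mul, hP, taylor_X, map_mul, Polynomial.map_mul, Polynomial.taylor_mul]

section SchwartzZippel

variable {R : Type*} [CommRing R] [IsDomain R]

theorem mul_card_le_natDegree {u : Polynomial R} (hu : u ≠ 0) {S : Finset R} {s : ℕ}
    (h : ∀ b ∈ S, ∀ k < s, (u.taylor b).coeff k = 0) : s * S.card ≤ u.natDegree := by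
  classical
  have le_count (b : R) (hb : b ∈ S) : s ≤ u.roots.count b := by
    rw [Polynomial.count_roots, Polynomial.le_rootMultiplicity_iff hu,
      Polynomial.X_sub_C_pow_dvd_iff, Polynomial.X_pow_dvd_iff]
    exact h b hb
  calc s * S.card = ∑ _b ∈ S, s := by rw [Finset.sum_const, smul_eq_mul, mul_comm]
    _ ≤ ∑ b ∈ S, u.roots.count b := Finset.sum_le_sum le_count
    _ ≤ ∑ b ∈ S ∪ u.roots.toFinset, u.roots.count b :=
      Finset.sum_le_sum_of_subset Finset.subset_union_left
    _ = u.roots.card := Multiset.sum_count_eq_card fun b hb ↦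
      Finset.mem_union_right _ (Multiset.mem_toFinset.mpr hb)
    _ ≤ u.natDegree := u.card_roots'

theorem vanishesWithMult_coeff_finSuccEquiv {S : Finset R} (hS : 0 < S.card) {m r : ℕ}
    {Q : MvPolynomial (Fin (m + 1)) R} {a : Fin m → R}
    (h : ∀ b ∈ S, VanishesWithMult Q (Fin.cons b a) r) (k : ℕ) :
    VanishesWithMult ((finSuccEquiv R m Q).coeff k) a
      (r - (finSuccEquiv R m Q).natDegree / S.card) := by
  set p := finSuccEquiv R m Q
  refine vanishesWithMult_iff_coeff.mpr fun j hj ↦ ?_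
  -- `u` has a zero of order at least `r - |j|` at every point of `S`, too many for its degree.
  set u := mapCoeff (lcoeff R j) (p.map (mvTaylor a : _ →+* _)) with hu
  have natDegree_u_le : u.natDegree ≤ p.natDegree :=
    (natDegree_mapCoeff_le _ _).trans Polynomial.natDegree_map_le
  have taylor_u (b : R) (hb : b ∈ S) (i : ℕ) (hi : i < r - j.degree) :
      (u.taylor b).coeff i = 0 := by
    rw [hu, taylor_mapCoeff, coeff_mapCoeff, algebraMap_eq, ← finSuccEquiv_mvTaylor_cons,
      lcoeff_apply, finSuccEquiv_coeff_coeff]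
    refine vanishesWithMult_iff_coeff.mp (h b hb) (j.cons i) ?_
    rw [Finsupp.degree_eq_sum, Fin.sum_univ_succ, Finsupp.cons_zero]
    simp only [Finsupp.cons_succ, ← Finsupp.degree_eq_sum]
    omega
  have u_eq_zero : u = 0 := by
    by_contra hu0
    have := (mul_card_le_natDegree hu0 taylor_u).trans natDegree_u_le
    have := (Nat.le_div_iff_mul_le hS).mpr this
    omega
  calc coeff j (mvTaylor a (p.coeff k))
      = u.coeff k := by rw [hu, coeff_mapCoeff, Polynomial.coeff_map, lcoeff_apply, RingHom.coe_coe]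
    _ = 0 := by rw [u_eq_zero, Polynomial.coeff_zero]

theorem eq_zero_of_vanishesWithMult_of_totalDegree_lt {S : Finset R} {n r : ℕ}
    {Q : MvPolynomial (Fin n) R} (hQ : Q.totalDegree < r * S.card)
    (h : ∀ a : Fin n → R, (∀ i, a i ∈ S) → VanishesWithMult Q a r) : Q = 0 := by
  induction n generalizing r with
  | zero =>
    refine (h 0 (Fin.elim0 ·)).eq_zero_of_totalDegree_lt ?_
    rw [eq_C_of_isEmpty Q, totalDegree_C] at hQ ⊢
    exact Nat.pos_of_mul_pos_right hQ
  | succ m ih =>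
    by_contra hQ0
    set p := finSuccEquiv R m Q
    have lead_ne_zero : p.coeff p.natDegree ≠ 0 :=
      Polynomial.leadingCoeff_ne_zero.mpr
        ((map_ne_zero_iff _ (finSuccEquiv R m).injective).mpr hQ0)
    have hS : 0 < S.card := Nat.pos_of_mul_pos_left ((Nat.zero_le _).trans_lt hQ)
    refine lead_ne_zero <| ih (r := r - p.natDegree / S.card) ?_ fun a ha ↦
      vanishesWithMult_coeff_finSuccEquiv hS (fun b hb ↦ h _ (Fin.cases hb ha)) _
    have : (p.coeff p.natDegree).totalDegree + p.natDegree ≤ Q.totalDegree :=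
      totalDegree_coeff_finSuccEquiv_add_le Q _ lead_ne_zero
    have := Nat.div_mul_le_self p.natDegree S.card
    rw [Nat.sub_mul]
    omega

end SchwartzZippel

section LinearSubstitution

variable {R : Type*} [CommSemiring R] {κ ι ν : Type*} [Fintype ι] [Fintype ν]

/-- The linear substitution `Q(x) ↦ Q(M x)`. -/
noncomputable def matrixSubst (M : Matrix κ ι R) : MvPolynomial κ R →ₐ[R] MvPolynomial ι R :=
  aeval M.toMvPolynomial

theorem matrixSubst_one [DecidableEq ι] :
    matrixSubst (1 : Matrix ι ι R) = AlgHom.id R _ := by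
  ext; simp [matrixSubst]

theorem matrixSubst_mul (M : Matrix κ ι R) (N : Matrix ι ν R) :
    matrixSubst (M * N) = (matrixSubst N).comp (matrixSubst M) := by
  ext i : 1
  simp [matrixSubst, Matrix.toMvPolynomial_mul, aeval_eq_bind₁]

theorem eval_comp_matrixSubst (M : Matrix κ ι R) (v : ι → R) :
    (eval v).comp (matrixSubst M : MvPolynomial κ R →+* MvPolynomial ι R) =
      eval (M.mulVec v) := by
  ext i <;> simp [matrixSubst, Matrix.toMvPolynomial_eval_eq_apply]

theorem isHomogeneous_matrixSubst (M : Matrix κ ι R) {Q : MvPolynomial κ R} {d : ℕ}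
    (hQ : Q.IsHomogeneous d) : (matrixSubst M Q).IsHomogeneous d := by
  simpa [matrixSubst] using hQ.aeval _ M.toMvPolynomial_isHomogeneous

theorem matrixSubst_smul (c : R) (M : Matrix κ ι R) {Q : MvPolynomial κ R} {d : ℕ}
    (hQ : Q.IsHomogeneous d) : matrixSubst (c • M) Q = c ^ d • matrixSubst M Q := by
  have toMvPolynomial_smul (i : κ) : (c • M).toMvPolynomial i = C c * M.toMvPolynomial i := by
    simp [Matrix.toMvPolynomial, Finset.mul_sum, C_mul_monomial]
  simp only [matrixSubst, aeval_def, eval₂_eq, Finset.smul_sum, toMvPolynomial_smul]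
  refine Finset.sum_congr rfl fun v hv ↦ ?_
  rw [hQ.degree_eq_sum_deg_support hv]
  simp only [mul_pow, Finset.prod_mul_distrib, Finset.prod_pow_eq_pow_sum, smul_eq_C_mul, map_pow]
  ring

end LinearSubstitution

section MultiplicityLinearSubstitution

variable {R : Type*} [CommRing R] {m n r : ℕ}

theorem vanishesWithMult_matrixSubst {M : Matrix (Fin m) (Fin n) R}
    {Q : MvPolynomial (Fin m) R} {v : Fin n → R} (h : VanishesWithMult Q (M.mulVec v) r) :
    VanishesWithMult (matrixSubst M Q) v r :=
  h.map (eval_comp_matrixSubst M v)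

theorem vanishesWithMult_units_smul_iff {Q : MvPolynomial (Fin n) R} {d : ℕ}
    (hQ : Q.IsHomogeneous d) (c : Rˣ) (v : Fin n → R) :
    VanishesWithMult Q (c • v) r ↔ VanishesWithMult Q v r := by
  have of_smul (c : Rˣ) {v : Fin n → R} (h : VanishesWithMult Q (c • v) r) :
      VanishesWithMult Q v r := by
    have subst_eq : matrixSubst ((c : R) • (1 : Matrix (Fin n) (Fin n) R)) Q =
        C ((c : R) ^ d) * Q := by
      rw [matrixSubst_smul _ _ hQ, matrixSubst_one, AlgHom.id_apply, smul_eq_C_mul]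
    have vanishes : VanishesWithMult (C ((c : R) ^ d) * Q) v r := by
      rw [← subst_eq]
      refine vanishesWithMult_matrixSubst ?_
      rwa [Matrix.smul_mulVec, Matrix.one_mulVec]
    rw [vanishesWithMult_iff_mem_ker_eval_pow] at vanishes ⊢
    exact (Ideal.unit_mul_mem_iff_mem _ ((c.isUnit.pow d).map C)).mp vanishes
  exact ⟨of_smul c, fun h ↦ of_smul c⁻¹ (by rwa [inv_smul_smul])⟩

end MultiplicityLinearSubstitution

theorem eq_zero_of_isHomogeneous_of_vanishesWithMult {R : Type*} [CommRing R] [IsDomain R]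
    [Fintype R] {n d r : ℕ} [NeZero n] {Q : MvPolynomial (Fin n) R} (hQ : Q.IsHomogeneous d)
    (hd : d < r * Fintype.card R) (h : ∀ v : Fin n → R, v ≠ 0 → VanishesWithMult Q v r) :
    Q = 0 := by
  rcases lt_or_ge d r with hdr | hrd
  · exact (h 1 one_ne_zero).eq_zero_of_totalDegree_lt (hQ.totalDegree_le.trans_lt hdr)
  · have vanishes_zero : VanishesWithMult Q 0 r := vanishesWithMult_iff_coeff.mpr fun j hj ↦ by
      rw [mvTaylor_zero, AlgHom.id_apply]
      exact hQ.coeff_eq_zero (hj.trans_le hrd).ne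
    refine eq_zero_of_vanishesWithMult_of_totalDegree_lt (S := Finset.univ) (r := r)
      (hQ.totalDegree_le.trans_lt hd) fun v _ ↦ ?_
    rcases eq_or_ne v 0 with rfl | hv
    · exact vanishes_zero
    · exact h v hv

/-- The basis of the space of forms of degree `d` given by the monomials of degree `d`. -/
noncomputable def homogeneousSubmoduleBasis (σ R : Type*) [CommSemiring R] (d : ℕ) :
    Basis {v : σ →₀ ℕ | v.degree = d} R (homogeneousSubmodule σ R d) :=
  (basisRestrictSupport R _).map
    (LinearEquiv.ofEq _ _ (homogeneousSubmodule_eq_finsupp_supported σ R d).symm)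

theorem coe_homogeneousSubmoduleBasis {σ R : Type*} [CommSemiring R] (d : ℕ)
    (v : {v : σ →₀ ℕ | v.degree = d}) :
    (homogeneousSubmoduleBasis σ R d v : MvPolynomial σ R) = monomial v 1 :=
  congrArg AddMonoidAlgebra.ofCoeff (Finsupp.supportedEquivFinsupp_symm_single (R := R) _ v 1)

instance finite_homogeneousSubmodule {σ R : Type*} [Finite σ] [CommSemiring R] (d : ℕ) :
    Module.Finite R (homogeneousSubmodule σ R d) :=
  Module.Finite.iff_fg.mpr (homogeneousSubmodule_fg σ R d)

theorem finrank_homogeneousSubmodule (σ R : Type*) [Fintype σ] [CommSemiring R]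
    [StrongRankCondition R] (d : ℕ) :
    finrank R (homogeneousSubmodule σ R d) = (Fintype.card σ + d - 1).choose d := by
  classical
  have mem_finsuppAntidiag (v : σ →₀ ℕ) :
      v ∈ Finset.univ.finsuppAntidiag d ↔ v.degree = d := by
    simp [Finset.mem_finsuppAntidiag, Finsupp.degree_eq_sum]
  rw [finrank_eq_nat_card_basis (homogeneousSubmoduleBasis σ R d), ← Finset.card_univ,
    ← Finset.card_finsuppAntidiag_nat_eq_choose]
  exact Nat.subtype_card _ mem_finsuppAntidiag

section Projective

variable {F : Type*} [Field F] {n : ℕ} {d r : ℕ}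

/-- The forms of degree `d` vanishing to order at least `r` at a point of projective space; by
homogeneity the choice of the representative of the point does not matter. -/
noncomputable def vanishingForms (d r : ℕ) (x : ℙ F (Fin n → F)) :
    Submodule F (homogeneousSubmodule (Fin n) F d) :=
  ((RingHom.ker (eval x.rep) ^ r).restrictScalars F).comap (Submodule.subtype _)

theorem mem_vanishingForms {x : ℙ F (Fin n → F)} {Q : homogeneousSubmodule (Fin n) F d} :
    Q ∈ vanishingForms d r x ↔ VanishesWithMult (Q : MvPolynomial (Fin n) F) x.rep r :=
  vanishesWithMult_iff_mem_ker_eval_pow.symm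

theorem vanishesWithMult_rep_mk_iff {v : Fin n → F} (hv : v ≠ 0) {Q : MvPolynomial (Fin n) F}
    (hQ : Q.IsHomogeneous d) :
    VanishesWithMult Q (Projectivization.mk F v hv).rep r ↔ VanishesWithMult Q v r := by
  obtain ⟨c, hc⟩ := Projectivization.exists_smul_eq_mk_rep F v hv
  rw [← hc, vanishesWithMult_units_smul_iff hQ]

theorem mem_vanishingForms_mk {v : Fin n → F} (hv : v ≠ 0)
    {Q : homogeneousSubmodule (Fin n) F d} :
    Q ∈ vanishingForms d r (Projectivization.mk F v hv) ↔
      VanishesWithMult (Q : MvPolynomial (Fin n) F) v r :=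
  mem_vanishingForms.trans (vanishesWithMult_rep_mk_iff hv Q.2)

theorem iInf_vanishingForms_eq_bot [Fintype F] [NeZero n] (hd : d < r * Fintype.card F) :
    ⨅ x : ℙ F (Fin n → F), vanishingForms d r x = ⊥ := by
  refine (Submodule.eq_bot_iff _).mpr fun Q hQ ↦ Subtype.ext ?_
  refine eq_zero_of_isHomogeneous_of_vanishesWithMult Q.2 hd fun v hv ↦ ?_
  exact (mem_vanishingForms_mk hv).mp (Submodule.mem_iInf _ |>.mp hQ _)

/-- The action of the special linear group on forms of degree `d`, `(g • Q)(x) = Q(g⁻¹ x)`. -/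
noncomputable def formRepresentation (n : ℕ) (F : Type*) [Field F] (d : ℕ) :
    Representation F (Matrix.SpecialLinearGroup (Fin n) F) (homogeneousSubmodule (Fin n) F d) where
  toFun g := (matrixSubst (g⁻¹ : Matrix.SpecialLinearGroup (Fin n) F).1).toLinearMap.restrict
    fun _ ↦ isHomogeneous_matrixSubst _
  map_one' := by
    ext1 Q
    simp [LinearMap.restrict_apply, matrixSubst_one]
  map_mul' g h := by
    ext1 Q
    simp [LinearMap.restrict_apply, matrixSubst_mul]

theorem map_formRepresentation_vanishingForms_le (g : Matrix.SpecialLinearGroup (Fin n) F)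
    (x : ℙ F (Fin n → F)) :
    (vanishingForms d r x).map (formRepresentation n F d g) ≤ vanishingForms d r (g • x) := by
  rintro _ ⟨Q, hQ, rfl⟩
  rw [← x.mk_rep, Projectivization.smul_mk, mem_vanishingForms_mk]
  refine vanishesWithMult_matrixSubst ?_
  have : (g⁻¹).1.mulVec (g • x.rep) = x.rep := inv_smul_smul g x.rep
  rw [this]
  exact mem_vanishingForms.mp hQ

theorem exists_finset_monomial_card_le [Fintype F] [NeZero n] (hd : d < r * Fintype.card F)
    (S : Finset (ℙ F (Fin n → F))) :
    ∃ P : Finset (Fin n →₀ ℕ), (∀ v ∈ P, v.degree = d) ∧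
      S.card * (n + d - 1).choose d ≤ Nat.card (ℙ F (Fin n → F)) * P.card ∧
      ∀ c : (Fin n →₀ ℕ) → F,
        (∀ x ∈ S, VanishesWithMult (∑ v ∈ P, monomial v (c v)) x.rep r) → ∀ v ∈ P, c v = 0 := by
  have : MulAction.IsPretransitive (Matrix.SpecialLinearGroup (Fin n) F) (ℙ F (Fin n → F)) :=
    MulAction.isPretransitive_of_is_two_pretransitive
  obtain ⟨P, hP, hPc⟩ := exists_finset_card_eq_finrank_quotient
    (homogeneousSubmoduleBasis (Fin n) F d).span_eq (⨅ x ∈ S, vanishingForms d r x)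
  have codim_le := card_mul_finrank_le_card_mul_finrank_quotient_iInf (formRepresentation n F d)
    (iInf_vanishingForms_eq_bot hd) map_formRepresentation_vanishingForms_le S
  rw [finrank_homogeneousSubmodule, Fintype.card_fin, ← hP] at codim_le
  refine ⟨P.map (.subtype _), fun _ ↦ Finset.property_of_mem_map_subtype P,
    by rwa [Finset.card_map], fun c hc ↦ ?_⟩
  have combination_eq :
      ∑ v ∈ P.map (.subtype _), monomial v (c v) =
        ((∑ v ∈ P, c v • homogeneousSubmoduleBasis (Fin n) F d v :
          homogeneousSubmodule (Fin n) F d) : MvPolynomial (Fin n) F) := by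
    rw [Finset.sum_map, Submodule.coe_sum]
    refine Finset.sum_congr rfl fun v _ ↦ ?_
    rw [Submodule.coe_smul, coe_homogeneousSubmoduleBasis, smul_monomial, smul_eq_mul, mul_one]
    rfl
  have combination_mem :
      ∑ v ∈ P, c v • homogeneousSubmoduleBasis (Fin n) F d v ∈ ⨅ x ∈ S, vanishingForms d r x := by
    simp only [Submodule.mem_iInf, mem_vanishingForms]
    exact fun x hx ↦ combination_eq ▸ hc x hx
  exact Finset.forall_mem_map.mpr (hPc (fun v ↦ c v) combination_mem)

end Projective

theorem bijective_mk_of_existsUnique_smul {K V : Type*} [DivisionRing K] [AddCommGroup V]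
    [Module K V] {p : V → Prop} (hp0 : ∀ w, p w → w ≠ 0)
    (hp : ∀ u : V, u ≠ 0 → ∃! w, p w ∧ ∃ c : Kˣ, u = (c : K) • w) :
    Function.Bijective fun w : {w // p w} ↦ Projectivization.mk K (w : V) (hp0 w w.2) := by
  refine ⟨fun w w' hww' ↦ Subtype.ext ?_, fun x ↦ ?_⟩
  · obtain ⟨c, hc⟩ := (Projectivization.mk_eq_mk_iff K _ _ _ _).mp hww'
    exact (hp w (hp0 w w.2)).unique ⟨w.2, 1, (one_smul K _).symm⟩ ⟨w'.2, c, hc.symm⟩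
  · obtain ⟨w, ⟨hw, c, hc⟩, -⟩ := hp x.rep x.rep_nonzero
    refine ⟨⟨w, hw⟩, ?_⟩
    rw [← x.mk_rep]
    exact ((Projectivization.mk_eq_mk_iff K _ _ _ _).mpr ⟨c, hc.symm⟩).symm

/- `Pr` plays the role of `ℙF_q^{n-1}` (fixed representatives of nonzero vectors up to
scalars); `B ⊆ Pr` has at least an `ε` fraction of the directions.  The produced set `P`
of monomials is encoded by the set of their exponent vectors (all of degree exactly `d`). -/
theorem stmt7 (F : Type) [Field F] [Fintype F] [DecidableEq F] (n r : ℕ)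
    (hn : 1 ≤ n) (hr : 1 ≤ r) (ε : ℝ) (hε0 : 0 ≤ ε) (hε1 : ε ≤ 1)
    (Pr : Finset (Fin n → F)) (hPr0 : ∀ u ∈ Pr, u ≠ 0)
    (hPr : ∀ u : Fin n → F, u ≠ 0 → ∃! w, w ∈ Pr ∧ ∃ c : Fˣ, u = (c : F) • w)
    (B : Finset (Fin n → F)) (hB : B ⊆ Pr) (hBcard : ε * (Pr.card : ℝ) ≤ (B.card : ℝ))
    (d : ℕ) (hd : d < r * Fintype.card F) :
    ∃ P : Finset (Fin n →₀ ℕ),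
      (∀ v ∈ P, (v.sum fun _ e => e) = d) ∧
      ε * ((d + n - 1).choose (n - 1) : ℝ) ≤ (P.card : ℝ) ∧
      ∀ c : (Fin n →₀ ℕ) → F, (∃ v ∈ P, c v ≠ 0) →
        ∃ b ∈ B, ¬ VanishesWithMult (∑ v ∈ P, MvPolynomial.monomial v (c v)) b r := by
  have : NeZero n := ⟨by omega⟩
  have mk_bijective := bijective_mk_of_existsUnique_smul hPr0 hPr
  have card_Pr : Nat.card (ℙ F (Fin n → F)) = Pr.card := by
    rw [← Nat.card_eq_of_bijective _ mk_bijective, Nat.card_eq_fintype_card, Fintype.card_coe]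
  have card_Pr_pos : 0 < Pr.card := card_Pr ▸ Nat.card_pos
  obtain ⟨P, degree_eq, card_le, eq_zero⟩ :=
    exists_finset_monomial_card_le hd ((B.subtype (· ∈ Pr)).map ⟨_, mk_bijective.injective⟩)
  rw [Finset.card_map, Finset.card_subtype, Finset.filter_true_of_mem hB, card_Pr,
    show n + d - 1 = d + (n - 1) by omega, Nat.choose_symm_add, ← Nat.add_sub_assoc hn] at card_le
  refine ⟨P, degree_eq, ?_, fun c ⟨v, hv, hcv⟩ ↦ ?_⟩
  · refine le_of_mul_le_mul_left ?_ (Nat.cast_pos.mpr card_Pr_pos : (0 : ℝ) < Pr.card)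
    calc (Pr.card : ℝ) * (ε * (d + n - 1).choose (n - 1))
        = ε * Pr.card * (d + n - 1).choose (n - 1) := by ring
      _ ≤ B.card * (d + n - 1).choose (n - 1) := by gcongr
      _ ≤ Pr.card * P.card := by exact_mod_cast card_le
  · by_contra! vanishes
    refine hcv (eq_zero c ?_ v hv)
    simp only [Finset.forall_mem_map, Finset.mem_subtype]
    exact fun b hb ↦ (vanishesWithMult_rep_mk_iff (hPr0 b b.2) (IsHomogeneous.sum _ _ d fun v hv ↦
      isHomogeneous_monomial _ (degree_eq v hv))).mpr (vanishes b hb)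
end
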